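/- arXiv:1511.08041 — 5 statements merged into one kernel-verified Lean document; each statement's English description precedes it below -/
import Mathlib

section
/- Let m be a positive integer, n ≥ 1, a ∈ ℝⁿ a unit vector, and λ > 0. Then for every ξ ∈ ℝⁿ, the symbol P_λ(ξ) = (|ξ|² - λ² + 2iλ a·ξ)^m satisfies Re P_λ(ξ) ≥ - b_m λ^{2m}. -/
open Real

/-- The constant `b_m = (sin(π/(4m-2)))^{-(2m-1)}`. -/
noncomputable def bConst (m : ℕ) : ℝ :=
  (Real.sin (Real.pi / (4 * (m : ℝ) - 2)))⁻¹ ^ (2 * m - 1)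

/-- The symbol `P_λ(ξ) = (|ξ|² - λ² + 2iλ a·ξ)^m` of the conjugated operator
`e^{-λ a·x}(-Δ)^m e^{λ a·x}`. -/
noncomputable def Psymb (n m : ℕ) (a : EuclideanSpace ℝ (Fin n)) (lam : ℝ)
    (ξ : EuclideanSpace ℝ (Fin n)) : ℂ :=
  (((‖ξ‖ ^ 2 - lam ^ 2 : ℝ) : ℂ) + ((2 * lam * (inner ℝ a ξ : ℝ) : ℝ) : ℂ) * Complex.I) ^ m

lemma aux_deriv (k : ℕ) (x : ℝ) (hx : Real.sin x ≠ 0) :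
    HasDerivAt (fun x : ℝ => Real.cos (((k : ℝ) + 1) * x) / Real.sin x ^ (k + 1))
      (-((k : ℝ) + 1) * Real.cos (k * x) / Real.sin x ^ (k + 2)) x := by
  have h1 : HasDerivAt (fun x : ℝ => Real.cos (((k : ℝ) + 1) * x))
      (-Real.sin (((k : ℝ) + 1) * x) * (((k : ℝ) + 1) * 1)) x :=
    ((hasDerivAt_id x).const_mul ((k : ℝ) + 1)).cos
  have h2 := (Real.hasDerivAt_sin x).pow (k + 1)
  have h3 := h1.div h2 (pow_ne_zero _ hx)
  refine h3.congr_deriv ?_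
  have e : Real.cos (k * x) = Real.cos (((k : ℝ) + 1) * x) * Real.cos x
      + Real.sin (((k : ℝ) + 1) * x) * Real.sin x := by
    rw [← Real.cos_sub]; congr 1; ring
  rw [e]
  simp only [Pi.pow_apply, Nat.add_sub_cancel]
  push_cast
  field_simp
  ring

lemma aux_val (k : ℕ) (hk : 1 ≤ k) (hs : 0 < Real.sin (π / (2 * k))) :
    Real.cos (((k : ℝ) + 1) * (π / (2 * k))) / Real.sin (π / (2 * k)) ^ (k + 1)
      = -(Real.sin (π / (2 * k)))⁻¹ ^ k := by
  have hk' : (0 : ℝ) < k := by exact_mod_cast hk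
  have : ((k : ℝ) + 1) * (π / (2 * k)) = π / (2 * k) + π / 2 := by field_simp; ring
  rw [this, Real.cos_add_pi_div_two, inv_pow, pow_succ]
  field_simp

lemma aux_main (k : ℕ) (hk : 1 ≤ k) (hk2 : k ≠ 2) (θ : ℝ) (h0 : 0 < θ) (h1 : θ ≤ π / 2) :
    -(Real.sin (π / (2 * k)))⁻¹ ^ k * Real.sin θ ^ (k + 1) ≤ Real.cos (((k : ℝ) + 1) * θ) := by
  have hk1 : (1 : ℝ) ≤ k := by exact_mod_cast hk
  have hk' : (0 : ℝ) < k := by linarith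
  have hpi := Real.pi_pos
  set t := π / (2 * k) with ht
  have htk : k * t = π / 2 := by rw [ht]; field_simp
  have ht0 : 0 < t := by positivity
  have htle : t ≤ π / 2 := by nlinarith
  have hst : 0 < Real.sin t := Real.sin_pos_of_pos_of_lt_pi ht0 (by linarith)
  have hsθ : 0 < Real.sin θ := Real.sin_pos_of_pos_of_lt_pi h0 (by linarith)
  have hv := aux_val k hk hst
  rw [← ht] at hv
  have hpos : ∀ x, 0 < x → x ≤ π / 2 → 0 < Real.sin x := fun x a b =>
    Real.sin_pos_of_pos_of_lt_pi a (by linarith)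
  have key : ∀ x, 0 < x → x ≤ π / 2 → DifferentiableAt ℝ
      (fun x : ℝ => Real.cos (((k : ℝ) + 1) * x) / Real.sin x ^ (k + 1)) x :=
    fun x a b => (aux_deriv k x (hpos x a b).ne').differentiableAt
  rw [← hv, ← le_div_iff₀ (pow_pos hsθ _)]
  rcases le_total θ t with h | h
  · have : AntitoneOn (fun x : ℝ => Real.cos (((k : ℝ) + 1) * x) / Real.sin x ^ (k + 1))
        (Set.Icc θ t) := by
      apply antitoneOn_of_deriv_nonpos (convex_Icc _ _)
      · exact fun x hx => (key x (by linarith [hx.1]) (by linarith [hx.2])).continuousAt.continuousWithinAt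
      · rw [interior_Icc]
        exact fun x hx => (key x (by linarith [hx.1]) (by linarith [hx.2])).differentiableWithinAt
      · rw [interior_Icc]
        intro x hx
        have hp := hpos x (by linarith [hx.1]) (by linarith [hx.2])
        rw [(aux_deriv k x hp.ne').deriv]
        have hc : 0 ≤ Real.cos (k * x) := by
          apply Real.cos_nonneg_of_neg_pi_div_two_le_of_le
          · have : 0 ≤ k * x := mul_nonneg hk'.le (by linarith [hx.1])
            linarith
          · rw [← htk]; exact mul_le_mul_of_nonneg_left hx.2.le hk'.le
        apply div_nonpos_of_nonpos_of_nonneg _ (by positivity)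
        nlinarith
    exact this (Set.left_mem_Icc.2 h) (Set.right_mem_Icc.2 h) h
  rcases le_total θ (3 * t) with h3 | h3
  · have : MonotoneOn (fun x : ℝ => Real.cos (((k : ℝ) + 1) * x) / Real.sin x ^ (k + 1))
        (Set.Icc t θ) := by
      apply monotoneOn_of_deriv_nonneg (convex_Icc _ _)
      · exact fun x hx => (key x (by linarith [hx.1]) (by linarith [hx.2])).continuousAt.continuousWithinAt
      · rw [interior_Icc]
        exact fun x hx => (key x (by linarith [hx.1]) (by linarith [hx.2])).differentiableWithinAt
      · rw [interior_Icc]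
        intro x hx
        have hp := hpos x (by linarith [hx.1]) (by linarith [hx.2])
        rw [(aux_deriv k x hp.ne').deriv]
        have hc : Real.cos (k * x) ≤ 0 := by
          apply Real.cos_nonpos_of_pi_div_two_le_of_le
          · rw [← htk]; exact mul_le_mul_of_nonneg_left hx.1.le hk'.le
          · have : k * x ≤ k * (3 * t) := mul_le_mul_of_nonneg_left (by linarith [hx.2]) hk'.le
            linarith
        apply div_nonneg _ (by positivity)
        nlinarith
    exact this (Set.left_mem_Icc.2 h) (Set.right_mem_Icc.2 h) h
  · rw [hv, le_div_iff₀ (pow_pos hsθ _)]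
    have hk3 : (3 : ℝ) ≤ k := by
      have : k ≠ 1 := by
        rintro rfl
        simp at htk
        linarith
      have : 3 ≤ k := by omega
      exact_mod_cast this
    have ht6 : t ≤ π / 6 := by nlinarith
    have hs2 : Real.sin t ≤ 1 / 2 := by
      rw [← Real.sin_pi_div_six]
      exact Real.sin_le_sin_of_le_of_le_pi_div_two (by linarith) (by linarith) ht6
    have hs3 : 2 * Real.sin t ≤ Real.sin θ := by
      have : Real.sin (3 * t) ≤ Real.sin θ :=
        Real.sin_le_sin_of_le_of_le_pi_div_two (by linarith) h1 h3
      rw [Real.sin_three_mul] at this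
      nlinarith [mul_nonneg hst.le (mul_nonneg (sub_nonneg.2 hs2) (by linarith : 0 ≤ 1/2 + Real.sin t))]
    have hlow : 1 / (k : ℝ) ≤ Real.sin t := by
      have := Real.mul_le_sin ht0.le htle
      have e : 2 / π * t = 1 / k := by rw [ht]; field_simp
      rwa [e] at this
    have hpw : (2 : ℝ) ^ k ≤ (Real.sin t)⁻¹ ^ k * Real.sin θ ^ k := by
      rw [← mul_pow]
      apply pow_le_pow_left₀ (by norm_num)
      rw [inv_mul_eq_div, le_div_iff₀ hst]; exact hs3
    have h2k : (k : ℝ) ≤ 2 ^ k := by exact_mod_cast (Nat.lt_two_pow_self (n := k)).le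
    have hfin : 1 ≤ (Real.sin t)⁻¹ ^ k * Real.sin θ ^ (k + 1) := by
      rw [pow_succ, ← mul_assoc]
      calc (1 : ℝ) = k * (1 / k) := by field_simp
        _ ≤ _ := mul_le_mul (h2k.trans hpw) (by linarith) (by positivity) (by positivity)
    have := Real.neg_one_le_cos (((k : ℝ) + 1) * θ)
    linarith

lemma aux_complex (m : ℕ) (hm : 1 ≤ m) (z : ℂ) (l : ℝ) (hz : ‖z‖ ≤ z.re + 2 * l ^ 2) :
    -(bConst m) * l ^ (2 * m) ≤ (z ^ m).re := by
  obtain ⟨j, rfl⟩ : ∃ j, m = j + 1 := ⟨m - 1, by omega⟩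
  have hpi := Real.pi_pos
  have hb : bConst (j + 1) = (Real.sin (π / (2 * ((2 * j + 1 : ℕ) : ℝ))))⁻¹ ^ (2 * j + 1) := by
    unfold bConst
    congr 4
    push_cast; ring
  have hb0 : 0 ≤ bConst (j + 1) := by
    rw [hb]
    apply pow_nonneg
    apply inv_nonneg.2
    apply Real.sin_nonneg_of_nonneg_of_le_pi (by positivity)
    apply div_le_self hpi.le
    push_cast
    have : (0 : ℝ) ≤ j := by positivity
    linarith
  set φ := |z.arg| / 2 with hφ
  have hφ0 : 0 ≤ φ := by positivity
  have hφ1 : φ ≤ π / 2 := by have := Complex.abs_arg_le_pi z; linarith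
  have hcos : Real.cos (2 * φ) = Real.cos z.arg := by
    rw [hφ, mul_div_cancel₀ _ (two_ne_zero), Real.cos_abs]
  have hre : (z ^ (j + 1)).re = ‖z‖ ^ (j + 1) * Real.cos (((2 * j + 1 : ℕ) + 1 : ℝ) * φ) := by
    have h1 : z ^ (j + 1) = ((‖z‖ ^ (j + 1) : ℝ) : ℂ) *
        Complex.exp ((((j + 1 : ℕ) * z.arg : ℝ) : ℂ) * Complex.I) := by
      conv_lhs => rw [← Complex.norm_mul_exp_arg_mul_I z]
      rw [mul_pow, ← Complex.exp_nat_mul]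
      push_cast
      congr 2; ring
    rw [h1, Complex.re_ofReal_mul, Complex.exp_ofReal_mul_I_re]
    congr 1
    rw [← Real.cos_abs, abs_mul, Nat.abs_cast, hφ]
    congr 1
    push_cast; ring
  have hzs : ‖z‖ * Real.sin φ ^ 2 ≤ l ^ 2 := by
    have h1 : ‖z‖ * Real.cos z.arg = z.re := Complex.norm_mul_cos_arg z
    rw [← hcos, Real.cos_two_mul, Real.cos_sq'] at h1
    linarith
  have hA : -bConst (j + 1) * Real.sin φ ^ (2 * (j + 1)) ≤
      Real.cos (((2 * j + 1 : ℕ) + 1 : ℝ) * φ) := by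
    rcases hφ0.eq_or_lt with h | h
    · rw [← h]; simp
    · rw [hb]
      exact aux_main (2 * j + 1) (by omega) (by omega) φ h hφ1
  rw [hre]
  have h2 : (‖z‖ * Real.sin φ ^ 2) ^ (j + 1) ≤ (l ^ 2) ^ (j + 1) :=
    pow_le_pow_left₀ (by positivity) hzs _
  rw [mul_pow, ← pow_mul, ← pow_mul] at h2
  have h3 := mul_le_mul_of_nonneg_left hA (pow_nonneg (norm_nonneg z) (j + 1))
  have h4 := mul_le_mul_of_nonneg_left h2 hb0
  linarith

/-- for a unit vector `a`, `λ > 0` and a positive integer `m`, the symbol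
`P_λ(ξ)` satisfies `Re P_λ(ξ) ≥ - b_m λ^{2m}` for every `ξ ∈ ℝⁿ`. -/
theorem re_symbol_lower_bound (n m : ℕ) (hn : 1 ≤ n) (hm : 1 ≤ m)
    (a : EuclideanSpace ℝ (Fin n)) (ha : ‖a‖ = 1) (lam : ℝ) (hlam : 0 < lam)
    (ξ : EuclideanSpace ℝ (Fin n)) :
    -(bConst m) * lam ^ (2 * m) ≤ (Psymb n m a lam ξ).re := by
  unfold Psymb
  apply aux_complex m hm
  have h := abs_real_inner_le_norm a ξ
  rw [ha, one_mul] at h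
  have h2 : (inner ℝ a ξ : ℝ) ^ 2 ≤ ‖ξ‖ ^ 2 := by
    rw [← sq_abs]; exact pow_le_pow_left₀ (abs_nonneg _) h 2
  have hr : (((‖ξ‖ ^ 2 - lam ^ 2 : ℝ) : ℂ) +
      ((2 * lam * (inner ℝ a ξ : ℝ) : ℝ) : ℂ) * Complex.I).re = ‖ξ‖ ^ 2 - lam ^ 2 := by
    rw [Complex.add_re, Complex.re_ofReal_mul, Complex.ofReal_re, Complex.I_re]; ring
  rw [hr, Complex.norm_add_mul_I]
  apply Real.sqrt_le_iff.2
  constructor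
  · nlinarith [sq_nonneg ‖ξ‖, sq_nonneg lam]
  · nlinarith [mul_le_mul_of_nonneg_left h2 (sq_nonneg lam)]
end

section
/- Let m be a positive integer and n ≥ 1. For every ε ∈ (0,1) there exist constants C > 0 and θ > 0 such that for every complex z with Re z > 0 and |arg z| ≤ θ and every x ∈ ℝⁿ: |∫_{ℝⁿ} e^{i x·ξ} e^{-z|ξ|^{2m}} dξ| ≤ C |z|^{-n/(2m)} exp{-(1-ε) ς_m |x|^{2m/(2m-1)} / |z|^{1/(2m-1)}}. -/
open Real MeasureTheory

/-- The sharp constant `ς_m = (2m-1)·(2m)^{-2m/(2m-1)}·sin(π/(4m-2))`. -/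
noncomputable def sigmaConst (m : ℕ) : ℝ :=
  (2 * (m : ℝ) - 1) * (2 * (m : ℝ)) ^ (-(2 * (m : ℝ)) / (2 * (m : ℝ) - 1)) *
    Real.sin (Real.pi / (4 * (m : ℝ) - 2))

lemma trig_aux (m : ℕ) (hm : 1 ≤ m) (φ : ℝ) (h0 : 0 ≤ φ) (h1 : φ ≤ π / 2) :
    -Real.cos (2 * m * φ) * Real.sin (π / (4 * (m : ℝ) - 2)) ^ (2 * m - 1) ≤
      Real.sin φ ^ (2 * m) := by
  have hm' : (1 : ℝ) ≤ m := by exact_mod_cast hm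
  have hpi := Real.pi_pos
  have hden : (0 : ℝ) < 4 * m - 2 := by linarith
  set α := π / (4 * (m : ℝ) - 2) with hα
  have hαm : α * (4 * m - 2) = π := by rw [hα]; field_simp
  have hα0 : 0 < α := by positivity
  have hα1 : α ≤ π / 2 := by
    rw [hα]; apply div_le_div_of_nonneg_left <;> linarith
  have hs0 : 0 < Real.sin α := Real.sin_pos_of_pos_of_lt_pi hα0 (by linarith)
  have hsφ : 0 ≤ Real.sin φ := Real.sin_nonneg_of_nonneg_of_le_pi h0 (by linarith)
  set A := 2 * (m : ℝ) * φ - π / 2 with hA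
  have hcos : -Real.cos (2 * m * φ) = Real.sin A := by
    rw [hA, Real.sin_sub_pi_div_two]
  rw [hcos]
  rcases le_or_gt (Real.sin A) 0 with hneg | hpos
  · exact (mul_nonpos_of_nonpos_of_nonneg hneg (by positivity)).trans (by positivity)
  have hA0 : 0 ≤ A := by
    by_contra hc
    push Not at hc
    have : Real.sin A ≤ 0 := Real.sin_nonpos_of_nonpos_of_neg_pi_le hc.le (by
      have : 0 ≤ 2 * (m : ℝ) * φ := by positivity
      rw [hA]; linarith)
    linarith
  rcases le_or_gt A π with hAπ | hAπ
  · set p : ℝ := 1 / (2 * m) with hp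
    have hp0 : 0 ≤ p := by positivity
    have hp1 : p ≤ 1 := by rw [hp, div_le_one (by positivity)]; linarith
    have hpm : p * (2 * m) = 1 := by rw [hp]; field_simp
    have e1 := Real.geom_mean_le_arith_mean2_weighted hp0 (sub_nonneg.2 hp1) hpos.le hs0.le
      (by ring)
    have e2 := strictConcaveOn_sin_Icc.concaveOn.2 (x := A) (y := α) ⟨hA0, hAπ⟩
      ⟨hα0.le, by linarith⟩ hp0 (sub_nonneg.2 hp1) (by ring)
    simp only [smul_eq_mul] at e2
    have e3 : p * A + (1 - p) * α = φ := by
      have : (2 * (m : ℝ)) * (p * A + (1 - p) * α) = 2 * m * φ := by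
        have : (2 * (m : ℝ)) * (p * A + (1 - p) * α)
          = (p * (2 * m)) * A + (2 * m - p * (2 * m)) * α := by ring
        rw [this, hpm, hA]
        nlinarith
      exact mul_left_cancel₀ (by positivity) this
    rw [e3] at e2
    have e4 := pow_le_pow_left₀ (by positivity) (e1.trans e2) (2 * m)
    refine le_trans (le_of_eq ?_) e4
    rw [mul_pow, ← Real.rpow_natCast (Real.sin A ^ p), ← Real.rpow_mul hpos.le,
      ← Real.rpow_natCast (Real.sin α ^ (1 - p)), ← Real.rpow_mul hs0.le]
    have q1 : p * ((2 * m : ℕ) : ℝ) = 1 := by push_cast; exact hpm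
    have q2 : (1 - p) * ((2 * m : ℕ) : ℝ) = ((2 * m - 1 : ℕ) : ℝ) := by
      rw [sub_mul, q1]; push_cast [Nat.cast_sub (show 1 ≤ 2 * m by omega)]; ring
    rw [q1, q2, Real.rpow_one, Real.rpow_natCast]
  · have hm2 : 2 ≤ m := by
      by_contra hc
      have : m = 1 := by omega
      subst this
      rw [hA] at hAπ; push_cast at hAπ; linarith
    have hm2' : (2 : ℝ) ≤ m := by exact_mod_cast hm2
    have hφ : 2 * α ≤ φ := by
      have : 3 * π / (4 * m) < φ := by
        rw [div_lt_iff₀ (by positivity)]; rw [hA] at hAπ; linarith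
      refine le_trans ?_ this.le
      rw [hα, ← mul_div_assoc, div_le_div_iff₀ hden (by positivity)]
      nlinarith
    have hα6 : α ≤ π / 6 := by
      rw [hα]; apply div_le_div_of_nonneg_left <;> linarith
    have c1 : Real.sin (2 * α) ≤ Real.sin φ :=
      Real.sin_le_sin_of_le_of_le_pi_div_two (by linarith) h1 hφ
    have c2 : √3 / 2 ≤ Real.cos α := by
      rw [← Real.cos_pi_div_six]
      exact Real.cos_le_cos_of_nonneg_of_le_pi hα0.le (by linarith) hα6
    have c3 : √3 * Real.sin α ≤ Real.sin φ := by
      rw [Real.sin_two_mul] at c1; nlinarith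
    have c4 : 1 ≤ 3 ^ m * Real.sin α := by
      have := Real.mul_le_sin hα0.le hα1
      have h2 : 2 / π * α = 1 / (2 * m - 1) := by
        have : (2 * (m:ℝ) - 1) ≠ 0 := by linarith
        rw [hα]
        rw [show 4 * (m:ℝ) - 2 = 2 * (2 * m - 1) by ring]
        field_simp
      have h3 : (2 * (m : ℝ) - 1) ≤ 3 ^ m := by
        have := one_add_mul_le_pow (a := (2 : ℝ)) (by norm_num) m
        norm_num at this
        linarith
      have h4 : (0:ℝ) < 2 * m - 1 := by linarith
      calc (1 : ℝ) = (2 * m - 1) * (1 / (2 * m - 1)) := by field_simp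
        _ ≤ 3 ^ m * Real.sin α := by
          rw [← h2]; gcongr
    calc Real.sin A * Real.sin α ^ (2 * m - 1) ≤ 1 * Real.sin α ^ (2 * m - 1) := by
          gcongr; exact Real.sin_le_one A
      _ ≤ (3 ^ m * Real.sin α) * Real.sin α ^ (2 * m - 1) := by gcongr
      _ = (√3 * Real.sin α) ^ (2 * m) := by
        rw [mul_pow, pow_mul (√3), Real.sq_sqrt (by norm_num), mul_assoc, ← pow_succ']
        congr 2; omega
      _ ≤ _ := by gcongr

lemma lemA (m : ℕ) (hm : 1 ≤ m) (w : ℂ) :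
    -(w ^ m).re * Real.sin (π / (4 * (m : ℝ) - 2)) ^ (2 * m - 1) ≤
      ((‖w‖ - w.re) / 2) ^ m := by
  have h := trig_aux m hm (|w.arg| / 2) (by positivity) (by
    have := Complex.abs_arg_le_pi w; linarith)
  have e1 : (w ^ m).re = ‖w‖ ^ m * Real.cos (2 * m * (|w.arg| / 2)) := by
    have : (2 * m * (|w.arg| / 2) : ℝ) = |m * w.arg| := by
      rw [abs_mul, Nat.abs_cast]; ring
    rw [this, Real.cos_abs]
    conv_lhs => rw [← Complex.norm_mul_exp_arg_mul_I w]
    rw [mul_pow, ← Complex.exp_nat_mul, ← Complex.ofReal_pow, Complex.re_ofReal_mul]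
    congr 1
    rw [← mul_assoc]
    have := Complex.exp_ofReal_mul_I_re (m * w.arg)
    push_cast at this
    exact this
  have e2 : (‖w‖ - w.re) / 2 = ‖w‖ * Real.sin (|w.arg| / 2) ^ 2 := by
    rw [Real.sin_sq_eq_half_sub]
    rw [show 2 * (|w.arg| / 2) = |w.arg| by ring, Real.cos_abs]
    have := Complex.norm_mul_cos_arg w
    nlinarith
  rw [e1, e2, mul_pow, ← pow_mul]
  calc _ = ‖w‖ ^ m * (-Real.cos (2 * m * (|w.arg| / 2)) * Real.sin (π / (4 * (m : ℝ) - 2)) ^ (2 * m - 1)) := by ring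
    _ ≤ _ := by gcongr

lemma norm_w_le {w : ℂ} {r h : ℝ} (hw : ‖w - (r : ℂ) ^ 2‖ ≤ 2 * r * h + h ^ 2) :
    ‖w‖ ≤ (r + h) ^ 2 := by
  have : ‖w‖ ≤ ‖w - (r : ℂ) ^ 2‖ + ‖(r : ℂ) ^ 2‖ := by
    have h1 := norm_add_le (w - (r : ℂ) ^ 2) ((r : ℂ) ^ 2)
    rwa [sub_add_cancel] at h1
  rw [norm_pow, Complex.norm_real, norm_eq_abs, sq_abs] at this
  nlinarith

lemma lemB (m : ℕ) : ∃ C' : ℝ, 0 ≤ C' ∧ ∀ (w : ℂ) (r h : ℝ), 0 ≤ r → 0 ≤ h →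
    ‖w - (r : ℂ) ^ 2‖ ≤ 2 * r * h + h ^ 2 →
    1 / 2 * r ^ (2 * m) - C' * h ^ (2 * m) ≤ (w ^ m).re := by
  have hc : ContinuousAt (fun v : ℂ => ((1 + v) ^ m).re) 0 := by fun_prop
  have hev : ∀ᶠ v in nhds (0 : ℂ), 1 / 2 < ((1 + v) ^ m).re := by
    apply hc.eventually_const_lt; norm_num
  obtain ⟨ρ0, hρ0, hρ⟩ := Metric.eventually_nhds_iff.1 hev
  set ρ := min ρ0 1 with hρd
  have hρp : 0 < ρ := lt_min hρ0 one_pos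
  have hρ1 : ρ ≤ 1 := min_le_right _ _
  set R := 3 / ρ + 1 with hR
  have hRp : 0 < R := by positivity
  refine ⟨2 * (R + 1) ^ (2 * m), by positivity, ?_⟩
  intro w r h hr hh hw
  rcases lt_or_ge (3 * h) (ρ * r) with hlt | hge
  · have hr0 : 0 < r := by
      by_contra hc
      have : r = 0 := by linarith
      subst this; linarith
    have hrc : (r : ℂ) ≠ 0 := by exact_mod_cast hr0.ne'
    set v : ℂ := (w - (r : ℂ) ^ 2) / (r : ℂ) ^ 2 with hv
    have hwv : w = ((r ^ 2 : ℝ) : ℂ) * (1 + v) := by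
      rw [hv]; push_cast; field_simp; ring
    have hvn : ‖v‖ < ρ0 := by
      rw [hv, norm_div, norm_pow, Complex.norm_real, norm_eq_abs, sq_abs,
        div_lt_iff₀ (by positivity)]
      have : h ≤ r := by nlinarith
      have : ρ ≤ ρ0 := min_le_left _ _
      nlinarith
    have := hρ (show dist v 0 < ρ0 by simpa using hvn)
    rw [hwv, mul_pow, ← Complex.ofReal_pow, Complex.re_ofReal_mul, ← pow_mul]
    have h1 : 0 ≤ 2 * (R + 1) ^ (2 * m) * h ^ (2 * m) := by positivity
    have h2 : 0 ≤ r ^ (2 * m) := by positivity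
    nlinarith
  · have hrR : r ≤ R * h := by
      have : r ≤ 3 / ρ * h := by
        rw [div_mul_eq_mul_div, le_div_iff₀ hρp]; linarith
      rw [hR]; linarith
    have h1 : r ^ (2 * m) ≤ (R + 1) ^ (2 * m) * h ^ (2 * m) := by
      rw [← mul_pow]; gcongr; linarith
    have h2 : -(w ^ m).re ≤ (R + 1) ^ (2 * m) * h ^ (2 * m) := by
      calc -(w ^ m).re ≤ |(w ^ m).re| := neg_le_abs _
        _ ≤ ‖w ^ m‖ := Complex.abs_re_le_norm _
        _ = ‖w‖ ^ m := norm_pow _ _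
        _ ≤ ((r + h) ^ 2) ^ m := by gcongr; exact norm_w_le hw
        _ = (r + h) ^ (2 * m) := by rw [pow_mul]
        _ ≤ _ := by rw [← mul_pow]; gcongr; linarith
    have h2 : 0 ≤ r ^ (2 * m) := by positivity
    nlinarith

lemma lemC (m : ℕ) (hm : 1 ≤ m) (K : ℝ) 
    (hK : K * Real.sin (π / (4 * (m : ℝ) - 2)) ^ (2 * m - 1) = 1)
    (δ : ℝ) (hδ : 0 < δ) : ∃ c > 0, ∃ κ > 0, ∃ D : ℝ, 0 ≤ D ∧ ∀ z : ℂ, ‖z - 1‖ ≤ κ →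
    ∀ (w : ℂ) (r h : ℝ), 0 ≤ r → 0 ≤ h → ‖w - (r : ℂ) ^ 2‖ ≤ 2 * r * h + h ^ 2 →
    (c * r ^ (2 * m) - D * h ^ (2 * m) ≤ (z * w ^ m).re) ∧
    (‖w‖ - w.re ≤ 2 * h ^ 2 → c * r ^ (2 * m) - (K + δ) * h ^ (2 * m) ≤ (z * w ^ m).re) := by
  obtain ⟨C', hC', hB⟩ := lemB m
  have hm' : (1 : ℝ) ≤ m := by exact_mod_cast hm
  have hs : 0 < Real.sin (π / (4 * (m : ℝ) - 2)) := by
    have : (0 : ℝ) < 4 * m - 2 := by linarith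
    apply Real.sin_pos_of_pos_of_lt_pi
    · positivity
    · rw [div_lt_iff₀ this]; nlinarith [Real.pi_pos]
  set S := Real.sin (π / (4 * (m : ℝ) - 2)) ^ (2 * m - 1) with hS
  have hSp : 0 < S := by positivity
  have hKp : 0 < K := by
    by_contra hc; nlinarith
  -- t
  set t := min 1 (δ / (2 * (C' + 1))) with ht
  have ht0 : 0 < t := by positivity
  have ht1 : t ≤ 1 := min_le_left _ _
  have htC : t * C' ≤ δ / 2 := by
    have : t ≤ δ / (2 * (C' + 1)) := min_le_right _ _
    rw [le_div_iff₀ (by positivity)] at this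
    nlinarith
  set κ := min (t / 4) (δ / 2) / 2 ^ (2 * m) with hκ
  have hκ0 : 0 < κ := by positivity
  have hκ2 : κ * 2 ^ (2 * m) = min (t / 4) (δ / 2) := by rw [hκ]; field_simp
  refine ⟨t / 4, by positivity, κ, hκ0, C' + δ, by positivity, ?_⟩
  intro z hz w r h hr hh hw
  have hBw := hB w r h hr hh hw
  have hrp : 0 ≤ r ^ (2 * m) := by positivity
  have hhp : 0 ≤ h ^ (2 * m) := by positivity
  have herr : (w ^ m).re - κ * 2 ^ (2 * m) * (r ^ (2 * m) + h ^ (2 * m)) ≤ (z * w ^ m).re := by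
    have e : (z * w ^ m).re = (w ^ m).re + ((z - 1) * w ^ m).re := by
      rw [← Complex.add_re]; congr 1; ring
    have : -((z - 1) * w ^ m).re ≤ κ * (2 ^ (2 * m) * (r ^ (2 * m) + h ^ (2 * m))) := by
      calc -((z - 1) * w ^ m).re ≤ |((z - 1) * w ^ m).re| := neg_le_abs _
        _ ≤ ‖(z - 1) * w ^ m‖ := Complex.abs_re_le_norm _
        _ = ‖z - 1‖ * ‖w‖ ^ m := by rw [norm_mul, norm_pow]
        _ ≤ κ * ((r + h) ^ 2) ^ m := by gcongr; exact norm_w_le hw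
        _ = κ * (r + h) ^ (2 * m) := by rw [pow_mul]
        _ ≤ _ := by
          gcongr
          refine (add_pow_le hr hh (2 * m)).trans ?_
          gcongr
          · norm_num
          · omega
    linarith
  rw [hκ2] at herr
  have k1 : min (t / 4) (δ / 2) ≤ t / 4 := min_le_left _ _
  have k2 : min (t / 4) (δ / 2) ≤ δ / 2 := min_le_right _ _
  set μ := min (t / 4) (δ / 2)
  have k3 : μ * (r ^ (2 * m) + h ^ (2 * m)) ≤ t / 4 * r ^ (2 * m) + δ / 2 * h ^ (2 * m) := by
    rw [mul_add]; gcongr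
  have k4 : t * r ^ (2 * m) ≤ r ^ (2 * m) := mul_le_of_le_one_left hrp ht1
  refine ⟨?_, fun hwr => ?_⟩
  · have : 0 ≤ δ * h ^ (2 * m) := by positivity
    linarith
  · have hA := lemA m hm w
    have hA2 : ((‖w‖ - w.re) / 2) ^ m ≤ h ^ (2 * m) := by
      rw [pow_mul]
      apply pow_le_pow_left₀
      · have := Complex.re_le_norm w; linarith
      · linarith
    have hA3 : -(w ^ m).re ≤ K * h ^ (2 * m) := by
      have := mul_le_mul_of_nonneg_left (hA.trans hA2) hKp.le
      rw [← hS] at this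
      calc -(w ^ m).re = K * (-(w ^ m).re * S) := by linear_combination (w ^ m).re * hK
        _ ≤ _ := this
    have a1 := mul_le_mul_of_nonneg_left hBw ht0.le
    have a2 := mul_le_mul_of_nonneg_left hA3 (sub_nonneg.2 ht1)
    have a3 : t * C' * h ^ (2 * m) ≤ δ / 2 * h ^ (2 * m) := by gcongr
    have a4 : 0 ≤ t * K * h ^ (2 * m) := by positivity
    nlinarith

lemma integrable_exp_pow (n m : ℕ) (hm : 1 ≤ m) (c : ℝ) (hc : 0 < c) :
    Integrable (fun ξ : EuclideanSpace ℝ (Fin n) => Real.exp (-(c * ‖ξ‖ ^ (2 * m)))) := by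
  have h1 := (GaussianFourier.integrable_cexp_neg_mul_sq_norm_add (V := EuclideanSpace ℝ (Fin n))
    (b := (c : ℂ)) (by simpa using hc) 0 0).norm.const_mul (Real.exp c)
  refine h1.mono' (by fun_prop) (Filter.Eventually.of_forall fun ξ => ?_)
  rw [Real.norm_of_nonneg (Real.exp_pos _).le, Complex.norm_exp, ← Real.exp_add]
  apply Real.exp_le_exp.2
  have e : (-(c : ℂ) * (‖ξ‖ : ℂ) ^ 2 + 0 * ((inner ℝ (0 : EuclideanSpace ℝ (Fin n)) ξ : ℝ) : ℂ)).re
      = -(c * ‖ξ‖ ^ 2) := by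
    rw [zero_mul, add_zero, ← Complex.ofReal_pow, ← Complex.ofReal_neg, ← Complex.ofReal_mul,
      Complex.ofReal_re]; ring
  rw [e]
  have : ‖ξ‖ ^ 2 ≤ 1 + ‖ξ‖ ^ (2 * m) := by
    have hp : 0 ≤ ‖ξ‖ ^ (2 * m) := by positivity
    rcases le_total ‖ξ‖ 1 with h | h
    · have : ‖ξ‖ ^ 2 ≤ 1 := pow_le_one₀ (norm_nonneg _) h
      linarith
    · have : ‖ξ‖ ^ 2 ≤ ‖ξ‖ ^ (2 * m) := pow_le_pow_right₀ h (by omega)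
      linarith
  nlinarith

/-- the complexified square of `ξ + s x` -/
noncomputable def wfun {n : ℕ} (x : EuclideanSpace ℝ (Fin n)) (s : ℂ)
    (ξ : EuclideanSpace ℝ (Fin n)) : ℂ :=
  (‖ξ‖ : ℂ) ^ 2 + 2 * s * ((inner ℝ x ξ : ℝ) : ℂ) + s ^ 2 * (‖x‖ : ℂ) ^ 2

/-- the shifted integrand -/
noncomputable def Gfun {n : ℕ} (m : ℕ) (z : ℂ) (x : EuclideanSpace ℝ (Fin n)) (s : ℂ)
    (ξ : EuclideanSpace ℝ (Fin n)) : ℂ :=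
  Complex.exp (Complex.I * (((inner ℝ x ξ : ℝ) : ℂ) + s * (‖x‖ : ℂ) ^ 2)) *
    Complex.exp (-(z * wfun x s ξ ^ m))

lemma wfun_bound {n : ℕ} (x : EuclideanSpace ℝ (Fin n)) (s : ℂ) (ξ : EuclideanSpace ℝ (Fin n))
    (h : ℝ) (hs : ‖s‖ * ‖x‖ ≤ h) :
    ‖wfun x s ξ - (‖ξ‖ : ℂ) ^ 2‖ ≤ 2 * ‖ξ‖ * h + h ^ 2 := by
  have h0 : 0 ≤ ‖s‖ * ‖x‖ := by positivity
  have e : wfun x s ξ - (‖ξ‖ : ℂ) ^ 2 = 2 * s * ((inner ℝ x ξ : ℝ) : ℂ) + s ^ 2 * (‖x‖ : ℂ) ^ 2 := by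
    unfold wfun; ring
  rw [e]
  refine (norm_add_le _ _).trans ?_
  have hi : ‖((inner ℝ x ξ : ℝ) : ℂ)‖ ≤ ‖x‖ * ‖ξ‖ := by
    rw [Complex.norm_real]; exact norm_inner_le_norm x ξ
  have e2 : ‖s ^ 2 * (‖x‖ : ℂ) ^ 2‖ = (‖s‖ * ‖x‖) ^ 2 := by
    rw [norm_mul, norm_pow, norm_pow, Complex.norm_real, norm_norm, mul_pow]
  rw [e2]
  have e3 : ‖2 * s * ((inner ℝ x ξ : ℝ) : ℂ)‖ ≤ 2 * ‖ξ‖ * (‖s‖ * ‖x‖) := by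
    rw [norm_mul, norm_mul, Complex.norm_ofNat]
    calc 2 * ‖s‖ * ‖((inner ℝ x ξ : ℝ) : ℂ)‖ ≤ 2 * ‖s‖ * (‖x‖ * ‖ξ‖) := by gcongr
      _ = _ := by ring
  calc _ ≤ 2 * ‖ξ‖ * (‖s‖ * ‖x‖) + (‖s‖ * ‖x‖) ^ 2 := by gcongr
    _ ≤ _ := by gcongr

lemma Gfun_norm {n : ℕ} (m : ℕ) (z : ℂ) (x : EuclideanSpace ℝ (Fin n)) (s : ℂ)
    (ξ : EuclideanSpace ℝ (Fin n)) :
    ‖Gfun m z x s ξ‖ = Real.exp (-(s.im * ‖x‖ ^ 2)) * Real.exp (-(z * wfun x s ξ ^ m).re) := by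
  unfold Gfun
  rw [norm_mul, Complex.norm_exp, Complex.norm_exp]
  congr 2
  rw [← Complex.ofReal_pow]
  simp [-Complex.ofReal_pow]

lemma Gfun_continuous {n : ℕ} (m : ℕ) (z : ℂ) (x : EuclideanSpace ℝ (Fin n)) (s : ℂ) :
    Continuous (Gfun m z x s) := by
  unfold Gfun wfun
  fun_prop

lemma Gfun_differentiable {n : ℕ} (m : ℕ) (z : ℂ) (x ξ : EuclideanSpace ℝ (Fin n)) :
    Differentiable ℂ (fun s => Gfun m z x s ξ) := by
  unfold Gfun wfun
  fun_prop

lemma shift {n : ℕ} (m : ℕ) (hm : 1 ≤ m) (z : ℂ) (c D : ℝ) (hc : 0 < c) (hD : 0 ≤ D)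
    (H : ∀ (w : ℂ) (r h : ℝ), 0 ≤ r → 0 ≤ h → ‖w - (r : ℂ) ^ 2‖ ≤ 2 * r * h + h ^ 2 →
      c * r ^ (2 * m) - D * h ^ (2 * m) ≤ (z * w ^ m).re)
    (x : EuclideanSpace ℝ (Fin n)) (s : ℂ) :
    ∫ ξ, Gfun m z x s ξ = ∫ ξ, Gfun m z x 0 ξ := by
  -- local domination
  have hdom : ∀ R : ℝ, 0 ≤ R → ∃ M : ℝ, 0 ≤ M ∧ ∀ s : ℂ, ‖s‖ ≤ R → ∀ ξ,
      ‖Gfun m z x s ξ‖ ≤ M * Real.exp (-(c * ‖ξ‖ ^ (2 * m))) := by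
    intro R hR
    refine ⟨Real.exp (R * ‖x‖ ^ 2) * Real.exp (D * (R * ‖x‖) ^ (2 * m)), by positivity, ?_⟩
    intro s hs ξ
    rw [Gfun_norm, mul_assoc, ← Real.exp_add (D * _)]
    have hH := H (wfun x s ξ) ‖ξ‖ (R * ‖x‖) (norm_nonneg _) (by positivity)
      (wfun_bound x s ξ _ (by gcongr))
    have him : -s.im ≤ R := ((neg_le_abs _).trans (Complex.abs_im_le_norm s)).trans hs
    gcongr
    · nlinarith [sq_nonneg ‖x‖]
    · linarith
  have hIntegr := integrable_exp_pow n m hm c hc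
  have hdiff : Differentiable ℂ (fun s => ∫ ξ, Gfun m z x s ξ) := by
    intro s₀
    obtain ⟨M, hM, hMb⟩ := hdom (‖s₀‖ + 2) (by positivity)
    have hd : ∀ s ∈ Metric.ball s₀ 1, ∀ ξ, ‖deriv (fun s => Gfun m z x s ξ) s‖ ≤
        M * Real.exp (-(c * ‖ξ‖ ^ (2 * m))) := by
      intro s hs ξ
      have := Complex.norm_deriv_le_of_forall_mem_sphere_norm_le (c := s) (R := 1)
        (C := M * Real.exp (-(c * ‖ξ‖ ^ (2 * m)))) (f := fun s => Gfun m z x s ξ) one_pos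
        (Gfun_differentiable m z x ξ).diffContOnCl (fun s' hs' => ?_)
      · simpa using this
      · apply hMb
        rw [mem_sphere_iff_norm] at hs'
        rw [mem_ball_iff_norm] at hs
        have h1 : ‖s'‖ ≤ ‖s' - s‖ + ‖s - s₀‖ + ‖s₀‖ := by
          calc ‖s'‖ = ‖(s' - s) + (s - s₀) + s₀‖ := by congr 1; ring
            _ ≤ _ := norm_add₃_le
        linarith
    have hmeas' : AEStronglyMeasurable (fun ξ => deriv (fun s => Gfun m z x s ξ) s₀) := by
      have hlim := (Gfun_differentiable m z x)
      refine aestronglyMeasurable_of_tendsto_ae (u := Filter.atTop) (f := fun (k : ℕ) ξ =>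
        ((1 / ((k : ℝ) + 1) : ℝ) : ℂ)⁻¹ • (Gfun m z x (s₀ + ((1 / ((k : ℝ) + 1) : ℝ) : ℂ)) ξ - Gfun m z x s₀ ξ))
        (fun k => ?_) (Filter.Eventually.of_forall fun ξ => ?_)
      · exact (((Gfun_continuous m z x _).sub (Gfun_continuous m z x _)).const_smul
          ((((1 / ((k : ℝ) + 1) : ℝ) : ℂ)⁻¹))).aestronglyMeasurable
      · have h1 := (hasDerivAt_iff_tendsto_slope_zero.1 ((hlim ξ) s₀).hasDerivAt)
        refine h1.comp ?_
        rw [tendsto_nhdsWithin_iff]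
        refine ⟨?_, Filter.Eventually.of_forall fun k => ?_⟩
        · have := tendsto_one_div_add_atTop_nhds_zero_nat (𝕜 := ℝ)
          have h2 := (Complex.continuous_ofReal.tendsto 0).comp this
          simpa [Function.comp_def] using h2
        · have : (1 / ((k : ℝ) + 1)) ≠ 0 := by positivity
          exact Complex.ofReal_ne_zero.2 this
    have key := hasDerivAt_integral_of_dominated_loc_of_deriv_le (μ := volume)
      (F := fun s ξ => Gfun m z x s ξ) (F' := fun s ξ => deriv (fun s => Gfun m z x s ξ) s)
      (x₀ := s₀) (s := Metric.ball s₀ 1) (bound := fun ξ => M * Real.exp (-(c * ‖ξ‖ ^ (2 * m))))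
      (Metric.ball_mem_nhds s₀ one_pos)
      (Filter.Eventually.of_forall fun s => (Gfun_continuous m z x s).aestronglyMeasurable)
      ((hIntegr.const_mul M).mono' (Gfun_continuous m z x s₀).aestronglyMeasurable
        (Filter.Eventually.of_forall fun ξ => hMb s₀ (by linarith) ξ))
      hmeas'
      (Filter.Eventually.of_forall fun ξ s hs => hd s hs ξ)
      (hIntegr.const_mul M)
      (Filter.Eventually.of_forall fun ξ s _ => ((Gfun_differentiable m z x ξ) s).hasDerivAt)
    exact key.2.differentiableAt
  have hreal : ∀ a : ℝ, ∫ ξ, Gfun m z x (a : ℂ) ξ = ∫ ξ, Gfun m z x 0 ξ := by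
    intro a
    rw [← integral_add_right_eq_self (fun ξ => Gfun m z x 0 ξ) (a • x)]
    congr 1
    ext ξ
    have e1 : (inner ℝ x (ξ + a • x) : ℝ) = inner ℝ x ξ + a * ‖x‖ ^ 2 := by
      rw [inner_add_right, inner_smul_right, real_inner_self_eq_norm_sq]
    have e2 : ‖ξ + a • x‖ ^ 2 = ‖ξ‖ ^ 2 + 2 * a * inner ℝ x ξ + a ^ 2 * ‖x‖ ^ 2 := by
      rw [norm_add_sq_real, inner_smul_right, norm_smul, mul_pow, norm_eq_abs, sq_abs,
        real_inner_comm]; ring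
    unfold Gfun wfun
    rw [e1, ← Complex.ofReal_pow ‖ξ + a • x‖, e2]
    push_cast
    ring_nf
  have heq : (fun s => ∫ ξ, Gfun m z x s ξ) = fun _ => ∫ ξ, Gfun m z x 0 ξ := by
    refine AnalyticOnNhd.eq_of_frequently_eq (z₀ := (0 : ℂ))
      (Complex.analyticOnNhd_univ_iff_differentiable.2 hdiff) analyticOnNhd_const ?_
    have ht : Filter.Tendsto (fun k : ℕ => ((1 / ((k : ℝ) + 1) : ℝ) : ℂ)) Filter.atTop
        (nhdsWithin 0 {0}ᶜ) := by
      rw [tendsto_nhdsWithin_iff]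
      refine ⟨?_, Filter.Eventually.of_forall fun k => ?_⟩
      · have := tendsto_one_div_add_atTop_nhds_zero_nat (𝕜 := ℝ)
        have h2 := (Complex.continuous_ofReal.tendsto 0).comp this
        simpa [Function.comp_def] using h2
      · have : (1 / ((k : ℝ) + 1)) ≠ 0 := by positivity
        exact Complex.ofReal_ne_zero.2 this
    exact ht.frequently (Filter.Eventually.of_forall fun k => hreal _).frequently
  exact congrFun heq s

/-- bound for `z` close to `1` -/
lemma near_one (n m : ℕ) (hm : 1 ≤ m) (K : ℝ)
    (hK : K * Real.sin (π / (4 * (m : ℝ) - 2)) ^ (2 * m - 1) = 1)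
    (δ : ℝ) (hδ : 0 < δ) : ∃ C > 0, ∃ κ > 0, ∀ z : ℂ, ‖z - 1‖ ≤ κ →
    ∀ (x : EuclideanSpace ℝ (Fin n)) (h : ℝ), 0 ≤ h → (x = 0 → h = 0) →
    ‖∫ ξ : EuclideanSpace ℝ (Fin n),
          Complex.exp (Complex.I * ((inner ℝ x ξ : ℝ) : ℂ)) *
            Complex.exp (-z * ((‖ξ‖ ^ (2 * m) : ℝ) : ℂ))‖ ≤
      C * Real.exp (-(h * ‖x‖) + (K + δ) * h ^ (2 * m)) := by
  obtain ⟨c, hc, κ, hκ, D, hD, H⟩ := lemC m hm K hK δ hδ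
  have hIntegr := integrable_exp_pow n m hm c hc
  refine ⟨(∫ ξ : EuclideanSpace ℝ (Fin n), Real.exp (-(c * ‖ξ‖ ^ (2 * m)))) + 1, ?_, κ, hκ, ?_⟩
  · have : 0 ≤ ∫ ξ : EuclideanSpace ℝ (Fin n), Real.exp (-(c * ‖ξ‖ ^ (2 * m))) :=
      integral_nonneg fun ξ => (Real.exp_pos _).le
    linarith
  intro z hz x h hh hx
  set b := h / ‖x‖ with hb
  have hbx : b * ‖x‖ = h := by
    by_cases h0 : x = 0
    · rw [hx h0, h0]; simp
    · have : ‖x‖ ≠ 0 := norm_ne_zero_iff.2 h0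
      rw [hb]; field_simp
  have hb0 : 0 ≤ b := by positivity
  have e0 : (∫ ξ : EuclideanSpace ℝ (Fin n),
          Complex.exp (Complex.I * ((inner ℝ x ξ : ℝ) : ℂ)) *
            Complex.exp (-z * ((‖ξ‖ ^ (2 * m) : ℝ) : ℂ))) = ∫ ξ, Gfun m z x 0 ξ := by
    congr 1
    ext ξ
    unfold Gfun wfun
    rw [Complex.ofReal_pow, pow_mul]
    simp
  rw [e0, ← shift m hm z c D hc hD (fun w r h hr hh hw => (H z hz w r h hr hh hw).1) x
    (Complex.I * b)]
  have hbound : ∀ ξ, ‖Gfun m z x (Complex.I * b) ξ‖ ≤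
      Real.exp (-(h * ‖x‖) + (K + δ) * h ^ (2 * m)) * Real.exp (-(c * ‖ξ‖ ^ (2 * m))) := by
    intro ξ
    have hw := wfun_bound x (Complex.I * b) ξ h (by
      rw [norm_mul, Complex.norm_I, one_mul, Complex.norm_real, norm_eq_abs, abs_of_nonneg hb0, hbx])
    have hform : wfun x (Complex.I * b) ξ =
        ((‖ξ‖ ^ 2 - h ^ 2 : ℝ) : ℂ) + ((2 * b * inner ℝ x ξ : ℝ) : ℂ) * Complex.I := by
      unfold wfun
      rw [← hbx]
      push_cast
      rw [mul_pow, Complex.I_sq]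
      ring
    have hre : (wfun x (Complex.I * b) ξ).re = ‖ξ‖ ^ 2 - h ^ 2 := by
      rw [hform]; simp [-Complex.ofReal_sub, -Complex.ofReal_mul, -Complex.ofReal_pow]
    have him : (wfun x (Complex.I * b) ξ).im = 2 * b * inner ℝ x ξ := by
      rw [hform]; simp [-Complex.ofReal_sub, -Complex.ofReal_mul, -Complex.ofReal_pow]
    have hnorm : ‖wfun x (Complex.I * b) ξ‖ ≤ ‖ξ‖ ^ 2 + h ^ 2 := by
      apply abs_le_of_sq_le_sq' _ (by positivity) |>.2
      rw [Complex.sq_norm, Complex.normSq_apply, hre, him]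
      have hi := abs_real_inner_le_norm x ξ
      have hi2 : (b * inner ℝ x ξ) ^ 2 ≤ (h * ‖ξ‖) ^ 2 := by
        rw [← hbx, mul_assoc, mul_pow, mul_pow b]
        gcongr ?_ * ?_
        rw [← sq_abs]; gcongr
      nlinarith
    have hH := (H z hz _ ‖ξ‖ h (norm_nonneg _) hh hw).2 (by rw [hre]; linarith)
    rw [Gfun_norm, ← Real.exp_add, ← Real.exp_add]
    apply Real.exp_le_exp.2
    have : (Complex.I * (b : ℂ)).im * ‖x‖ ^ 2 = h * ‖x‖ := by
      rw [← hbx]; simp; ring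
    rw [this]
    linarith
  calc ‖∫ ξ, Gfun m z x (Complex.I * b) ξ‖ ≤ ∫ ξ, Real.exp (-(h * ‖x‖) + (K + δ) * h ^ (2 * m)) *
        Real.exp (-(c * ‖ξ‖ ^ (2 * m))) :=
        norm_integral_le_of_norm_le (hIntegr.const_mul _) (Filter.Eventually.of_forall hbound)
    _ = (∫ ξ : EuclideanSpace ℝ (Fin n), Real.exp (-(c * ‖ξ‖ ^ (2 * m)))) *
        Real.exp (-(h * ‖x‖) + (K + δ) * h ^ (2 * m)) := by
        rw [integral_const_mul, mul_comm]
    _ ≤ _ := by gcongr; linarith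

lemma near_one' (n m : ℕ) (hm : 1 ≤ m) (ε : ℝ) (hε : 0 < ε) : ∃ C > 0, ∃ κ > 0,
    ∀ z : ℂ, ‖z - 1‖ ≤ κ → ∀ (x : EuclideanSpace ℝ (Fin n)),
    ‖∫ ξ : EuclideanSpace ℝ (Fin n),
          Complex.exp (Complex.I * ((inner ℝ x ξ : ℝ) : ℂ)) *
            Complex.exp (-z * ((‖ξ‖ ^ (2 * m) : ℝ) : ℂ))‖ ≤
      C * Real.exp (-((1 - ε) * sigmaConst m) * ‖x‖ ^ ((2 * (m : ℝ)) / (2 * (m : ℝ) - 1))) := by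
  have hm' : (1 : ℝ) ≤ m := by exact_mod_cast hm
  have hq : (0 : ℝ) < 2 * m - 1 := by linarith
  have hs : 0 < Real.sin (π / (4 * (m : ℝ) - 2)) := by
    have : (0 : ℝ) < 4 * m - 2 := by linarith
    apply Real.sin_pos_of_pos_of_lt_pi
    · positivity
    · rw [div_lt_iff₀ this]; nlinarith [Real.pi_pos]
  have hσ : sigmaConst m = (2 * (m : ℝ) - 1) * (2 * (m : ℝ)) ^ (-(2 * (m : ℝ)) / (2 * (m : ℝ) - 1)) *
    Real.sin (Real.pi / (4 * (m : ℝ) - 2)) := rfl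
  set S := Real.sin (π / (4 * (m : ℝ) - 2)) with hS
  set σ := sigmaConst m
  set T : ℝ := (2 * (m : ℝ)) ^ (-(2 * (m : ℝ)) / (2 * (m : ℝ) - 1)) with hT
  have hTp : 0 < T := by positivity
  have hσp : 0 < σ := by rw [hσ]; positivity
  set β := 2 * m * T * S with hβ
  have hβp : 0 < β := by positivity
  have hβm : β ^ (2 * m) = T * S ^ (2 * m) := by
    rw [hβ, mul_pow]
    congr 1
    have : 2 * (m : ℝ) * T = (2 * (m : ℝ)) ^ (-1 / (2 * (m : ℝ) - 1)) := by
      rw [hT]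
      nth_rewrite 1 [← Real.rpow_one (2 * (m : ℝ))]
      rw [← Real.rpow_add (by positivity)]
      congr 1; field_simp; ring
    rw [this, ← Real.rpow_natCast, ← Real.rpow_mul (by positivity), hT]
    congr 1; push_cast; field_simp
  set K := (S ^ (2 * m - 1))⁻¹ with hK
  have hKβ : K * β ^ (2 * m) = T * S := by
    rw [hβm, hK]
    have : S ^ (2 * m) = S ^ (2 * m - 1) * S := by
      rw [← pow_succ]; congr 1; omega
    rw [this]; field_simp
  obtain ⟨C, hC, κ, hκ, H⟩ := near_one n m hm K (by rw [← hS, hK]; field_simp) (ε * σ / β ^ (2 * m))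
    (by positivity)
  refine ⟨C, hC, κ, hκ, fun z hz x => ?_⟩
  refine (H z hz x (β * ‖x‖ ^ (1 / (2 * (m : ℝ) - 1))) (by positivity) ?_).trans (le_of_eq ?_)
  · rintro rfl
    rw [norm_zero, Real.zero_rpow (by positivity), mul_zero]
  congr 2
  set Y := ‖x‖ ^ ((2 * (m : ℝ)) / (2 * (m : ℝ) - 1)) with hY
  have y1 : ‖x‖ ^ (1 / (2 * (m : ℝ) - 1)) * ‖x‖ = Y := by
    nth_rewrite 2 [← Real.rpow_one ‖x‖]
    rw [← Real.rpow_add_of_nonneg (norm_nonneg _) (by positivity) (by positivity), hY]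
    congr 1; field_simp; ring
  have y2 : (‖x‖ ^ (1 / (2 * (m : ℝ) - 1))) ^ (2 * m) = Y := by
    rw [← Real.rpow_natCast, ← Real.rpow_mul (norm_nonneg _), hY]
    congr 1; push_cast; field_simp
  rw [mul_assoc, y1, mul_pow β, y2, add_mul, ← mul_assoc, hKβ]
  have : ε * σ / β ^ (2 * m) * (β ^ (2 * m) * Y) = ε * σ * Y := by field_simp
  rw [this, hβ, hσ]
  ring

/-- for every `ε ∈ (0,1)` there exist `C > 0` and `θ > 0` such that for every
complex `z` with `Re z > 0` and `|arg z| ≤ θ` and every `x ∈ ℝⁿ`,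
`|∫_{ℝⁿ} e^{i x·ξ} e^{-z|ξ|^{2m}} dξ|
  ≤ C |z|^{-n/(2m)} exp{-(1-ε) ς_m |x|^{2m/(2m-1)} / |z|^{1/(2m-1)}}`. -/
theorem complex_time_kernel_gaussian_bound (n m : ℕ) (hn : 1 ≤ n) (hm : 1 ≤ m) :
    ∀ ε ∈ Set.Ioo (0 : ℝ) 1, ∃ C > (0 : ℝ), ∃ θ > (0 : ℝ),
      ∀ z : ℂ, 0 < z.re → |z.arg| ≤ θ → ∀ x : EuclideanSpace ℝ (Fin n),
      ‖∫ ξ : EuclideanSpace ℝ (Fin n),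
          Complex.exp (Complex.I * ((inner ℝ x ξ : ℝ) : ℂ)) *
            Complex.exp (-z * ((‖ξ‖ ^ (2 * m) : ℝ) : ℂ))‖ ≤
        C * ‖z‖ ^ (-(n : ℝ) / (2 * (m : ℝ))) *
          Real.exp (-((1 - ε) * sigmaConst m) *
            ‖x‖ ^ ((2 * (m : ℝ)) / (2 * (m : ℝ) - 1)) / ‖z‖ ^ (1 / (2 * (m : ℝ) - 1))) := by
  intro ε hε
  obtain ⟨C, hC, κ, hκ, H⟩ := near_one' n m hm ε hε.1
  refine ⟨C, hC, κ, hκ, ?_⟩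
  intro z hz harg x
  have hm' : (1 : ℝ) ≤ m := by exact_mod_cast hm
  have hq : (0 : ℝ) < 2 * m - 1 := by linarith
  have hz0 : z ≠ 0 := by rintro rfl; simp at hz
  have hzn : 0 < ‖z‖ := norm_pos_iff.2 hz0
  set L : ℝ := ‖z‖ ^ (-1 / (2 * (m : ℝ))) with hL
  have hLp : 0 < L := by positivity
  have hL2m : L ^ (2 * m) = ‖z‖⁻¹ := by
    rw [hL, ← Real.rpow_natCast, ← Real.rpow_mul hzn.le, ← Real.rpow_neg_one]
    congr 1; push_cast; field_simp
  have hLn : L ^ n = ‖z‖ ^ (-(n : ℝ) / (2 * (m : ℝ))) := by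
    rw [hL, ← Real.rpow_natCast, ← Real.rpow_mul hzn.le]
    congr 1; ring
  set u : ℂ := Complex.exp (Complex.I * z.arg) with hu
  have hzu : z = ‖z‖ * u := by
    rw [hu, mul_comm Complex.I]; exact (Complex.norm_mul_exp_arg_mul_I z).symm
  have hu1 : ‖u - 1‖ ≤ κ := (Real.norm_exp_I_mul_ofReal_sub_one_le).trans harg
  have hsc := Measure.integral_comp_smul (volume : Measure (EuclideanSpace ℝ (Fin n)))
    (fun ξ => Complex.exp (Complex.I * ((inner ℝ x ξ : ℝ) : ℂ)) *
            Complex.exp (-z * ((‖ξ‖ ^ (2 * m) : ℝ) : ℂ))) L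
  rw [finrank_euclideanSpace_fin, abs_of_pos (by positivity)] at hsc
  have hcongr : ∀ ξ : EuclideanSpace ℝ (Fin n),
      Complex.exp (Complex.I * ((inner ℝ x (L • ξ) : ℝ) : ℂ)) *
            Complex.exp (-z * ((‖L • ξ‖ ^ (2 * m) : ℝ) : ℂ)) =
      Complex.exp (Complex.I * ((inner ℝ (L • x) ξ : ℝ) : ℂ)) *
            Complex.exp (-u * ((‖ξ‖ ^ (2 * m) : ℝ) : ℂ)) := by
    intro ξ
    rw [inner_smul_right, real_inner_smul_left, norm_smul, mul_pow, norm_of_nonneg hLp.le, hL2m]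
    congr 2
    nth_rewrite 1 [hzu]
    have : (‖z‖ : ℂ) ≠ 0 := by exact_mod_cast hzn.ne'
    push_cast
    field_simp
  simp_rw [hcongr] at hsc
  have hI : (∫ ξ : EuclideanSpace ℝ (Fin n), Complex.exp (Complex.I * ((inner ℝ x ξ : ℝ) : ℂ)) *
            Complex.exp (-z * ((‖ξ‖ ^ (2 * m) : ℝ) : ℂ))) =
      (L ^ n) • ∫ ξ : EuclideanSpace ℝ (Fin n),
        Complex.exp (Complex.I * ((inner ℝ (L • x) ξ : ℝ) : ℂ)) *
            Complex.exp (-u * ((‖ξ‖ ^ (2 * m) : ℝ) : ℂ)) := by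
    rw [hsc, smul_smul, mul_inv_cancel₀ (by positivity), one_smul]
  rw [hI, norm_smul, norm_of_nonneg (by positivity), ← hLn]
  have hfin := H u hu1 (L • x)
  have hexp : ‖L • x‖ ^ ((2 * (m : ℝ)) / (2 * (m : ℝ) - 1)) =
      ‖x‖ ^ ((2 * (m : ℝ)) / (2 * (m : ℝ) - 1)) / ‖z‖ ^ (1 / (2 * (m : ℝ) - 1)) := by
    rw [norm_smul, norm_of_nonneg hLp.le, Real.mul_rpow hLp.le (norm_nonneg _), hL,
      ← Real.rpow_mul hzn.le, mul_comm, div_eq_mul_inv _ (‖z‖ ^ _), ← Real.rpow_neg hzn.le]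
    congr 2
    field_simp
  rw [hexp, ← mul_div_assoc] at hfin
  refine (mul_le_mul_of_nonneg_left hfin (by positivity : (0 : ℝ) ≤ L ^ n)).trans (le_of_eq ?_)
  ring
end

section
/- Let m be a positive integer, n ≥ 1, a ∈ ℝⁿ a unit vector, λ > 0. Define G_λ(t,x) = (2π)^{-n} ∫_{ℝⁿ} e^{i x·ξ} e^{-t P_λ(ξ)} dξ and, for complex μ with sufficiently large real part, h(x,μ) = ∫₀^∞ e^{-μ t} G_λ(t,x) dt (the integral kernel of the resolvent (μ + P_λ(D))^{-1}). Then there exist constants c ∈ (0,1) and C > 0, depending only on n and m, such that for all ε ∈ (0,c), all λ > 0, all unit vectors a, and all complex μ with Re μ > (b_m + ε/2) λ^{2m}: ∫_{ℝⁿ} |h(x,μ)| dx ≤ C ε^{-(n+1)} / |μ - (b_m + ε/2) λ^{2m}|. -/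
open Real MeasureTheory

/-- `G_λ(t,x) = (2π)^{-n} ∫_{ℝⁿ} e^{i x·ξ} e^{-t P_λ(ξ)} dξ`, the heat kernel of the conjugated
operator `P_λ(D)`. -/
noncomputable def Gker (n m : ℕ) (a : EuclideanSpace ℝ (Fin n)) (lam : ℝ) (t : ℝ)
    (x : EuclideanSpace ℝ (Fin n)) : ℂ :=
  ((2 * Real.pi) ^ (-(n : ℝ)) : ℝ) •
    ∫ ξ : EuclideanSpace ℝ (Fin n),
      Complex.exp (Complex.I * ((inner ℝ x ξ : ℝ) : ℂ)) *
        Complex.exp (-(t : ℂ) * Psymb n m a lam ξ)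

/-- `h(x,μ) = ∫₀^∞ e^{-μ t} G_λ(t,x) dt`, the kernel of the resolvent `(μ + P_λ(D))^{-1}`. -/
noncomputable def resKer (n m : ℕ) (a : EuclideanSpace ℝ (Fin n)) (lam : ℝ)
    (x : EuclideanSpace ℝ (Fin n)) (μ : ℂ) : ℂ :=
  ∫ t in Set.Ioi (0 : ℝ), Complex.exp (-μ * (t : ℂ)) * Gker n m a lam t x



theorem aux_param {α : Type*} [MeasurableSpace α] {ν : Measure α} (f : ℂ → α → ℂ) (w0 : ℂ) (R : ℝ)
    (hR : 0 < R) (g : α → ℝ) (hg : Integrable g ν)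
    (hmeas : ∀ w ∈ Metric.ball w0 R, AEStronglyMeasurable (f w) ν)
    (hdiff : ∀ᵐ ξ ∂ν, DifferentiableOn ℂ (fun w => f w ξ) (Metric.ball w0 R))
    (hb' : ∀ᵐ ξ ∂ν, ∀ w ∈ Metric.ball w0 R, ‖f w ξ‖ ≤ g ξ) :
    DifferentiableAt ℂ (fun w => ∫ ξ, f w ξ ∂ν) w0 := by
  have hball : Metric.ball w0 (R/2) ∈ nhds w0 := Metric.ball_mem_nhds _ (by positivity)
  have hw0 : w0 ∈ Metric.ball w0 R := Metric.mem_ball_self hR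
  have hD : ∀ᵐ ξ ∂ν, ∀ w ∈ Metric.ball w0 (R/2), HasDerivAt (fun w => f w ξ) (deriv (fun w => f w ξ) w) w := by
    filter_upwards [hdiff] with ξ h w hw
    have : w ∈ Metric.ball w0 R := Metric.ball_subset_ball (by linarith) hw
    exact ((h w this).differentiableAt (Metric.isOpen_ball.mem_nhds this)).hasDerivAt
  refine (hasDerivAt_integral_of_dominated_loc_of_deriv_le (𝕜 := ℂ) (F := f) (x₀ := w0) (s := Metric.ball w0 (R/2))
    (F' := fun w ξ => deriv (fun w => f w ξ) w) (bound := fun ξ => g ξ / (R/4)) hball ?_ ?_ ?_ ?_ ?_ hD).2.differentiableAt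
  · filter_upwards [Metric.ball_mem_nhds w0 hR] with w hw using hmeas w hw
  · exact Integrable.mono' hg (hmeas _ hw0) (hb'.mono fun ξ h => h _ hw0)
  · have hu : ∀ k : ℕ, (w0 + ((R/2 / (k+1) : ℝ) : ℂ)) ∈ Metric.ball w0 R := by
      intro k
      rw [Metric.mem_ball, dist_eq_norm, add_sub_cancel_left, Complex.norm_real, Real.norm_of_nonneg (by positivity)]
      have : R/2/(k+1) ≤ R/2 := div_le_self (by positivity) (by linarith [(Nat.cast_nonneg k : (0:ℝ) ≤ k)])
      linarith
    refine aestronglyMeasurable_of_tendsto_ae Filter.atTop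
      (f := fun (k:ℕ) ξ => (((R/2/(k+1) : ℝ) : ℂ))⁻¹ • (f (w0 + ((R/2 / (k+1) : ℝ) : ℂ)) ξ - f w0 ξ)) ?_ ?_
    · intro k
      exact ((hmeas _ (hu k)).sub (hmeas _ hw0)).const_smul ((((R/2/(k+1) : ℝ) : ℂ))⁻¹)
    · filter_upwards [hD] with ξ h
      have h1 := (h w0 (Metric.mem_ball_self (by positivity))).tendsto_slope_zero
      refine h1.comp ?_
      rw [tendsto_nhdsWithin_iff]
      constructor
      · have : Filter.Tendsto (fun k : ℕ => (R/2) * (1/((k:ℝ)+1))) Filter.atTop (nhds ((R/2)*0)) :=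
          tendsto_one_div_add_atTop_nhds_zero_nat.const_mul _
        have h2 := (Complex.continuous_ofReal.tendsto _).comp this
        simp only [mul_zero, Complex.ofReal_zero] at h2
        refine h2.congr ?_
        intro k
        simp only [Function.comp]
        congr 1
        ring
      · refine Filter.Eventually.of_forall fun k => ?_
        have : (0:ℝ) < R/2/(k+1) := by positivity
        simpa using Complex.ofReal_ne_zero.mpr this.ne'
  · filter_upwards [hdiff, hb'] with ξ h1 h2 w hw
    have hsub : Metric.closedBall w (R/4) ⊆ Metric.ball w0 R := by
      intro v hv
      rw [Metric.mem_closedBall] at hv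
      rw [Metric.mem_ball] at *
      linarith [dist_triangle v w w0]
    refine Complex.norm_deriv_le_of_forall_mem_sphere_norm_le (by positivity) ?_ ?_
    · apply DifferentiableOn.diffContOnCl
      exact h1.mono (by rw [closure_ball _ (by positivity)]; exact hsub)
    · intro v hv
      exact h2 v (hsub (Metric.sphere_subset_closedBall hv))
  · exact hg.div_const _

/-- zero derivative along a curve -/
theorem aux_deriv_zero (F : ℂ → ℂ) (p v : ℂ) (hv : v ≠ 0) (hF : DifferentiableAt ℂ F p)
    (h : ∀ᶠ s : ℝ in nhds 0, F (p + s * v) = F p) : deriv F p = 0 := by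
  have h1 : HasDerivAt (fun s : ℝ => p + (s:ℂ) * v) v 0 := by
    have := ((Complex.ofRealCLM.hasDerivAt (x := (0:ℝ))).mul_const v).const_add p
    simpa using this
  have h2 : HasDerivAt F (deriv F p) (p + ((0:ℝ):ℂ) * v) := by simpa using hF.hasDerivAt
  have h3 := HasDerivAt.comp (0:ℝ) h2 h1
  have h4 : HasDerivAt (F ∘ (fun s : ℝ => p + (s:ℂ) * v)) 0 0 := 
    (hasDerivAt_const (0:ℝ) (F p)).congr_of_eventuallyEq h
  have := h3.unique h4
  simpa [hv] using this

theorem aux_const_seg (F : ℂ → ℂ) (p v : ℂ) 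
    (hF : ∀ s ∈ Set.Icc (0:ℝ) 1, DifferentiableAt ℂ F (p + s * v))
    (h : ∀ s ∈ Set.Icc (0:ℝ) 1, deriv F (p + s * v) = 0) : F (p + v) = F p := by
  have key : ∀ s ∈ Set.Icc (0:ℝ) 1, HasDerivAt (fun s : ℝ => F (p + (s:ℂ) * v)) 0 s := by
    intro s hs
    have h1 : HasDerivAt (fun s : ℝ => p + (s:ℂ) * v) v s := by
      have := ((Complex.ofRealCLM.hasDerivAt (x := s)).mul_const v).const_add p
      simpa using this
    have := HasDerivAt.comp s ((hF s hs).hasDerivAt) h1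
    rw [h s hs, zero_mul] at this
    exact this
  have := constant_of_has_deriv_right_zero (f := fun s : ℝ => F (p + (s:ℂ) * v)) (a := 0) (b := 1)
    (fun s hs => (key s hs).continuousAt.continuousWithinAt)
    (fun s hs => (key s ⟨hs.1, hs.2.le⟩).hasDerivWithinAt) 1 (by simp)
  simpa using this

theorem aux_exp_integrable {n : ℕ} (k : ℝ) (hk : 0 < k) :
    Integrable (fun x : EuclideanSpace ℝ (Fin n) => Real.exp (-(k * ‖x‖))) := by
  have h1 : Integrable (fun x : EuclideanSpace ℝ (Fin n) => Real.exp (-‖x‖)) := by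
    have := integrable_one_add_norm (E := EuclideanSpace ℝ (Fin n)) (μ := volume) (r := (n:ℝ)+1) (by simp)
    refine Integrable.mono' (this.const_mul (Real.exp 1 * ((n+1).factorial:ℝ))) (by fun_prop) (Filter.Eventually.of_forall fun x => ?_)
    have hx : 0 ≤ 1 + ‖x‖ := by positivity
    rw [Real.norm_of_nonneg (Real.exp_pos _).le, Real.rpow_neg hx]
    have h2 := Real.pow_div_factorial_le_exp (1+‖x‖) hx (n+1)
    have h3 : (1+‖x‖)^((n:ℝ)+1) = (1+‖x‖)^(n+1) := by
      rw [← Real.rpow_natCast]; push_cast; rfl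
    rw [h3]
    have h4 : Real.exp (-‖x‖) = Real.exp 1 * (Real.exp (1+‖x‖))⁻¹ := by
      rw [← Real.exp_neg, ← Real.exp_add]; congr 1; ring
    rw [h4, mul_assoc]
    gcongr
    rw [div_le_iff₀ (by positivity)] at h2
    rw [inv_le_iff_one_le_mul₀ (by positivity)]
    have h5 : 0 < (1+‖x‖)^(n+1) := by positivity
    rw [mul_right_comm, mul_comm (_ : ℝ) (Real.exp _), ← div_eq_mul_inv, one_le_div h5]
    exact h2
  have h2 := h1.comp_smul hk.ne'
  refine h2.congr (Filter.Eventually.of_forall fun x => ?_)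
  simp [norm_smul, abs_of_pos hk]

theorem aux_exp_integral {n : ℕ} (k : ℝ) (hk : 0 < k) :
    ∫ x : EuclideanSpace ℝ (Fin n), Real.exp (-(k * ‖x‖)) = (k⁻¹)^n * ∫ x : EuclideanSpace ℝ (Fin n), Real.exp (-‖x‖) := by
  have := Measure.integral_comp_smul (volume : Measure (EuclideanSpace ℝ (Fin n))) (fun x => Real.exp (-‖x‖)) k
  simp only [norm_smul, Real.norm_of_nonneg hk.le] at this
  rw [this]
  simp [abs_of_pos hk]

theorem aux_angle (m : ℕ) (hm : 1 ≤ m) : 0 < Real.pi / (4 * (m : ℝ) - 2) ∧ Real.pi / (4 * (m : ℝ) - 2) ≤ Real.pi/2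
    ∧ ((2*m-1 : ℕ):ℝ) * (Real.pi / (4 * (m : ℝ) - 2)) = Real.pi / 2 := by
  have h : (1:ℝ) ≤ m := by exact_mod_cast hm
  have h2 : (2:ℝ) ≤ 4 * (m : ℝ) - 2 := by linarith
  refine ⟨by positivity, ?_, ?_⟩
  · gcongr
  · rw [Nat.cast_sub (by omega)]
    have h3 : 4 * (m : ℝ) - 2 ≠ 0 := by linarith
    push_cast
    rw [← mul_div_assoc, div_eq_div_iff h3 (by norm_num)]
    ring

theorem aux_bpos (m : ℕ) (hm : 1 ≤ m) : 0 < bConst m := by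
  obtain ⟨h1, h2, _⟩ := aux_angle m hm
  unfold bConst
  have := Real.sin_pos_of_pos_of_lt_pi h1 (by linarith [Real.pi_pos])
  positivity

theorem aux_near (m : ℕ) : ∃ δ : ℝ, 0 < δ ∧ δ ≤ 1 ∧ ∀ (A : ℂ) (s e : ℝ), 0 ≤ s → 0 ≤ e → e ≤ δ * s →
    ‖A - ((s^2 : ℝ) : ℂ)‖ ≤ e^2 + 2 * s * e → ‖A^m - ((s^(2*m) : ℝ) : ℂ)‖ ≤ 1/4 * s^(2*m) := by
  have hc : ContinuousAt (fun w : ℂ => w^m) 1 := by fun_prop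
  rw [Metric.continuousAt_iff] at hc
  obtain ⟨d, hd, h⟩ := hc (1/4) (by norm_num)
  refine ⟨min 1 (d/4), by positivity, min_le_left _ _, ?_⟩
  intro A s e hs he hes hA
  rcases hs.eq_or_lt with rfl | hs
  · have : e = 0 := by nlinarith
    subst this
    have hA0 : A = 0 := by simpa using hA
    subst hA0
    rcases m with _ | m <;> simp
  · have h1 : dist (A / ((s^2:ℝ):ℂ)) 1 < d := by
      have hs2 : ((s^2:ℝ):ℂ) ≠ 0 := by exact_mod_cast (by positivity : s^2 ≠ 0)
      rw [dist_eq_norm, div_sub_one hs2, norm_div, Complex.norm_real, Real.norm_of_nonneg (by positivity), div_lt_iff₀ (by positivity)]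
      have h3 : min 1 (d/4) ≤ 1 := min_le_left _ _
      have h4 : min 1 (d/4) ≤ d/4 := min_le_right _ _
      have h5 : e ≤ s := by nlinarith
      have h6 : e ≤ d/4*s := by nlinarith
      nlinarith [mul_nonneg he hs.le, mul_pos hd (mul_pos hs hs)]
    have h2 := h h1
    have e1 : A^m - ((s^(2*m):ℝ):ℂ) = ((s^(2*m):ℝ):ℂ) * ((A / ((s^2:ℝ):ℂ))^m - 1^m) := by
      have : (s:ℂ) ≠ 0 := by exact_mod_cast hs.ne'
      push_cast
      rw [div_pow, one_pow, ← pow_mul]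
      field_simp
    rw [e1, norm_mul, Complex.norm_real, Real.norm_of_nonneg (by positivity)]
    rw [dist_eq_norm] at h2
    nlinarith [pow_pos hs (2*m)]

theorem aux_min (m : ℕ) (hm : 1 ≤ m) (s : ℝ) : -bConst m ≤ (((s:ℂ) + Complex.I)^(2*m)).re := by
  set p : ℝ → ℝ := fun s => (((s:ℂ) + Complex.I)^(2*m)).re with hp
  have hcont : Continuous p := by fun_prop
  have hlim : Filter.Tendsto p (Filter.cocompact ℝ) Filter.atTop := by
    obtain ⟨δ, hδ, hδ1, hnear⟩ := aux_near m
    have h1 : Filter.Tendsto (fun s : ℝ => 3/4 * ‖s‖) (Filter.cocompact ℝ) Filter.atTop :=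
      (tendsto_norm_cocompact_atTop).const_mul_atTop (by norm_num)
    refine Filter.tendsto_atTop_mono' _ ?_ h1
    filter_upwards [(tendsto_norm_cocompact_atTop (E := ℝ)).eventually_ge_atTop (1/δ)] with s hs
    have h2 := hnear (((s:ℂ) + Complex.I)^2) ‖s‖ 1 (norm_nonneg _) zero_le_one (by rw [div_le_iff₀ hδ] at hs; linarith) (by
      have : ((s:ℂ) + Complex.I)^2 - ((‖s‖^2:ℝ):ℂ) = 2 * s * Complex.I - 1 := by
        rw [Real.norm_eq_abs, sq_abs]; push_cast
        linear_combination Complex.I_sq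
      rw [this]
      refine (norm_sub_le _ _).trans ?_
      simp
      linarith)
    rw [← pow_mul] at h2
    have h3 := (Complex.abs_re_le_norm _).trans h2
    rw [Complex.sub_re, Complex.ofReal_re] at h3
    have h4 := (abs_le.1 h3).1
    have h5 : ‖s‖ ≤ ‖s‖^(2*m) := by
      apply le_self_pow₀ _ (by omega)
      have : 1 ≤ 1/δ := by rw [le_div_iff₀ hδ]; linarith
      linarith
    simp only [hp]
    linarith
  obtain ⟨t, ht⟩ := hcont.exists_forall_le hlim
  refine le_trans ?_ (ht s)
  have hd : HasDerivAt p ((((2*m:ℕ):ℂ) * ((t:ℂ)+Complex.I)^(2*m-1) * 1).re) t := by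
    have h1 : HasDerivAt (fun z : ℂ => (z + Complex.I)^(2*m)) (((2*m:ℕ):ℂ) * ((t:ℂ)+Complex.I)^(2*m-1) * 1) (t:ℂ) :=
      ((hasDerivAt_id (t:ℂ)).add_const Complex.I).pow (2*m)
    exact h1.real_of_complex
  have hmin : IsLocalMin p t := Filter.Eventually.of_forall ht
  have h0 := hmin.hasDerivAt_eq_zero hd
  set N := 2*m-1 with hN
  set ζ : ℂ := (t:ℂ) + Complex.I with hζ
  have h0' : (ζ^N).re = 0 := by
    rw [mul_one, ← Complex.ofReal_natCast, Complex.re_ofReal_mul] at h0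
    rcases mul_eq_zero.1 h0 with h | h
    · exfalso
      have : 2*m = 0 := by exact_mod_cast h
      omega
    · exact h
  have him : ζ.im = 1 := by simp [hζ]
  have hpt : p t = - (ζ^N).im := by
    have : ζ^(2*m) = ζ^N * ζ := by rw [← pow_succ]; congr 1; omega
    simp only [hp]
    rw [← hζ, this, Complex.mul_re, h0', him]; ring
  rw [hpt]
  apply neg_le_neg
  refine (Complex.im_le_norm _).trans ?_
  rw [norm_pow]
  unfold bConst
  rw [← hN]
  have hζ0 : ζ ≠ 0 := by intro h; rw [h] at him; simp at him
  apply pow_le_pow_left₀ (norm_nonneg _)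
  obtain ⟨a1, a2, a3⟩ := aux_angle m hm
  set θ0 := Real.pi / (4 * (m : ℝ) - 2) with hθ0
  have hs0 : 0 < Real.sin θ0 := Real.sin_pos_of_pos_of_lt_pi a1 (by linarith [Real.pi_pos])
  have hsin : Real.sin ζ.arg = ‖ζ‖⁻¹ := by rw [Complex.sin_arg, him, one_div]
  have hn : 0 < ‖ζ‖ := norm_pos_iff.2 hζ0
  have hθpos : 0 < ζ.arg := by
    have h1 : 0 ≤ ζ.arg := Complex.arg_nonneg_iff.2 (by rw [him]; norm_num)
    rcases h1.eq_or_lt with h | h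
    · rw [← h, Real.sin_zero] at hsin
      exact absurd hsin.symm (by positivity)
    · exact h
  have hθlt : ζ.arg < Real.pi := by
    rcases (Complex.arg_le_pi ζ).eq_or_lt with h | h
    · rw [h, Real.sin_pi] at hsin
      exact absurd hsin.symm (by positivity)
    · exact h
  have hcos : Real.cos (N * ζ.arg) = 0 := by
    have h1 : ζ^N = ((‖ζ‖^N : ℝ):ℂ) * Complex.exp ((N * ζ.arg : ℝ) * Complex.I) := by
      conv_lhs => rw [← Complex.norm_mul_exp_arg_mul_I ζ]
      rw [mul_pow, ← Complex.exp_nat_mul]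
      push_cast; ring_nf
    rw [h1, Complex.re_ofReal_mul, Complex.exp_ofReal_mul_I_re] at h0'
    rcases mul_eq_zero.1 h0' with h | h
    · exact absurd h (by positivity)
    · exact h
  have hNpos : (0:ℝ) < N := by
    have : 0 < N := by omega
    exact_mod_cast this
  have c1 : θ0 ≤ ζ.arg := by
    by_contra hlt
    push Not at hlt
    have : N * ζ.arg < N * θ0 := by gcongr
    have := Real.cos_pos_of_mem_Ioo (x := N * ζ.arg) ⟨by nlinarith [Real.pi_pos, mul_pos hNpos hθpos], by linarith⟩
    linarith
  have c2 : ζ.arg ≤ Real.pi - θ0 := by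
    by_contra hlt
    push Not at hlt
    have h1 : N * (Real.pi - ζ.arg) < N * θ0 := by gcongr; linarith
    have h2 : 0 < N * (Real.pi - ζ.arg) := mul_pos hNpos (by linarith)
    have := Real.cos_pos_of_mem_Ioo (x := N * (Real.pi - ζ.arg)) ⟨by linarith [Real.pi_pos], by linarith⟩
    have h3 : Real.cos (N * (Real.pi - ζ.arg)) = (-1)^N * Real.cos (N * ζ.arg) := by
      rw [mul_sub, Real.cos_nat_mul_pi_sub]
    rw [h3, hcos, mul_zero] at this
    exact lt_irrefl _ this
  have hsge : Real.sin θ0 ≤ Real.sin ζ.arg := by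
    rcases le_total ζ.arg (Real.pi/2) with h | h
    · exact Real.sin_le_sin_of_le_of_le_pi_div_two (by linarith) h c1
    · rw [← Real.sin_pi_sub ζ.arg]
      exact Real.sin_le_sin_of_le_of_le_pi_div_two (by linarith) (by linarith) (by linarith)
  rw [hsin] at hsge
  rw [le_inv_comm₀ hn hs0]
  exact hsge

theorem aux_re_ge (m : ℕ) (hm : 1 ≤ m) (A : ℂ) (s e : ℝ) (he : 0 ≤ e) (h1 : A.re = s^2 - e^2) (h2 : ‖A‖ ≤ s^2+e^2) :
    -(bConst m * e^(2*m)) ≤ (A^m).re := by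
  obtain ⟨ζ, hζ⟩ : ∃ ζ : ℂ, ζ^2 = A := ⟨A^(1/2:ℂ), by
    have := Complex.cpow_nat_inv_pow A (n := 2) (by norm_num)
    simpa using this⟩
  have hb := aux_bpos m hm
  have him : |ζ.im| ≤ e := by
    apply abs_le_of_sq_le_sq _ he
    rw [← hζ, norm_pow, Complex.sq_norm, Complex.normSq_apply] at h2
    rw [← hζ, sq, Complex.mul_re] at h1
    nlinarith
  have h3 : -(bConst m * |ζ.im|^(2*m)) ≤ (A^m).re := by
    rw [← hζ, ← pow_mul, pow_mul |ζ.im|, sq_abs, ← pow_mul]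
    by_cases h0 : ζ.im = 0
    · have : ζ = (ζ.re : ℂ) := Complex.ext (by simp) (by simp [h0])
      rw [h0, this, ← Complex.ofReal_pow, Complex.ofReal_re, pow_mul, pow_mul]
      have : 0 ≤ (ζ.re^2)^m := by positivity
      have h4 : 0 ≤ bConst m * ((0:ℝ)^2)^m := by positivity
      linarith
    · have : ζ = (ζ.im : ℂ) * (((ζ.re/ζ.im : ℝ):ℂ) + Complex.I) := by
        apply Complex.ext <;> simp
        field_simp
      have h5 := aux_min m hm (ζ.re/ζ.im)
      have h6 : 0 ≤ ζ.im^(2*m) := by rw [pow_mul]; positivity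
      have h7 : (ζ^(2*m)).re = ζ.im^(2*m) * ((((ζ.re/ζ.im : ℝ):ℂ) + Complex.I)^(2*m)).re := by
        conv_lhs => rw [this]
        rw [mul_pow, ← Complex.ofReal_pow, Complex.re_ofReal_mul]
      rw [h7]
      nlinarith
  have : |ζ.im|^(2*m) ≤ e^(2*m) := by gcongr
  nlinarith

theorem aux_K (m : ℕ) (hm : 1 ≤ m) : ∃ C1 > (0:ℝ), ∃ D > (0:ℝ), ∀ (A : ℂ) (s e : ℝ), 0 ≤ s → 0 ≤ e →
    A.re = s^2 - e^2 → ‖A‖ ≤ s^2 + e^2 → ‖A - ((s^2 : ℝ) : ℂ)‖ ≤ e^2 + 2 * s * e →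
    ∀ (κ : ℝ) (z : ℂ) (L : ℝ), 0 ≤ κ → κ ≤ 1 → 0 < z.re → |z.im| ≤ κ * z.re → 0 < L → e ≤ 2 * L → 1 ≤ z.re * L^(2*m) →
    ‖Complex.exp (-z * A^m)‖ ≤ C1 * Real.exp (z.re * ((bConst m + D * κ) * e^(2*m))) * Real.exp (-((4*L)⁻¹ * s)) := by
  obtain ⟨δ, hδ, hδ1, hnear⟩ := aux_near m
  refine ⟨Real.exp (1/4 + 1/(2*δ)), Real.exp_pos _, ((1/δ)^2+1)^m, by positivity, ?_⟩
  intro A s e hs he h1 h2 h3 κ z L hκ hκ1 hz hzi hL heL htL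
  have hb := aux_bpos m hm
  rw [Complex.norm_exp, ← Real.exp_add, ← Real.exp_add, Real.exp_le_exp]
  have hre : (-z * A^m).re = - (z.re * (A^m).re) + z.im * (A^m).im := by
    simp only [neg_mul, Complex.neg_re, Complex.mul_re]; ring
  rw [hre]
  have hpos : 0 ≤ z.re * ((bConst m + ((1/δ)^2+1)^m * κ) * e^(2*m)) := by positivity
  have him : z.im * (A^m).im ≤ κ * z.re * |(A^m).im| := by
    calc z.im * (A^m).im ≤ |z.im * (A^m).im| := le_abs_self _
      _ = |z.im| * |(A^m).im| := abs_mul _ _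
      _ ≤ _ := by gcongr
  rcases le_total e (δ * s) with hcase | hcase
  · have h4 := hnear A s e hs he hcase h3
    have h5 := (Complex.abs_re_le_norm _).trans h4
    have h6 := (Complex.abs_im_le_norm _).trans h4
    rw [Complex.sub_re, Complex.ofReal_re] at h5
    rw [Complex.sub_im, Complex.ofReal_im, sub_zero] at h6
    have h7 := (abs_le.1 h5).1
    have hS : s/L - 1 ≤ z.re * s^(2*m) := by
      have h8 : (s/L)^(2*m) ≤ z.re * s^(2*m) := by
        rw [div_pow, div_le_iff₀ (by positivity)]
        nlinarith [pow_nonneg hs (2*m)]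
      refine le_trans ?_ h8
      have h9 : 0 ≤ s/L := by positivity
      rcases le_total (s/L) 1 with h | h
      · linarith [pow_nonneg h9 (2*m)]
      · have := le_self_pow₀ h (show 2*m ≠ 0 by omega)
        linarith
    have hS0 : 0 ≤ z.re * s^(2*m) := by positivity
    have hi : κ * z.re * |(A^m).im| ≤ 1/4 * (z.re * s^(2*m)) := by
      calc κ * z.re * |(A^m).im| ≤ 1 * z.re * (1/4 * s^(2*m)) := by gcongr
        _ = _ := by ring
    have hr : 3/4 * (z.re * s^(2*m)) ≤ z.re * (A^m).re := by
      calc 3/4 * (z.re * s^(2*m)) = z.re * (3/4 * s^(2*m)) := by ring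
        _ ≤ _ := by gcongr; linarith
    have e1 : (4*L)⁻¹ * s = 1/4 * (s/L) := by field_simp
    rw [e1]
    have : 0 < 1/(2*δ) := by positivity
    linarith
  · have h4 := aux_re_ge m hm A s e he h1 h2
    have hse : s ≤ 1/δ * e := by rw [div_mul_eq_mul_div, le_div_iff₀ hδ]; linarith
    have h5 : ‖A^m‖ ≤ ((1/δ)^2+1)^m * e^(2*m) := by
      rw [norm_pow, pow_mul, ← mul_pow]
      gcongr
      refine h2.trans ?_
      have : s^2 ≤ (1/δ*e)^2 := by gcongr
      nlinarith
    have h6 := (Complex.abs_im_le_norm _).trans h5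
    have h7 : κ * z.re * |(A^m).im| ≤ κ * z.re * (((1/δ)^2+1)^m * e^(2*m)) := by gcongr
    have h8 : z.re * (-(bConst m * e^(2*m))) ≤ z.re * (A^m).re := by gcongr
    have h9 : (4*L)⁻¹ * s ≤ 1/(2*δ) := by
      have : s ≤ 1/δ*(2*L) := hse.trans (by gcongr)
      calc (4*L)⁻¹ * s ≤ (4*L)⁻¹ * (1/δ*(2*L)) := by gcongr
        _ = _ := by field_simp; norm_num
    nlinarith

noncomputable def Qf {n : ℕ} (ξ η : EuclideanSpace ℝ (Fin n)) : ℂ :=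
  ((‖ξ‖ ^ 2 - ‖η‖ ^ 2 : ℝ) : ℂ) + ((2 * (inner ℝ η ξ : ℝ) : ℝ) : ℂ) * Complex.I

theorem aux_Psymb (n m : ℕ) (a : EuclideanSpace ℝ (Fin n)) (ha : ‖a‖ = 1) (lam : ℝ) (ξ : EuclideanSpace ℝ (Fin n)) :
    Psymb n m a lam ξ = (Qf ξ (lam • a))^m := by
  unfold Psymb Qf
  rw [norm_smul, ha, mul_one, Real.norm_eq_abs, sq_abs, real_inner_smul_left, mul_assoc]

theorem aux_Q {n : ℕ} (ξ η : EuclideanSpace ℝ (Fin n)) : (Qf ξ η).re = ‖ξ‖^2 - ‖η‖^2 ∧ ‖Qf ξ η‖ ≤ ‖ξ‖^2 + ‖η‖^2 ∧ 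
    ‖Qf ξ η - ((‖ξ‖^2 : ℝ):ℂ)‖ ≤ ‖η‖^2 + 2 * ‖ξ‖ * ‖η‖ := by
  have hre : (Qf ξ η).re = ‖ξ‖^2 - ‖η‖^2 := by
    simp only [Qf, Complex.add_re, Complex.ofReal_re, Complex.re_ofReal_mul, Complex.I_re]; ring
  have him : (Qf ξ η).im = 2 * inner ℝ η ξ := by
    simp only [Qf, Complex.add_im, Complex.ofReal_im, Complex.im_ofReal_mul, Complex.I_im]; ring
  have hin := abs_real_inner_le_norm η ξ
  refine ⟨hre, ?_, ?_⟩
  · apply le_of_sq_le_sq _ (by positivity)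
    rw [Complex.sq_norm, Complex.normSq_apply, hre, him]
    have h1 : (inner ℝ η ξ : ℝ)^2 ≤ (‖η‖*‖ξ‖)^2 := sq_le_sq' (by linarith [(abs_le.1 hin).1]) (abs_le.1 hin).2
    nlinarith
  · have : Qf ξ η - ((‖ξ‖^2 : ℝ):ℂ) = ((-‖η‖^2 : ℝ):ℂ) + ((2 * (inner ℝ η ξ : ℝ) : ℝ) : ℂ) * Complex.I := by
      unfold Qf; push_cast; ring
    rw [this]
    refine (norm_add_le _ _).trans ?_
    rw [norm_mul, Complex.norm_real, Complex.norm_real, Complex.norm_I, norm_neg, Real.norm_of_nonneg (by positivity),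
      Real.norm_eq_abs, abs_mul, abs_two]
    nlinarith

theorem aux_QK (m : ℕ) (hm : 1 ≤ m) : ∃ C1 > (0:ℝ), ∃ D > (0:ℝ), ∀ (n : ℕ) (ξ η : EuclideanSpace ℝ (Fin n)),
    ∀ (κ : ℝ) (z : ℂ) (L : ℝ), 0 ≤ κ → κ ≤ 1 → 0 < z.re → |z.im| ≤ κ * z.re → 0 < L → ‖η‖ ≤ 2 * L → 1 ≤ z.re * L^(2*m) →
    ‖Complex.exp (-z * (Qf ξ η)^m)‖ ≤ C1 * Real.exp (z.re * ((bConst m + D * κ) * ‖η‖^(2*m))) * Real.exp (-((4*L)⁻¹ * ‖ξ‖)) := by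
  obtain ⟨C1, hC1, D, hD, h⟩ := aux_K m hm
  refine ⟨C1, hC1, D, hD, fun n ξ η => ?_⟩
  obtain ⟨h1, h2, h3⟩ := aux_Q ξ η
  exact h _ _ _ (norm_nonneg _) (norm_nonneg _) h1 h2 h3

theorem aux_Lexists (m : ℕ) (hm : 1 ≤ m) (t : ℝ) (ht : 0 < t) (M : ℝ) (hM : 0 ≤ M) : 
    ∃ L : ℝ, 0 < L ∧ M ≤ 2 * L ∧ 1 ≤ t * L^(2*m) := by
  refine ⟨M + 1 + 1/t, by positivity, by nlinarith [(by positivity : 0 < 1/t)], ?_⟩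
  have h0 : 0 < 1/t := by positivity
  have h1 : 1 ≤ M + 1 + 1/t := by linarith
  have h2 := le_self_pow₀ h1 (show 2*m ≠ 0 by omega)
  calc 1 = t * (1/t) := by field_simp
    _ ≤ t * (M+1+1/t)^(2*m) := by gcongr; linarith

theorem aux_Qcont {n : ℕ} (η : EuclideanSpace ℝ (Fin n)) : Continuous (fun ξ => Qf ξ η) := by
  unfold Qf; fun_prop

theorem aux_Qshift {n : ℕ} (ξ η u : EuclideanSpace ℝ (Fin n)) (w : ℂ) : 
    Qf ξ η + 2 * w * (((inner ℝ u ξ : ℝ):ℂ) + Complex.I * ((inner ℝ u η : ℝ):ℂ)) + w^2 * ((‖u‖^2:ℝ):ℂ) 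
      = Qf (ξ + w.re • u) (η + w.im • u) := by
  unfold Qf
  rw [norm_add_sq_real, norm_add_sq_real, norm_smul, norm_smul, mul_pow, mul_pow, Real.norm_eq_abs, Real.norm_eq_abs, sq_abs, sq_abs]
  simp only [inner_add_left, inner_add_right, real_inner_smul_left, real_inner_smul_right, real_inner_self_eq_norm_sq]
  rw [real_inner_comm u ξ, real_inner_comm u η]
  conv_lhs => rw [← Complex.re_add_im w]
  push_cast
  linear_combination (-(((inner ℝ u η : ℝ):ℂ) * (-2) * w.im) + w.im^2 * (‖u‖:ℂ)^2) * Complex.I_sq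

theorem aux_shift (n m : ℕ) (hm : 1 ≤ m) (x η u : EuclideanSpace ℝ (Fin n)) (z : ℂ) (hz : 0 < z.re) (hzi : |z.im| ≤ z.re) :
    ∫ ξ : EuclideanSpace ℝ (Fin n), Complex.exp (Complex.I * ((inner ℝ x ξ : ℝ):ℂ)) * Complex.exp (-z * (Qf ξ η)^m) =
    ∫ ξ : EuclideanSpace ℝ (Fin n), Complex.exp (Complex.I * ((inner ℝ x ξ : ℝ):ℂ) - ((inner ℝ x u : ℝ):ℂ)) * Complex.exp (-z * (Qf ξ (η+u))^m) := by
  obtain ⟨C1, hC1, D, hD, hK⟩ := aux_QK m hm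
  have hb := aux_bpos m hm
  set f : ℂ → EuclideanSpace ℝ (Fin n) → ℂ := fun w ξ => 
    Complex.exp (Complex.I * (((inner ℝ x ξ : ℝ):ℂ) + w * ((inner ℝ x u : ℝ):ℂ))) * 
    Complex.exp (-z * (Qf ξ η + 2 * w * (((inner ℝ u ξ : ℝ):ℂ) + Complex.I * ((inner ℝ u η : ℝ):ℂ)) + w^2 * ((‖u‖^2:ℝ):ℂ))^m) with hf
  have hfcont : ∀ w, Continuous (f w) := by
    intro w
    have := aux_Qcont η
    simp only [hf]
    fun_prop
  have hfb : ∀ w ξ, ‖f w ξ‖ = Real.exp (-(w.im * inner ℝ x u)) * ‖Complex.exp (-z * (Qf (ξ + w.re • u) (η + w.im • u))^m)‖ := by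
    intro w ξ
    simp only [hf]
    rw [aux_Qshift, norm_mul, Complex.norm_exp (Complex.I * _)]
    congr 2
    simp
  have hfs : ∀ w ξ (s : ℝ), f (w + s * 1) ξ = f w (ξ + s • u) := by
    intro w ξ s
    simp only [hf]
    rw [aux_Qshift, aux_Qshift]
    congr 2
    · simp only [inner_add_right, real_inner_smul_right]; push_cast; ring
    · simp [add_smul, add_assoc, add_comm]
  have hdiff : ∀ w0, DifferentiableAt ℂ (fun w => ∫ ξ, f w ξ) w0 := by
    intro w0
    set M := ‖w0‖ + 1 with hM
    have hM0 : 0 ≤ M := by positivity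
    obtain ⟨L, hL, hL1, hL2⟩ := aux_Lexists m hm z.re hz (‖η‖ + M * ‖u‖) (by positivity)
    refine aux_param f w0 1 one_pos (fun ξ => Real.exp (M * |inner ℝ x u|) * (C1 * Real.exp (z.re * ((bConst m + D * 1) * (‖η‖ + M * ‖u‖)^(2*m))) *
      (Real.exp ((4*L)⁻¹ * (M * ‖u‖)) * Real.exp (-((4*L)⁻¹ * ‖ξ‖))))) ?_ ?_ ?_ ?_
    · exact (((aux_exp_integrable _ (by positivity)).const_mul _).const_mul _).const_mul _
    · exact fun w _ => (hfcont w).aestronglyMeasurable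
    · refine Filter.Eventually.of_forall fun ξ => ?_
      simp only [hf]
      fun_prop
    · refine Filter.Eventually.of_forall fun ξ w hw => ?_
      have hwM : ‖w‖ ≤ M := by
        rw [Metric.mem_ball, dist_eq_norm] at hw
        have := norm_le_norm_add_norm_sub' w w0
        linarith
      have hre := (Complex.abs_re_le_norm w).trans hwM
      have him := (Complex.abs_im_le_norm w).trans hwM
      have hη : ‖η + w.im • u‖ ≤ ‖η‖ + M * ‖u‖ := by
        refine (norm_add_le _ _).trans ?_
        rw [norm_smul]
        gcongr
        exact him
      rw [hfb]
      refine mul_le_mul ?_ ?_ (norm_nonneg _) (Real.exp_pos _).le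
      · rw [Real.exp_le_exp]
        refine (neg_le_abs _).trans ?_
        rw [abs_mul]
        gcongr
      · refine (hK n _ _ 1 z L zero_le_one le_rfl hz (by simpa using hzi) hL (hη.trans hL1) hL2).trans ?_
        rw [← Real.exp_add ((4*L)⁻¹ * (M * ‖u‖))]
        gcongr
        have h1 : ‖ξ‖ ≤ ‖ξ + w.re • u‖ + M * ‖u‖ := by
          have h2 : ‖ξ‖ ≤ ‖ξ + w.re • u‖ + ‖w.re • u‖ := by
            have := norm_sub_le (ξ + w.re • u) (w.re • u)
            simpa using this
          refine h2.trans ?_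
          rw [norm_smul]
          gcongr
          exact hre
        have : (4*L)⁻¹ * ‖ξ‖ ≤ (4*L)⁻¹ * (‖ξ + w.re • u‖ + M * ‖u‖) := by gcongr
        linarith
  have hd0 : ∀ w0, deriv (fun w => ∫ ξ, f w ξ) w0 = 0 := by
    intro w0
    refine aux_deriv_zero _ w0 1 one_ne_zero (hdiff w0) (Filter.Eventually.of_forall fun s => ?_)
    simp only [hfs]
    exact integral_add_right_eq_self (f w0) (s • u)
  have := aux_const_seg (fun w => ∫ ξ, f w ξ) 0 Complex.I (fun s _ => hdiff _) (fun s _ => hd0 _)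
  simp only [zero_add] at this
  have e0 : ∀ ξ, f 0 ξ = Complex.exp (Complex.I * ((inner ℝ x ξ : ℝ):ℂ)) * Complex.exp (-z * (Qf ξ η)^m) := by
    intro ξ; simp [hf]
  have e1 : ∀ ξ, f Complex.I ξ = Complex.exp (Complex.I * ((inner ℝ x ξ : ℝ):ℂ) - ((inner ℝ x u : ℝ):ℂ)) * Complex.exp (-z * (Qf ξ (η+u))^m) := by
    intro ξ
    simp only [hf]
    rw [aux_Qshift]
    congr 2
    · linear_combination ((inner ℝ x u : ℝ):ℂ) * Complex.I_sq
    · simp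
  simp only [e0, e1] at this
  exact this.symm

theorem aux_pow1 (k : ℕ) (x : ℝ) (h0 : 0 ≤ x) (h1 : x ≤ 1) : (1+x)^k ≤ 1 + (2^k-1)*x := by
  induction k with
  | zero => simp
  | succ k ih =>
    have h2 : (1:ℝ) ≤ 2^k := one_le_pow₀ (by norm_num)
    have h3 : (2:ℝ)^(k+1) = 2*2^k := by ring
    rw [pow_succ, h3]
    have : (1+x)^k*(1+x) ≤ (1 + (2^k-1)*x)*(1+x) := by gcongr
    nlinarith [mul_nonneg (mul_nonneg (sub_nonneg.2 h2) h0) (sub_nonneg.2 h1)]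

theorem aux_expo (m : ℕ) (b D : ℝ) (hb : 0 < b) (hD : 0 < D) : ∃ κ > (0:ℝ), κ ≤ 1/4 ∧ ∃ C2 : ℝ, ∀ ε, 0 < ε → ε < 1 →
    ∀ t q lam : ℝ, 0 < t → 0 < q → 0 < lam → t * q^(2*m) = 1 → 
    t * ((b + D * (2*κ*ε)) * (lam + κ*ε*(lam+q))^(2*m)) ≤ t * ((b+ε/4) * lam^(2*m)) + C2 := by
  set E : ℝ := 2^(2*m) - 1 with hE
  have hE0 : 0 ≤ E := by
    have : (1:ℝ) ≤ 2^(2*m) := one_le_pow₀ (by norm_num)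
    linarith
  set S : ℝ := 1 + D + b*E + D*E with hS
  have hS1 : 1 ≤ S := by
    have : 0 ≤ b*E := by positivity
    have : 0 ≤ D*E := by positivity
    linarith
  refine ⟨1/(8*S), by positivity, ?_, (b+D)*2^(2*m), ?_⟩
  · rw [div_le_div_iff₀ (by positivity) (by norm_num)]; linarith
  intro ε hε hε1 t q lam ht hq hlam htq
  set κ := 1/(8*S) with hκ
  have hκ0 : 0 < κ := by positivity
  have hκS : κ * S = 1/8 := by rw [hκ]; field_simp
  have hκ8 : κ ≤ 1/8 := by nlinarith
  have hx0 : 0 ≤ 2*κ*ε := by positivity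
  have hx1 : 2*κ*ε ≤ 1 := by nlinarith
  rcases le_total q lam with h | h
  · have h1 : lam + κ*ε*(lam+q) ≤ (1+2*κ*ε)*lam := by
      have : κ*ε*q ≤ κ*ε*lam := by gcongr
      linarith
    have h2 : (lam + κ*ε*(lam+q))^(2*m) ≤ (1 + E*(2*κ*ε)) * lam^(2*m) := by
      calc _ ≤ ((1+2*κ*ε)*lam)^(2*m) := by gcongr
        _ = (1+2*κ*ε)^(2*m) * lam^(2*m) := mul_pow _ _ _
        _ ≤ _ := by
          gcongr
          exact aux_pow1 _ _ hx0 hx1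
    have h3 : (b + D*(2*κ*ε))*(1+E*(2*κ*ε)) ≤ b + ε/4 := by
      have h4 : D*E*(2*κ*ε)*(2*κ*ε) ≤ D*E*(2*κ*ε)*1 := by gcongr
      have h5 : (2*κ*ε)*S = ε/4 := by
        calc _ = 2*ε*(κ*S) := by ring
          _ = _ := by rw [hκS]; ring
      have : (2*κ*ε)*S = (2*κ*ε) + D*(2*κ*ε) + b*E*(2*κ*ε) + D*E*(2*κ*ε) := by rw [hS]; ring
      nlinarith
    have hC : 0 ≤ (b+D)*2^(2*m) := by positivity
    have : t * ((b + D * (2*κ*ε)) * (lam + κ*ε*(lam+q))^(2*m)) ≤ t * ((b+ε/4) * lam^(2*m)) := by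
      calc _ ≤ t * ((b + D * (2*κ*ε)) * ((1 + E*(2*κ*ε)) * lam^(2*m))) := by gcongr
        _ = t * (((b + D * (2*κ*ε)) * (1 + E*(2*κ*ε))) * lam^(2*m)) := by ring
        _ ≤ _ := by gcongr
    linarith
  · have h1 : lam + κ*ε*(lam+q) ≤ 2*q := by
      have h2 : κ*ε*(lam+q) ≤ κ*ε*(q+q) := by gcongr
      nlinarith
    have h0 : 0 ≤ t * ((b+ε/4) * lam^(2*m)) := by positivity
    calc _ ≤ t * ((b + D * 1) * (2*q)^(2*m)) := by gcongr
      _ = (b+D)*2^(2*m) * (t * q^(2*m)) := by rw [mul_pow]; ring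
      _ ≤ _ := by rw [htq]; linarith

noncomputable def Gz (n m : ℕ) (a : EuclideanSpace ℝ (Fin n)) (lam : ℝ) (z : ℂ)
    (x : EuclideanSpace ℝ (Fin n)) : ℂ :=
  ∫ ξ : EuclideanSpace ℝ (Fin n),
      Complex.exp (Complex.I * ((inner ℝ x ξ : ℝ) : ℂ)) * Complex.exp (-z * Psymb n m a lam ξ)

theorem aux_GB (n m : ℕ) (hm : 1 ≤ m) : ∃ κ > (0:ℝ), κ ≤ 1/4 ∧ ∃ C > (0:ℝ), ∀ ε, 0 < ε → ε < 1 →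
    ∀ lam : ℝ, 0 < lam → ∀ a : EuclideanSpace ℝ (Fin n), ‖a‖ = 1 → ∀ (z : ℂ) (x : EuclideanSpace ℝ (Fin n)),
    0 < z.re → |z.im| ≤ 2*κ*ε*z.re → 
    ‖Gz n m a lam z x‖ ≤ C * Real.exp (z.re * ((bConst m + ε/4) * lam^(2*m))) * ((lam + z.re^(-(1/(2*m:ℝ))))^n * 
      Real.exp (-((κ*ε*(lam + z.re^(-(1/(2*m:ℝ))))) * ‖x‖))) := by
  obtain ⟨C1, hC1, D, hD, hK⟩ := aux_QK m hm
  have hb := aux_bpos m hm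
  obtain ⟨κ, hκ, hκ4, C2, hexpo⟩ := aux_expo m (bConst m) D hb hD
  set I0 := ∫ x : EuclideanSpace ℝ (Fin n), Real.exp (-‖x‖) with hI0
  have hI0p : 0 ≤ I0 := integral_nonneg fun _ => (Real.exp_pos _).le
  refine ⟨κ, hκ, hκ4, C1 * Real.exp C2 * 4^n * (I0+1), by positivity, ?_⟩
  intro ε hε hε1 lam hlam a ha z x hz hzi
  set q := z.re^(-(1/(2*m:ℝ))) with hq
  have hq0 : 0 < q := Real.rpow_pos_of_pos hz _
  have hmr : (0:ℝ) < m := by exact_mod_cast hm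
  have htq : z.re * q^(2*m) = 1 := by
    rw [hq, ← Real.rpow_natCast, ← Real.rpow_mul hz.le]
    have : -(1/(2*m:ℝ)) * ((2*m:ℕ):ℝ) = -1 := by push_cast; field_simp
    rw [this, Real.rpow_neg_one, mul_inv_cancel₀ hz.ne']
  set L := lam + q with hL
  have hL0 : 0 < L := by positivity
  set τ := κ*ε*L with hτ
  have hτ0 : 0 < τ := by positivity
  have hκε : 2*κ*ε ≤ 1 := by nlinarith
  have hκε0 : 0 ≤ 2*κ*ε := by positivity
  have hτL : τ ≤ L := by
    rw [hτ]
    nlinarith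
  set u : EuclideanSpace ℝ (Fin n) := (τ/‖x‖) • x with hu
  have hun : ‖u‖ ≤ τ := by
    rw [hu, norm_smul, norm_div, norm_norm, Real.norm_of_nonneg hτ0.le]
    by_cases h : ‖x‖ = 0
    · rw [h]; simpa using hτ0.le
    · exact (div_mul_cancel₀ τ h).le
  have hxu : inner ℝ x u = τ * ‖x‖ := by
    rw [hu, real_inner_smul_right, real_inner_self_eq_norm_sq]
    by_cases h : ‖x‖ = 0
    · simp [h]
    · field_simp
  have hη : ‖lam • a + u‖ ≤ lam + τ := by
    refine (norm_add_le _ _).trans ?_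
    rw [norm_smul, ha, mul_one, Real.norm_of_nonneg hlam.le]
    linarith
  have hLm : 1 ≤ z.re * L^(2*m) := by
    rw [← htq]
    gcongr
    linarith
  unfold Gz
  simp only [aux_Psymb n m a ha]
  rw [aux_shift n m hm x (lam • a) u z hz (hzi.trans (by nlinarith))]
  have hbound : ∀ ξ : EuclideanSpace ℝ (Fin n), ‖Complex.exp (Complex.I * ((inner ℝ x ξ : ℝ):ℂ) - ((inner ℝ x u : ℝ):ℂ)) * Complex.exp (-z * (Qf ξ (lam • a+u))^m)‖
      ≤ (Real.exp (-(τ * ‖x‖)) * (C1 * Real.exp (z.re * ((bConst m + ε/4) * lam^(2*m)) + C2))) * Real.exp (-((4*L)⁻¹ * ‖ξ‖)) := by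
    intro ξ
    rw [norm_mul, Complex.norm_exp (_ - _)]
    have e1 : (Complex.I * ((inner ℝ x ξ : ℝ):ℂ) - ((inner ℝ x u : ℝ):ℂ)).re = -(τ*‖x‖) := by
      rw [hxu]; simp
    rw [e1, mul_assoc (Real.exp (-(τ*‖x‖)))]
    gcongr
    refine (hK n ξ _ (2*κ*ε) z L hκε0 hκε hz hzi hL0 (hη.trans (by linarith)) hLm).trans ?_
    gcongr
    refine le_trans ?_ (hexpo ε hε hε1 z.re q lam hz hq0 hlam htq)
    gcongr
  refine (norm_integral_le_of_norm_le ((aux_exp_integrable _ (by positivity)).const_mul _) (Filter.Eventually.of_forall hbound)).trans ?_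
  rw [integral_const_mul, aux_exp_integral _ (by positivity), ← hI0, inv_inv, mul_pow, Real.exp_add]
  have : I0 ≤ I0 + 1 := by linarith
  calc _ = C1 * Real.exp C2 * 4^n * I0 * Real.exp (z.re * ((bConst m + ε/4) * lam^(2*m))) * (L^n * Real.exp (-(τ * ‖x‖))) := by ring
    _ ≤ _ := by gcongr

theorem aux_Gdiff (n m : ℕ) (hm : 1 ≤ m) (a : EuclideanSpace ℝ (Fin n)) (ha : ‖a‖ = 1) (lam : ℝ) 
    (x : EuclideanSpace ℝ (Fin n)) (z0 : ℂ) (hz : 0 < z0.re) (hzi : |z0.im| < z0.re) : 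
    DifferentiableAt ℂ (fun z => Gz n m a lam z x) z0 := by
  obtain ⟨C1, hC1, D, hD, hK⟩ := aux_QK m hm
  have hb := aux_bpos m hm
  have hopen : IsOpen {z : ℂ | z0.re/2 < z.re ∧ z.re < 2*z0.re ∧ |z.im| < z.re} := by
    have c1 := Complex.continuous_re
    have c2 := Complex.continuous_im
    exact (isOpen_lt continuous_const c1).inter ((isOpen_lt c1 continuous_const).inter (isOpen_lt c2.abs c1))
  obtain ⟨R, hR, hball⟩ := Metric.isOpen_iff.1 hopen z0 ⟨by linarith, by linarith, hzi⟩
  obtain ⟨L, hL, hL1, hL2⟩ := aux_Lexists m hm (z0.re/2) (by positivity) ‖lam • a‖ (norm_nonneg _)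
  unfold Gz
  simp only [aux_Psymb n m a ha]
  refine aux_param _ z0 R hR (fun ξ => (C1 * Real.exp (2 * z0.re * ((bConst m + D * 1) * ‖lam • a‖^(2*m)))) * Real.exp (-((4*L)⁻¹ * ‖ξ‖))) 
    ((aux_exp_integrable _ (by positivity)).const_mul _) ?_ ?_ ?_
  · intro w _
    have := aux_Qcont (lam • a)
    exact (by fun_prop : Continuous _).aestronglyMeasurable
  · refine Filter.Eventually.of_forall fun ξ => ?_
    fun_prop
  · refine Filter.Eventually.of_forall fun ξ z hzb => ?_
    obtain ⟨h1, h2, h3⟩ := hball hzb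
    have hzre : 0 < z.re := by linarith
    rw [norm_mul, Complex.norm_exp_I_mul_ofReal, one_mul]
    refine (hK n ξ _ 1 z L zero_le_one le_rfl hzre (by linarith) hL hL1 (hL2.trans (by gcongr))).trans ?_
    gcongr

/-- rotation of the contour in `t` -/
theorem aux_rot (g : ℂ → ℂ) (μ : ℂ) (θ B K : ℝ) (hθ : 0 < θ) (hθ1 : θ ≤ 1)
    (hg : ∀ z : ℂ, 0 < z.re → |z.im| < θ * z.re → DifferentiableAt ℂ g z)
    (hgb : ∀ z : ℂ, 0 < z.re → |z.im| < θ * z.re → ‖g z‖ ≤ K * Real.exp (z.re * B))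
    (Y : ℝ) (hY : |Y| < θ) (hgap : ∀ s ∈ Set.Icc (0:ℝ) 1, B < μ.re - s * Y * μ.im) :
    ∫ t in Set.Ioi (0:ℝ), Complex.exp (-μ * (t:ℂ)) * g t =
    ∫ t in Set.Ioi (0:ℝ), (1 + Y * Complex.I) * Complex.exp (-μ * ((1 + Y * Complex.I) * (t:ℂ))) * g ((1 + Y * Complex.I) * t) := by
  have hK : 0 ≤ K := by
    have := (norm_nonneg _).trans (hgb 1 (by simp) (by simpa using hθ))
    exact nonneg_of_mul_nonneg_left this (Real.exp_pos _)
  set f : ℂ → ℝ → ℂ := fun p t => p * Complex.exp (-μ * (p * (t:ℂ))) * g (p * t) with hf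
  have hre : ∀ (p : ℂ) (t : ℝ), (p * t).re = p.re * t := by intro p t; simp
  have him : ∀ (p : ℂ) (t : ℝ), (p * t).im = p.im * t := by intro p t; simp
  have hsec : ∀ (p : ℂ) (t : ℝ), 0 < t → 0 < p.re → |p.im| < θ * p.re → 0 < (p*t).re ∧ |(p*t).im| < θ * (p*t).re := by
    intro p t ht h1 h2
    rw [hre, him, abs_mul, abs_of_pos ht, ← mul_assoc]
    exact ⟨by positivity, by gcongr⟩
  have hdiff : ∀ p : ℂ, 0 < p.re → |p.im| < θ * p.re → B * p.re < (μ * p).re → 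
      DifferentiableAt ℂ (fun p => ∫ t in Set.Ioi (0:ℝ), f p t) p := by
    intro p0 h1 h2 h3
    set γ := ((μ*p0).re - B * p0.re)/2 with hγ
    have hγ0 : 0 < γ := by rw [hγ]; linarith
    have hopen : IsOpen {p : ℂ | 0 < p.re ∧ |p.im| < θ * p.re ∧ γ < (μ*p).re - B * p.re} := by
      have c1 := Complex.continuous_re
      have c2 := Complex.continuous_im
      have c3 : Continuous fun p : ℂ => (μ*p).re := c1.comp (continuous_const.mul continuous_id)
      exact (isOpen_lt continuous_const c1).inter ((isOpen_lt c2.abs (continuous_const.mul c1)).inter 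
        (isOpen_lt continuous_const (c3.sub (continuous_const.mul c1))))
    obtain ⟨R, hR, hball⟩ := Metric.isOpen_iff.1 hopen p0 ⟨h1, h2, by rw [hγ]; linarith⟩
    refine aux_param f p0 R hR (fun t => ((‖p0‖+R) * K) * Real.exp (-γ * t)) ?_ ?_ ?_ ?_
    · exact (integrableOn_exp_mul_Ioi (by linarith) 0).const_mul _
    · intro p hp
      obtain ⟨q1, q2, q3⟩ := hball hp
      refine ContinuousOn.aestronglyMeasurable ?_ measurableSet_Ioi
      intro t ht
      obtain ⟨r1, r2⟩ := hsec p t ht q1 q2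
      have hc : ContinuousAt (fun t : ℝ => g (p * t)) t := 
        ContinuousAt.comp (f := fun t : ℝ => p * (t:ℂ)) (g := g) (hg _ r1 r2).continuousAt (by fun_prop)
      refine ContinuousAt.continuousWithinAt ?_
      exact ContinuousAt.mul (Continuous.continuousAt (by fun_prop)) hc
    · refine (ae_restrict_iff' measurableSet_Ioi).2 (Filter.Eventually.of_forall fun t ht p hp => ?_)
      obtain ⟨q1, q2, q3⟩ := hball hp
      obtain ⟨r1, r2⟩ := hsec p t ht q1 q2
      have hc : DifferentiableAt ℂ (fun p : ℂ => g (p * t)) p := 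
        DifferentiableAt.comp (f := fun p : ℂ => p * (t:ℂ)) (g := g) p (hg _ r1 r2) (by fun_prop)
      refine DifferentiableAt.differentiableWithinAt ?_
      simp only [hf]
      fun_prop
    · refine (ae_restrict_iff' measurableSet_Ioi).2 (Filter.Eventually.of_forall fun t ht p hp => ?_)
      obtain ⟨q1, q2, q3⟩ := hball hp
      obtain ⟨r1, r2⟩ := hsec p t ht q1 q2
      have ht0 : 0 < t := ht
      simp only [hf]
      rw [norm_mul, norm_mul, Complex.norm_exp]
      have e1 : (-μ * (p * t)).re = -((μ*p).re * t) := by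
        rw [neg_mul, ← mul_assoc, Complex.neg_re, hre]
      rw [e1]
      have hp' : ‖p‖ ≤ ‖p0‖ + R := by
        rw [Metric.mem_ball, dist_eq_norm] at hp
        have := norm_le_norm_add_norm_sub' p p0
        linarith
      calc ‖p‖ * Real.exp (-((μ*p).re * t)) * ‖g (p*t)‖ 
          ≤ (‖p0‖+R) * Real.exp (-((μ*p).re * t)) * (K * Real.exp ((p*t).re * B)) := by
            gcongr
            exact hgb _ r1 r2
        _ = (‖p0‖+R) * K * Real.exp (-(((μ*p).re - B * p.re) * t)) := by
            rw [hre]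
            have : -(((μ*p).re - B * p.re) * t) = -((μ*p).re * t) + p.re * t * B := by ring
            rw [this, Real.exp_add]; ring
        _ ≤ _ := by
            gcongr
            nlinarith
  have hd0 : ∀ p : ℂ, 0 < p.re → |p.im| < θ * p.re → B * p.re < (μ * p).re → 
      deriv (fun p => ∫ t in Set.Ioi (0:ℝ), f p t) p = 0 := by
    intro p h1 h2 h3
    have hp : p ≠ 0 := by rintro rfl; simp at h1
    refine aux_deriv_zero _ p p hp (hdiff p h1 h2 h3) ?_
    filter_upwards [lt_mem_nhds (show (-1:ℝ) < 0 by norm_num)] with s hs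
    have hs' : 0 < 1 + s := by linarith
    have h4 := integral_comp_mul_left_Ioi (fun t => f p t) 0 hs'
    have h5 : ∀ t, f (p + s * p) t = ((1+s : ℝ):ℂ) * f p ((1+s)*t) := by
      intro t
      simp only [hf]
      have e : (p + s * p) * (t:ℂ) = p * (((1+s)*t : ℝ):ℂ) := by push_cast; ring
      rw [e]; push_cast; ring
    simp only [h5]
    rw [integral_const_mul, h4, mul_zero, Complex.real_smul, ← mul_assoc, ← Complex.ofReal_mul, mul_inv_cancel₀ hs'.ne',
      Complex.ofReal_one, one_mul]
  have hcond : ∀ s ∈ Set.Icc (0:ℝ) 1, 0 < (1 + s * (Y * Complex.I)).re ∧ |(1 + s * (Y * Complex.I)).im| < θ * (1 + s * (Y * Complex.I)).re ∧ 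
      B * (1 + s * (Y * Complex.I)).re < (μ * (1 + s * (Y * Complex.I))).re := by
    intro s hs
    have a1 : (1 + s * (Y * Complex.I)).re = 1 := by simp
    have a2 : (1 + s * (Y * Complex.I)).im = s * Y := by simp
    rw [Complex.mul_re, a1, a2]
    refine ⟨one_pos, ?_, ?_⟩
    · rw [abs_mul, abs_of_nonneg hs.1]
      nlinarith [hs.2, abs_nonneg Y]
    · have := hgap s hs
      linarith
  have := aux_const_seg (fun p => ∫ t in Set.Ioi (0:ℝ), f p t) 1 (Y * Complex.I) 
    (fun s hs => hdiff _ (hcond s hs).1 (hcond s hs).2.1 (hcond s hs).2.2)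
    (fun s hs => hd0 _ (hcond s hs).1 (hcond s hs).2.1 (hcond s hs).2.2)
  simp only [hf, one_mul] at this
  exact this.symm

theorem aux_fubini (n : ℕ) (L : ℝ → ℝ) (hLm : Measurable L) (hL : ∀ t, 0 < t → 0 < L t) (γ k A : ℝ) (hγ : 0 < γ) (hk : 0 < k) (hA : 0 ≤ A)
    (F : EuclideanSpace ℝ (Fin n) → ℂ) 
    (hF : ∀ᵐ x, Integrable (fun t => A * Real.exp (-γ * t) * (L t ^ n * Real.exp (-((k * L t) * ‖x‖)))) (volume.restrict (Set.Ioi (0:ℝ))) →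
      ‖F x‖ ≤ ∫ t in Set.Ioi (0:ℝ), A * Real.exp (-γ * t) * (L t ^ n * Real.exp (-((k * L t) * ‖x‖)))) :
    ∫ x, ‖F x‖ ≤ A * (k⁻¹)^n * (∫ x : EuclideanSpace ℝ (Fin n), Real.exp (-‖x‖)) * γ⁻¹ := by
  set Φ : ℝ → EuclideanSpace ℝ (Fin n) → ℝ := fun t x => A * Real.exp (-γ * t) * (L t ^ n * Real.exp (-((k * L t) * ‖x‖))) with hΦ
  set I0 := ∫ x : EuclideanSpace ℝ (Fin n), Real.exp (-‖x‖) with hI0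
  have hΦ0 : ∀ t ∈ Set.Ioi (0:ℝ), ∀ x, 0 ≤ Φ t x := by
    intro t ht x
    have := hL t ht
    simp only [hΦ]
    positivity
  have hIntg : ∀ t ∈ Set.Ioi (0:ℝ), ∫ x, Φ t x = (A * (k⁻¹)^n * I0) * Real.exp (-γ * t) := by
    intro t ht
    have := hL t ht
    simp only [hΦ]
    rw [integral_const_mul, integral_const_mul, aux_exp_integral _ (by positivity), ← hI0, mul_inv, mul_pow, inv_pow (L t)]
    field_simp
  have hmeas : Measurable (Function.uncurry Φ) := by
    simp only [hΦ, Function.uncurry_def]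
    fun_prop
  have hexp := (integrableOn_exp_mul_Ioi (show -γ < 0 by linarith) 0)
  have hI : Integrable (Function.uncurry Φ) ((volume.restrict (Set.Ioi (0:ℝ))).prod volume) := by
    rw [integrable_prod_iff hmeas.aestronglyMeasurable]
    constructor
    · refine (ae_restrict_iff' measurableSet_Ioi).2 (Filter.Eventually.of_forall fun t ht => ?_)
      have := hL t ht
      simp only [hΦ, Function.uncurry_def]
      exact ((aux_exp_integrable _ (by positivity)).const_mul _).const_mul _
    · refine (hexp.const_mul (A * (k⁻¹)^n * I0)).congr ?_
      refine (ae_restrict_iff' measurableSet_Ioi).2 (Filter.Eventually.of_forall fun t ht => ?_)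
      simp only [Function.uncurry_apply_pair]
      rw [← hIntg t ht]
      refine integral_congr_ae (Filter.Eventually.of_forall fun x => ?_)
      exact (Real.norm_of_nonneg (hΦ0 t ht x)).symm
  have h1 : ∫ x, ‖F x‖ ≤ ∫ x, ∫ t in Set.Ioi (0:ℝ), Φ t x := by
    refine integral_mono_of_nonneg (Filter.Eventually.of_forall fun _ => norm_nonneg _) hI.integral_prod_right ?_
    filter_upwards [hF, hI.prod_left_ae] with x h2 h3 using h2 h3
  refine h1.trans (le_of_eq ?_)
  rw [← integral_integral_swap hI, setIntegral_congr_fun measurableSet_Ioi hIntg, integral_const_mul, 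
    integral_exp_mul_Ioi (by linarith) 0]
  simp

/-- there exist `c ∈ (0,1)` and `C > 0`, depending only on `n` and `m`, such that
for all `ε ∈ (0,c)`, all `λ > 0`, all unit vectors `a`, and all complex `μ` with
`Re μ > (b_m + ε/2) λ^{2m}`, one has
`∫_{ℝⁿ} |h(x,μ)| dx ≤ C ε^{-(n+1)} / |μ - (b_m + ε/2) λ^{2m}|`. -/
theorem resolvent_kernel_L1_bound (n m : ℕ) (hn : 1 ≤ n) (hm : 1 ≤ m) :
    ∃ c ∈ Set.Ioo (0 : ℝ) 1, ∃ C > (0 : ℝ), ∀ ε ∈ Set.Ioo (0 : ℝ) c,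
      ∀ lam : ℝ, 0 < lam → ∀ a : EuclideanSpace ℝ (Fin n), ‖a‖ = 1 →
      ∀ μ : ℂ, (bConst m + ε / 2) * lam ^ (2 * m) < μ.re →
      ∫ x : EuclideanSpace ℝ (Fin n), ‖resKer n m a lam x μ‖ ≤
        C * ε ^ (-(n + 1 : ℤ)) / ‖μ - (((bConst m + ε / 2) * lam ^ (2 * m) : ℝ) : ℂ)‖ := by
  obtain ⟨κ, hκ, hκ4, C, hC, hGB⟩ := aux_GB n m hm
  have hb := aux_bpos m hm
  set I0 := ∫ x : EuclideanSpace ℝ (Fin n), Real.exp (-‖x‖) with hI0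
  have hI0p : 0 ≤ I0 := integral_nonneg fun _ => (Real.exp_pos _).le
  set c0 : ℝ := (2 * Real.pi) ^ (-(n : ℝ)) with hc0
  have hc0p : 0 < c0 := Real.rpow_pos_of_pos (by positivity) _
  refine ⟨1/2, ⟨by norm_num, by norm_num⟩, c0 * (2 * C) * (κ⁻¹)^n * (I0+1) * κ⁻¹, by positivity, ?_⟩
  intro ε hε lam hlam a ha μ hμ
  have hε0 : 0 < ε := hε.1
  have hε1 : ε < 1 := by linarith [hε.2]
  have hκε : 0 < κ * ε := by positivity
  have hκε1 : κ * ε ≤ 1/4 := by nlinarith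
  have hlm : 0 < lam^(2*m) := by positivity
  set B := (bConst m + ε/4) * lam^(2*m) with hB
  set ω := (bConst m + ε/2) * lam^(2*m) with hω
  have hBω : B < ω := by
    rw [hB, hω]
    gcongr
    linarith
  obtain ⟨Y, hY, hYμ⟩ : ∃ Y : ℝ, |Y| = κ * ε ∧ -(Y * μ.im) = κ * ε * |μ.im| := by
    rcases le_total 0 μ.im with h | h
    · exact ⟨-(κ*ε), by rw [abs_neg, abs_of_pos hκε], by rw [abs_of_nonneg h]; ring⟩
    · exact ⟨κ*ε, abs_of_pos hκε, by rw [abs_of_nonpos h]; ring⟩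
  set γ := μ.re + κ * ε * |μ.im| - B with hγ
  have hνn : ‖μ - ((ω:ℝ):ℂ)‖ ≤ (μ.re - ω) + |μ.im| := by
    have := Complex.norm_le_abs_re_add_abs_im (μ - ((ω:ℝ):ℂ))
    rw [Complex.sub_re, Complex.sub_im, Complex.ofReal_re, Complex.ofReal_im, sub_zero, abs_of_pos (by linarith : 0 < μ.re - ω)] at this
    exact this
  have hνpos : 0 < ‖μ - ((ω:ℝ):ℂ)‖ := by
    rw [norm_pos_iff]
    intro h
    have := congrArg Complex.re h
    simp at this
    linarith
  have hγν : κ * ε * ‖μ - ((ω:ℝ):ℂ)‖ ≤ γ := by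
    have h1 : κ * ε * ‖μ - ((ω:ℝ):ℂ)‖ ≤ κ * ε * ((μ.re - ω) + |μ.im|) := by gcongr
    have h2 : κ * ε * (μ.re - ω) ≤ 1 * (μ.re - ω) := by
      apply mul_le_mul_of_nonneg_right _ (by linarith)
      linarith
    linarith
  have hγ0 : 0 < γ := lt_of_lt_of_le (by positivity) hγν
  set L : ℝ → ℝ := fun t => lam + t^(-(1/(2*m:ℝ))) with hL
  have hL0 : ∀ t, 0 < t → 0 < L t := fun t ht => by
    have := Real.rpow_pos_of_pos ht (-(1/(2*m:ℝ)))
    simp only [hL]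
    positivity
  haveI : Nonempty (Fin n) := ⟨⟨0, hn⟩⟩
  have hmain := aux_fubini n L (by simp only [hL]; fun_prop) hL0 γ (κ*ε) (c0 * (2*C)) hγ0 hκε (by positivity)
    (fun x => resKer n m a lam x μ) (by
      filter_upwards [Measure.ae_ne volume (0 : EuclideanSpace ℝ (Fin n))] with x hx hIntg
      have hxn : 0 < ‖x‖ := norm_pos_iff.2 hx
      have hrot := aux_rot (fun z => Gz n m a lam z x) μ (2*κ*ε) B (C * ((n.factorial:ℝ) / (κ*ε*‖x‖)^n)) (by positivity) (by linarith)
        (fun z h1 h2 => aux_Gdiff n m hm a ha lam x z h1 (by nlinarith))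
        (fun z h1 h2 => by
          refine (hGB ε hε0 hε1 lam hlam a ha z x h1 h2.le).trans ?_
          rw [mul_assoc, mul_assoc C, mul_comm (_ / _)]
          gcongr
          have hLz := hL0 z.re h1
          have h3 := Real.pow_div_factorial_le_exp (κ*ε*L z.re*‖x‖) (by positivity) n
          change L z.re ^ n * Real.exp (-(κ*ε*L z.re*‖x‖)) ≤ _
          rw [Real.exp_neg, ← div_eq_mul_inv, div_le_div_iff₀ (Real.exp_pos _) (by positivity), ← mul_pow]
          rw [div_le_iff₀ (by positivity)] at h3
          calc _ = (κ*ε*L z.re*‖x‖)^n := by ring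
            _ ≤ _ := h3
            _ = _ := by ring)
        Y (by rw [hY]; linarith) (by
          intro s hs
          have h1 : s * Y * μ.im = -(s * (κ*ε*|μ.im|)) := by rw [← hYμ]; ring
          rw [h1]
          have h2 : 0 ≤ s * (κ*ε*|μ.im|) := mul_nonneg hs.1 (by positivity)
          linarith)
      have hres : resKer n m a lam x μ = (c0:ℂ) * ∫ t in Set.Ioi (0:ℝ), Complex.exp (-μ * (t:ℂ)) * Gz n m a lam t x := by
        unfold resKer Gker Gz
        rw [← integral_const_mul]
        congr 1
        funext t
        rw [Complex.real_smul]
        ring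
      rw [hres, hrot, ← integral_const_mul]
      refine norm_integral_le_of_norm_le hIntg ?_
      refine (ae_restrict_iff' measurableSet_Ioi).2 (Filter.Eventually.of_forall fun t ht => ?_)
      have ht0 : 0 < t := ht
      have e1 : ((1 + Y * Complex.I) * (t:ℂ)).re = t := by simp
      have e2 : ((1 + Y * Complex.I) * (t:ℂ)).im = Y * t := by simp
      have h1 := hGB ε hε0 hε1 lam hlam a ha ((1 + Y * Complex.I) * (t:ℂ)) x (by rw [e1]; exact ht) (by
        rw [e1, e2, abs_mul, abs_of_pos ht0, hY]
        nlinarith [mul_pos hκε ht0])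
      rw [e1] at h1
      have e3 : (-μ * ((1 + Y * Complex.I) * (t:ℂ))).re = -((γ + B) * t) := by
        rw [neg_mul, Complex.neg_re, Complex.mul_re, e1, e2, hγ]
        linear_combination t * hYμ * (-1)
      have e4 : ‖(1:ℂ) + Y * Complex.I‖ ≤ 2 := by
        refine (norm_add_le _ _).trans ?_
        rw [norm_mul, Complex.norm_real, Complex.norm_I, norm_one, Real.norm_eq_abs, hY]
        linarith
      rw [norm_mul, norm_mul, norm_mul, Complex.norm_exp, e3, Complex.norm_real, Real.norm_of_nonneg hc0p.le]
      calc _ ≤ c0 * (2 * Real.exp (-((γ + B) * t)) * (C * Real.exp (t * B) * (L t ^ n * Real.exp (-(κ*ε*L t*‖x‖))))) := by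
            gcongr
        _ = c0 * (2 * C) * (Real.exp (-((γ + B) * t)) * Real.exp (t * B)) * (L t ^ n * Real.exp (-(κ*ε*L t*‖x‖))) := by ring
        _ = _ := by
            rw [← Real.exp_add]
            congr 3
            ring)
  refine hmain.trans ?_
  rw [← hI0]
  have h1 : γ⁻¹ ≤ (κ * ε * ‖μ - ((ω:ℝ):ℂ)‖)⁻¹ := by gcongr
  have h2 : ε ^ (-(n + 1 : ℤ)) = (ε⁻¹)^n * ε⁻¹ := by
    rw [zpow_neg, ← pow_succ, inv_pow]
    norm_cast
  rw [h2]
  have h3 : I0 ≤ I0 + 1 := by linarith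
  calc _ ≤ c0 * (2*C) * ((κ*ε)⁻¹)^n * (I0+1) * (κ * ε * ‖μ - ((ω:ℝ):ℂ)‖)⁻¹ := by gcongr
    _ = _ := by
      rw [mul_inv, mul_inv, mul_inv, mul_pow, div_eq_mul_inv]
      ring
end

section
/- Let m be a positive integer and n ≥ 1. There exists a constant C > 0, depending only on n and m, such that for every multi-index β with |β| ≤ 2m-1, every r > 0, and every Schwartz function φ on ℝⁿ: r^{|β|} ‖∂^β φ‖_{L¹(ℝⁿ)} ≤ C ( r^{2m} ‖(-Δ)^m φ‖_{L¹(ℝⁿ)} + ‖φ‖_{L¹(ℝⁿ)} ). -/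
open Real MeasureTheory SchwartzMap

/-- Partial derivative in the `i`-th coordinate direction. -/
noncomputable def pd (n : ℕ) (i : Fin n) (f : EuclideanSpace ℝ (Fin n) → ℂ) :
    EuclideanSpace ℝ (Fin n) → ℂ :=
  fun x => fderiv ℝ f x (EuclideanSpace.single i 1)

/-- The negative Laplacian `-Δ`. -/
noncomputable def negLap (n : ℕ) (f : EuclideanSpace ℝ (Fin n) → ℂ) :
    EuclideanSpace ℝ (Fin n) → ℂ :=
  fun x => -∑ i : Fin n, pd n i (pd n i f) x

/-- The iterated negative Laplacian `(-Δ)^m`. -/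
noncomputable def negLapIter (n m : ℕ) (f : EuclideanSpace ℝ (Fin n) → ℂ) :
    EuclideanSpace ℝ (Fin n) → ℂ :=
  (negLap n)^[m] f

/-- The multi-index partial derivative `∂^β`. -/
noncomputable def mderiv (n : ℕ) (β : Fin n → ℕ) (f : EuclideanSpace ℝ (Fin n) → ℂ) :
    EuclideanSpace ℝ (Fin n) → ℂ :=
  ((List.ofFn fun i : Fin n => (pd n i)^[β i]).foldr (· ∘ ·) id) f

open FourierTransform LineDeriv Convolution Filter Topology
open scoped ContDiff

local notation "EE" n => EuclideanSpace ℝ (Fin n)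

lemma young_aux {n : ℕ} (K f : SchwartzMap (EE n) ℂ) :
    ∫ x, ‖SchwartzMap.convolution (ContinuousLinearMap.mul ℂ ℂ) K f x‖ ≤
      (∫ x, ‖K x‖) * ∫ x, ‖f x‖ := by
  have h := MeasureTheory.integral_convolution (μ := volume) (ν := volume)
    (ContinuousLinearMap.mul ℝ ℝ) (f := fun x => ‖K x‖) (g := fun x => ‖f x‖)
    K.integrable.norm f.integrable.norm
  have h2 := (K.integrable (μ := volume)).norm.integrable_convolution (ContinuousLinearMap.mul ℝ ℝ)
    (f.integrable (μ := volume)).norm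
  simp only [ContinuousLinearMap.mul_apply'] at h
  rw [← h]
  refine integral_mono (SchwartzMap.integrable _).norm h2 fun x => ?_
  simp only [SchwartzMap.convolution_apply]
  unfold MeasureTheory.convolution
  refine (norm_integral_le_integral_norm _).trans (le_of_eq ?_)
  simp

lemma young_fourier {n : ℕ} (a f g : SchwartzMap (EE n) ℂ)
    (h : ∀ ξ, 𝓕 g ξ = a ξ * 𝓕 f ξ) :
    ∫ x, ‖g x‖ ≤ (∫ x, ‖𝓕⁻ a x‖) * ∫ x, ‖f x‖ := by
  have : g = SchwartzMap.convolution (ContinuousLinearMap.mul ℂ ℂ) (𝓕⁻ a) f := by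
    have h1 : 𝓕 g = 𝓕 (SchwartzMap.convolution (ContinuousLinearMap.mul ℂ ℂ) (𝓕⁻ a) f) := by
      ext ξ
      rw [SchwartzMap.fourier_convolution]
      simp [h]
    have := congrArg (fun u => 𝓕⁻ u) h1
    simpa using this
  rw [this]
  exact young_aux _ _

lemma fourierInv_scale {n : ℕ} (a b : SchwartzMap (EE n) ℂ) (l : ℝ) (hl : 0 < l)
    (h : ∀ ξ, a ξ = b (l⁻¹ • ξ)) : ∫ x, ‖𝓕⁻ a x‖ = ∫ x, ‖𝓕⁻ b x‖ := by
  have h1 : ∀ x, 𝓕⁻ a x = (l ^ n : ℝ) • 𝓕⁻ b (l • x) := by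
    intro x
    rw [SchwartzMap.fourierInv_coe, SchwartzMap.fourierInv_coe, Real.fourierInv_eq',
      Real.fourierInv_eq']
    have := MeasureTheory.Measure.integral_comp_inv_smul_of_nonneg (volume : Measure (EE n))
      (fun v => Complex.exp (↑(2 * π * inner ℝ v (l • x)) * Complex.I) • b v) hl.le
    simp only [finrank_euclideanSpace, Fintype.card_fin] at this
    rw [← this]
    congr 1
    ext v
    rw [h v, inner_smul_left, inner_smul_right]
    congr 5
    simp
    field_simp
  simp_rw [h1, norm_smul]
  rw [integral_const_mul]
  rw [MeasureTheory.Measure.integral_comp_smul (volume : Measure (EE n)) (fun x => ‖𝓕⁻ b x‖) l]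
  simp only [finrank_euclideanSpace, Fintype.card_fin, smul_eq_mul]
  rw [← mul_assoc, abs_of_pos (by positivity), Real.norm_of_nonneg (by positivity),
    mul_inv_cancel₀ (by positivity), one_mul]

lemma young_scale {n : ℕ} (b f g : SchwartzMap (EE n) ℂ) (l c : ℝ) (hl : 0 < l) (hc : 0 ≤ c)
    (h : ∀ ξ, 𝓕 g ξ = c * b (l⁻¹ • ξ) * 𝓕 f ξ) :
    ∫ x, ‖g x‖ ≤ c * (∫ x, ‖𝓕⁻ b x‖) * ∫ x, ‖f x‖ := by
  let e : (EE n) ≃L[ℝ] (EE n) := ContinuousLinearEquiv.smulLeft (Units.mk0 l⁻¹ (by positivity))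
  let a : SchwartzMap (EE n) ℂ := SchwartzMap.compCLMOfContinuousLinearEquiv ℂ e b
  have ha : ∀ ξ, a ξ = b (l⁻¹ • ξ) := fun ξ => rfl
  have := young_fourier a ((c : ℂ) • f) g (by
    intro ξ
    rw [h, FourierTransform.fourier_smul, ha]
    simp; ring)
  rw [fourierInv_scale a b l hl ha] at this
  refine this.trans (le_of_eq ?_)
  simp [integral_const_mul, abs_of_nonneg hc]
  ring

/-- limit step -/
lemma limit_step {n : ℕ} (χ : (EE n) → ℂ) (hχ : Continuous χ) (hχ0 : χ 0 = 1)
    (hb : ∀ ξ, ‖χ ξ‖ ≤ 1) (g : ℕ → SchwartzMap (EE n) ℂ) (ψ : SchwartzMap (EE n) ℂ)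
    (l : ℕ → ℝ) (hl : Tendsto (fun j => (l j)⁻¹) atTop (𝓝 0))
    (hg : ∀ j ξ, 𝓕 (g j) ξ = χ ((l j)⁻¹ • ξ) * 𝓕 ψ ξ) (B : ℝ) (hB : ∀ j, ∫ x, ‖g j x‖ ≤ B) :
    ∫ x, ‖ψ x‖ ≤ B := by
  have hpt : ∀ x, Tendsto (fun j => g j x) atTop (𝓝 (ψ x)) := by
    intro x
    have e1 : ∀ u : SchwartzMap (EE n) ℂ, u x =
        ∫ v, Complex.exp (↑(2 * π * inner ℝ v x) * Complex.I) • 𝓕 u v := by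
      intro u
      conv_lhs => rw [← FourierTransform.fourierInv_fourier_eq (F := SchwartzMap (EE n) ℂ) u]
      rw [SchwartzMap.fourierInv_coe, Real.fourierInv_eq']
    rw [e1 ψ]
    simp_rw [e1 (g _)]
    have hn : ∀ v : (EE n), ‖Complex.exp (↑(2 * π * inner ℝ v x) * Complex.I)‖ = 1 :=
      fun v => Complex.norm_exp_ofReal_mul_I _
    refine tendsto_integral_of_dominated_convergence (fun v => ‖𝓕 ψ v‖) ?_
      (SchwartzMap.integrable _).norm ?_ ?_
    · intro j
      have := (𝓕 (g j)).continuous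
      exact Continuous.aestronglyMeasurable (by fun_prop)
    · intro j
      refine Eventually.of_forall fun v => ?_
      rw [norm_smul, hn, one_mul, hg, norm_mul]
      exact mul_le_of_le_one_left (norm_nonneg _) (hb _)
    · refine Eventually.of_forall fun v => ?_
      refine Tendsto.const_smul ?_ _
      simp_rw [hg]
      have h3 : Tendsto (fun j => χ ((l j)⁻¹ • v)) atTop (𝓝 (χ ((0:ℝ) • v))) :=
        (hχ.tendsto _).comp (hl.smul_const v)
      rw [zero_smul, hχ0] at h3
      simpa using h3.mul_const (𝓕 ψ v)
  have hB0 : 0 ≤ B := (integral_nonneg fun x => norm_nonneg _).trans (hB 0)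
  have key : ∀ u : SchwartzMap (EE n) ℂ, ENNReal.ofReal (∫ x, ‖u x‖) = ∫⁻ x, ‖u x‖ₑ := by
    intro u
    exact ofReal_integral_norm_eq_lintegral_enorm u.integrable
  rw [← ENNReal.ofReal_le_ofReal_iff hB0, key]
  calc ∫⁻ x, ‖ψ x‖ₑ = ∫⁻ x, liminf (fun j => ‖g j x‖ₑ) atTop := by
        congr 1; ext x
        exact ((hpt x).enorm.liminf_eq).symm
    _ ≤ liminf (fun j => ∫⁻ x, ‖g j x‖ₑ) atTop :=
        lintegral_liminf_le fun j => (g j).continuous.measurable.enorm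
    _ ≤ ENNReal.ofReal B := by
        refine (liminf_le_liminf (v := fun _ => ENNReal.ofReal B) ?_).trans (by simp)
        refine Eventually.of_forall fun j => ?_
        rw [← key]
        exact ENNReal.ofReal_le_ofReal (hB j)

/-- Operator `D` on functions acts on Schwartz functions with Fourier symbol `σ`. -/
def IsOp (n : ℕ) (D : ((EE n) → ℂ) → ((EE n) → ℂ)) (σ : (EE n) → ℂ) (k : ℕ) : Prop :=
  (∀ φ : SchwartzMap (EE n) ℂ, ∃ ψ : SchwartzMap (EE n) ℂ, ⇑ψ = D ⇑φ ∧
    ∀ ξ, 𝓕 ψ ξ = σ ξ * 𝓕 φ ξ) ∧ ContDiff ℝ ∞ σ ∧ ∀ (t : ℝ) ξ, σ (t • ξ) = (t : ℂ) ^ k * σ ξ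

lemma IsOp.id (n : ℕ) : IsOp n id (fun _ => 1) 0 :=
  ⟨fun φ => ⟨φ, rfl, by simp⟩, contDiff_const, by simp⟩

lemma IsOp.comp {n : ℕ} {D₁ D₂ : ((EE n) → ℂ) → ((EE n) → ℂ)} {σ₁ σ₂ : (EE n) → ℂ} {k₁ k₂ : ℕ}
    (h₁ : IsOp n D₁ σ₁ k₁) (h₂ : IsOp n D₂ σ₂ k₂) :
    IsOp n (D₁ ∘ D₂) (fun ξ => σ₁ ξ * σ₂ ξ) (k₁ + k₂) := by
  refine ⟨fun φ => ?_, h₁.2.1.mul h₂.2.1, fun t ξ => ?_⟩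
  · obtain ⟨ψ, h, h'⟩ := h₂.1 φ
    obtain ⟨θ, g, g'⟩ := h₁.1 ψ
    exact ⟨θ, by rw [g, h]; rfl, fun ξ => by rw [g', h', mul_assoc]⟩
  · simp only [h₁.2.2, h₂.2.2]; ring

lemma IsOp.iter {n : ℕ} {D : ((EE n) → ℂ) → ((EE n) → ℂ)} {σ : (EE n) → ℂ} {k : ℕ}
    (h : IsOp n D σ k) (m : ℕ) : IsOp n (D^[m]) (fun ξ => σ ξ ^ m) (k * m) := by
  induction m with
  | zero => simpa using IsOp.id n
  | succ m ih =>
    rw [Function.iterate_succ]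
    simp_rw [pow_succ, Nat.mul_succ]
    exact ih.comp h

lemma IsOp.pd (n : ℕ) (i : Fin n) : IsOp n (pd n i) (fun ξ => 2 * π * Complex.I * (ξ i : ℂ)) 1 := by
  refine ⟨fun φ => ⟨∂_{EuclideanSpace.single i (1:ℝ)} φ, ?_, fun ξ => ?_⟩, ?_, fun t ξ => ?_⟩
  · ext x
    exact SchwartzMap.lineDerivOp_apply_eq_fderiv _ _ _
  · rw [SchwartzMap.fourier_lineDerivOp_eq]
    have : (fun ξ : (EE n) => inner ℝ ξ (EuclideanSpace.single i (1:ℝ))).HasTemperateGrowth := by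
      fun_prop
    have h2 := SchwartzMap.smulLeftCLM_apply_apply this (𝓕 φ) ξ
    rw [smul_apply, h2, EuclideanSpace.inner_single_right]
    simp
    ring
  · have : ContDiff ℝ ∞ (fun ξ : (EE n) => ξ i) := by fun_prop
    exact contDiff_const.mul (Complex.ofRealCLM.contDiff.comp this)
  · simp; ring

lemma IsOp.neg_sum {n : ℕ} {ι : Type} (s : Finset ι) {D : ι → ((EE n) → ℂ) → ((EE n) → ℂ)}
    {σ : ι → (EE n) → ℂ} {k : ℕ} (h : ∀ i, IsOp n (D i) (σ i) k) :
    IsOp n (fun f x => -∑ i ∈ s, D i f x) (fun ξ => -∑ i ∈ s, σ i ξ) k := by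
  refine ⟨fun φ => ?_, ?_, fun t ξ => ?_⟩
  · choose ψ h1 h2 using fun i => (h i).1 φ
    refine ⟨-∑ i ∈ s, ψ i, ?_, fun ξ => ?_⟩
    · ext x
      simp [h1]
    · have : 𝓕 (-∑ i ∈ s, ψ i) = -∑ i ∈ s, 𝓕 (ψ i) := by
        have := map_neg (FourierTransform.fourierCLM ℂ (SchwartzMap (EE n) ℂ)) (∑ i ∈ s, ψ i)
        rw [map_sum] at this
        simpa using this
      rw [this]
      simp [h2, Finset.sum_mul]
  · exact (ContDiff.sum fun i _ => (h i).2.1).neg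
  · simp [(h _).2.2, Finset.mul_sum]

lemma IsOp.negLap (n : ℕ) : ∃ σ, IsOp n (negLap n) σ 2 ∧ ∀ ξ, ξ ≠ 0 → σ ξ ≠ 0 := by
  refine ⟨_, IsOp.neg_sum (k := 2) Finset.univ (fun i => (IsOp.pd n i).comp (IsOp.pd n i)), ?_⟩
  intro ξ hξ h0
  have h1 : (((2 * π) ^ 2 * ∑ i, ξ i ^ 2 : ℝ) : ℂ) = 0 := by
    rw [← h0]
    push_cast
    rw [Finset.mul_sum, ← Finset.sum_neg_distrib]
    refine Finset.sum_congr rfl fun i _ => ?_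
    ring_nf
    simp
  have h2 : (2 * π) ^ 2 * ∑ i, ξ i ^ 2 = 0 := by exact_mod_cast h1
  rw [← EuclideanSpace.real_norm_sq_eq] at h2
  have : 0 < ‖ξ‖ := norm_pos_iff.2 hξ
  have := Real.pi_pos
  exact absurd h2 (by positivity)

lemma IsOp.list {n : ℕ} (L : List ((((EE n) → ℂ) → ((EE n) → ℂ)) × ℕ))
    (h : ∀ p ∈ L, ∃ σ, IsOp n p.1 σ p.2) :
    ∃ σ, IsOp n ((L.map Prod.fst).foldr (· ∘ ·) _root_.id) σ (L.map Prod.snd).sum := by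
  induction L with
  | nil => exact ⟨_, IsOp.id n⟩
  | cons p L ih =>
    obtain ⟨σ, hσ⟩ := ih fun q hq => h q (List.mem_cons_of_mem _ hq)
    obtain ⟨τ, hτ⟩ := h p List.mem_cons_self
    simp only [List.map_cons, List.foldr_cons, List.sum_cons]
    exact ⟨_, hτ.comp hσ⟩

lemma IsOp.mderiv (n : ℕ) (β : Fin n → ℕ) : ∃ σ, IsOp n (mderiv n β) σ (∑ i, β i) := by
  have := IsOp.list (n := n) (List.ofFn fun i => ((_root_.pd n i)^[β i], β i)) (by
    intro p hp
    rw [List.mem_ofFn] at hp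
    obtain ⟨i, rfl⟩ := hp
    have := (IsOp.pd n i).iter (β i)
    rw [one_mul] at this
    exact ⟨_, this⟩)
  simp only [List.map_ofFn, List.sum_ofFn] at this
  exact this

lemma core (n m : ℕ) (β : Fin n → ℕ) (hβ : (∑ i, β i) < 2 * m) :
    ∃ C : ℝ, 0 ≤ C ∧ ∀ r : ℝ, 0 < r → ∀ φ : SchwartzMap (EE n) ℂ,
      r ^ (∑ i, β i) * ∫ x, ‖mderiv n β (⇑φ) x‖ ≤
        C * (r ^ (2 * m) * (∫ x, ‖negLapIter n m (⇑φ) x‖) + ∫ x, ‖φ x‖) := by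
  obtain ⟨σ, hσ, hσc, hσh⟩ := IsOp.mderiv n β
  set k := ∑ i, β i
  obtain ⟨τ₀, hτ₀, hne₀⟩ := IsOp.negLap n
  obtain ⟨hτ, hτc, hτh⟩ := hτ₀.iter m
  have hne : ∀ ξ, ξ ≠ 0 → τ₀ ξ ^ m ≠ 0 := fun ξ h => pow_ne_zero _ (hne₀ ξ h)
  set τ : (EE n) → ℂ := fun ξ => τ₀ ξ ^ m with hτdef
  let b : ContDiffBump (0 : EE n) := ⟨1, 2, by norm_num, by norm_num⟩
  let χ : (EE n) → ℂ := fun ξ => (b ξ : ℂ)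
  have hχc : ContDiff ℝ ∞ χ := Complex.ofRealCLM.contDiff.comp b.contDiff
  have hχs : HasCompactSupport χ := b.hasCompactSupport.comp_left (g := Complex.ofReal) (by simp)
  have hχ1 : ∀ ξ, ‖ξ‖ ≤ 1 → χ ξ = 1 := by
    intro ξ h
    simp only [χ]
    rw [b.one_of_mem_closedBall (by simpa using h)]
    simp
  have hχb : ∀ ξ, ‖χ ξ‖ ≤ 1 := by
    intro ξ
    simp only [χ, Complex.norm_real, Real.norm_eq_abs, abs_of_nonneg b.nonneg]
    exact b.le_one
  -- kernels
  let A₀ : SchwartzMap (EE n) ℂ := HasCompactSupport.toSchwartzMap (f := fun ξ => χ ξ * σ ξ)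
    (hχs.mul_right) (hχc.mul hσc)
  let δ : (EE n) → ℂ := fun ξ => χ ((2:ℝ)⁻¹ • ξ) - χ ξ
  have hδs : HasCompactSupport δ := by
    refine HasCompactSupport.sub ?_ hχs
    exact hχs.comp_smul (by norm_num)
  have hδc : ContDiff ℝ ∞ δ := (hχc.comp (contDiff_const_smul _)).sub hχc
  have hδ0 : ∀ ξ, ‖ξ‖ ≤ 1 → δ ξ = 0 := by
    intro ξ h
    simp only [δ]
    rw [hχ1 ξ h, hχ1 _ ?_, sub_self]
    rw [norm_smul]; norm_num; linarith
  have hhc : ContDiff ℝ ∞ (fun ξ => δ ξ * (σ ξ / τ ξ)) := by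
    rw [contDiff_iff_contDiffAt]
    intro ξ
    by_cases h : ξ = 0
    · subst h
      refine (contDiffAt_const (c := (0:ℂ))).congr_of_eventuallyEq ?_
      filter_upwards [Metric.closedBall_mem_nhds (0 : EE n) one_pos] with η hη
      rw [hδ0 η (by simpa using hη), zero_mul]
    · exact hδc.contDiffAt.mul (by
        simp_rw [div_eq_mul_inv]
        exact hσc.contDiffAt.mul (hτc.contDiffAt.inv (hne ξ h)))
  let H : SchwartzMap (EE n) ℂ := HasCompactSupport.toSchwartzMap
    (f := fun ξ => δ ξ * (σ ξ / τ ξ)) (hδs.mul_right) hhc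
  set KA := ∫ x, ‖𝓕⁻ A₀ x‖ with hKA
  set KH := ∫ x, ‖𝓕⁻ H x‖ with hKH
  have hKA0 : 0 ≤ KA := integral_nonneg fun _ => norm_nonneg _
  have hKH0 : 0 ≤ KH := integral_nonneg fun _ => norm_nonneg _
  refine ⟨KA + 2 * KH, by positivity, fun r hr φ => ?_⟩
  obtain ⟨ψ, hψ, hψ'⟩ := hσ φ
  obtain ⟨Φ, hΦ, hΦ'⟩ := hτ φ
  unfold negLapIter
  rw [← hψ, ← hΦ]
  set N := ∫ x, ‖φ x‖
  set M := ∫ x, ‖Φ x‖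
  have hN0 : 0 ≤ N := integral_nonneg fun _ => norm_nonneg _
  have hM0 : 0 ≤ M := integral_nonneg fun _ => norm_nonneg _
  let l : ℕ → ℝ := fun j => 2 ^ j / r
  have hl : ∀ j, 0 < l j := fun j => by positivity
  have hex : ∀ j, ∃ g : SchwartzMap (EE n) ℂ, ∀ ξ, 𝓕 g ξ = χ ((l j)⁻¹ • ξ) * 𝓕 ψ ξ := by
    intro j
    have hcs : HasCompactSupport (fun ξ => χ ((l j)⁻¹ • ξ) * 𝓕 ψ ξ) :=
      (hχs.comp_smul (inv_ne_zero (hl j).ne')).mul_right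
    have hcd : ContDiff ℝ ∞ (fun ξ => χ ((l j)⁻¹ • ξ) * 𝓕 ψ ξ) :=
      (hχc.comp (contDiff_const_smul _)).mul ((𝓕 ψ).smooth ⊤)
    exact ⟨𝓕⁻ (hcs.toSchwartzMap hcd), fun ξ => by simp⟩
  choose g hg using hex
  have h0 : ∫ x, ‖g 0 x‖ ≤ (l 0) ^ k * KA * N := by
    refine young_scale A₀ φ (g 0) (l 0) ((l 0) ^ k) (hl 0) (by have := hl 0; positivity) fun ξ => ?_
    rw [hg, hψ']
    have : A₀ ((l 0)⁻¹ • ξ) = χ ((l 0)⁻¹ • ξ) * σ ((l 0)⁻¹ • ξ) := rfl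
    rw [this, hσh]
    have : (l 0 : ℂ) ≠ 0 := by exact_mod_cast (hl 0).ne'
    generalize χ ((l 0)⁻¹ • ξ) = c
    push_cast
    rw [inv_pow]
    field_simp
  obtain ⟨d, hd⟩ : ∃ d, 2 * m = k + (d + 1) := ⟨2 * m - k - 1, by omega⟩
  have hs : ∀ j, ∫ x, ‖(g (j+1) - g j) x‖ ≤ ((l j)⁻¹) ^ (d+1) * KH * M := by
    intro j
    have hlj := hl j
    refine young_scale H Φ _ (l j) _ (hl j) (by positivity) fun ξ => ?_
    have e1 : 𝓕 (g (j+1) - g j) = 𝓕 (g (j+1)) - 𝓕 (g j) :=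
      map_sub (FourierTransform.fourierCLM ℂ (SchwartzMap (EE n) ℂ)) _ _
    rw [e1, sub_apply, hg, hg, hΦ', hψ']
    have e2 : H ((l j)⁻¹ • ξ) = δ ((l j)⁻¹ • ξ) * (σ ((l j)⁻¹ • ξ) / τ ((l j)⁻¹ • ξ)) := rfl
    have e3 : (l (j+1))⁻¹ • ξ = (2:ℝ)⁻¹ • (l j)⁻¹ • ξ := by
      rw [smul_smul]; congr 1
      simp only [l]
      field_simp; ring
    rw [e2, e3, ← mul_assoc, ← mul_assoc, ← sub_mul, ← sub_mul]
    change δ ((l j)⁻¹ • ξ) * σ ξ * 𝓕 φ ξ = _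
    by_cases h : ξ = 0
    · subst h
      rw [smul_zero, hδ0 0 (by simp)]; simp
    · have h1 := hne ξ h
      change τ ξ ≠ 0 at h1
      rw [hσh, hτh, hd]
      have : (l j : ℂ) ≠ 0 := by exact_mod_cast (hl j).ne'
      generalize δ ((l j)⁻¹ • ξ) = c
      push_cast
      rw [inv_pow, inv_pow, inv_pow, pow_add]
      field_simp
      ring
  have hlinv : ∀ j, ((l j)⁻¹) ^ (d+1) ≤ r ^ (d+1) * (1/2) ^ j := by
    intro j
    have : (l j)⁻¹ = r * (1/2) ^ j := by simp [l, div_eq_mul_inv]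
    rw [this, mul_pow]
    refine mul_le_mul_of_nonneg_left ?_ (by positivity)
    rw [pow_succ]
    refine mul_le_of_le_one_left (by positivity) (pow_le_one₀ (by positivity) ?_)
    exact pow_le_one₀ (by norm_num) (by norm_num)
  have hB' : ∀ j, ∫ x, ‖g j x‖ ≤ (l 0) ^ k * KA * N + r ^ (d+1) * KH * M * (2 * (1 - (1/2) ^ j)) := by
    intro j
    induction j with
    | zero => simpa using h0
    | succ j ih =>
      have h1 : ∫ x, ‖g (j+1) x‖ ≤ (∫ x, ‖g j x‖) + ∫ x, ‖(g (j+1) - g j) x‖ := by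
        rw [← integral_add (SchwartzMap.integrable _).norm (SchwartzMap.integrable _).norm]
        refine integral_mono (SchwartzMap.integrable _).norm
          ((SchwartzMap.integrable _).norm.add (SchwartzMap.integrable _).norm) fun x => ?_
        have := norm_add_le (g j x) ((g (j+1) - g j) x)
        simpa using this
      have h2 := mul_le_mul_of_nonneg_right (hlinv j) (mul_nonneg hKH0 hM0)
      have h3 := hs j
      have : (1/2:ℝ) ^ (j+1) = (1/2) ^ j / 2 := by rw [pow_succ]; ring
      rw [this]
      nlinarith
  have hfin : ∫ x, ‖ψ x‖ ≤ (l 0) ^ k * KA * N + r ^ (d+1) * KH * M * 2 := by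
    refine limit_step χ hχc.continuous (hχ1 0 (by simp)) hχb g ψ l ?_ hg _ fun j => ?_
    · have : (fun j => (l j)⁻¹) = fun j => r * (1/2) ^ j := by
        ext j; simp [l, div_eq_mul_inv]
      rw [this]
      simpa using (tendsto_pow_atTop_nhds_zero_of_lt_one (r := (1/2:ℝ)) (by norm_num)
        (by norm_num)).const_mul r
    · refine (hB' j).trans ?_
      gcongr
      have : (0:ℝ) ≤ (1/2) ^ j := by positivity
      linarith
  calc r ^ k * ∫ x, ‖ψ x‖ ≤ r ^ k * ((l 0) ^ k * KA * N + r ^ (d+1) * KH * M * 2) := by gcongr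
    _ = KA * N + 2 * KH * (r ^ (2 * m) * M) := by
        rw [hd]
        simp only [l, pow_zero, one_div, inv_pow]
        field_simp
        ring
    _ ≤ (KA + 2 * KH) * (r ^ (2 * m) * M + N) := by
        have : 0 ≤ r ^ (2 * m) * M := by positivity
        nlinarith [mul_nonneg hKA0 this, mul_nonneg hKH0 hN0]

/-- there exists `C > 0` depending only on `n` and `m` such that for every
multi-index `β` with `|β| ≤ 2m-1`, every `r > 0`, and every Schwartz function `φ`,
`r^{|β|} ‖∂^β φ‖_{L¹} ≤ C ( r^{2m} ‖(-Δ)^m φ‖_{L¹} + ‖φ‖_{L¹} )`. -/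
theorem interpolation_inequality_L1 (n m : ℕ) (hn : 1 ≤ n) (hm : 1 ≤ m) :
    ∃ C > (0 : ℝ), ∀ β : Fin n → ℕ, (∑ i, β i) ≤ 2 * m - 1 → ∀ r : ℝ, 0 < r →
      ∀ φ : SchwartzMap (EuclideanSpace ℝ (Fin n)) ℂ,
      r ^ (∑ i, β i) * ∫ x, ‖mderiv n β (⇑φ) x‖ ≤
        C * (r ^ (2 * m) * (∫ x, ‖negLapIter n m (⇑φ) x‖) + ∫ x, ‖φ x‖) := by
  have h := fun (β : Fin n → ℕ) (hβ : (∑ i, β i) < 2 * m) => core n m β hβ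
  have h' : ∀ β : Fin n → ℕ, ∃ C : ℝ, 0 ≤ C ∧ ((∑ i, β i) < 2 * m → ∀ r : ℝ, 0 < r →
      ∀ φ : SchwartzMap (EuclideanSpace ℝ (Fin n)) ℂ,
      r ^ (∑ i, β i) * ∫ x, ‖mderiv n β (⇑φ) x‖ ≤
        C * (r ^ (2 * m) * (∫ x, ‖negLapIter n m (⇑φ) x‖) + ∫ x, ‖φ x‖)) := by
    intro β
    by_cases hβ : (∑ i, β i) < 2 * m
    · obtain ⟨C, h0, h1⟩ := core n m β hβ
      exact ⟨C, h0, fun _ => h1⟩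
    · exact ⟨0, le_rfl, fun h => absurd h hβ⟩
  choose C hC0 hC using h'
  let S : Finset (Fin n → ℕ) := Fintype.piFinset fun _ => Finset.range (2 * m)
  have hS0 : 0 ≤ ∑ β ∈ S, C β := Finset.sum_nonneg fun β _ => hC0 β
  refine ⟨∑ β ∈ S, C β + 1, by linarith, fun β hβ r hr φ => ?_⟩
  have hβ' : (∑ i, β i) < 2 * m := by omega
  refine (hC β hβ' r hr φ).trans ?_
  have hmem : β ∈ S := by
    simp only [S, Fintype.mem_piFinset, Finset.mem_range]
    intro i
    exact (Finset.single_le_sum (f := β) (fun _ _ => Nat.zero_le _) (Finset.mem_univ i)).trans_lt hβ'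
  have hle : C β ≤ ∑ β ∈ S, C β + 1 := by
    have := Finset.single_le_sum (f := C) (fun β _ => hC0 β) hmem
    linarith
  refine mul_le_mul_of_nonneg_right hle ?_
  have h1 : 0 ≤ ∫ x, ‖negLapIter n m (⇑φ) x‖ := integral_nonneg fun _ => norm_nonneg _
  have h2 : 0 ≤ ∫ x, ‖φ x‖ := integral_nonneg fun _ => norm_nonneg _
  positivity
end

section
/- Let α > 0 be a non-integer and n ≥ 1. There exists a constant C₁ > 0 such that for all t > 0 and all x ∈ ℝⁿ \ {0}: |K₀(t,x)| ≤ C₁ I(t,x), i.e. |K₀(t,x)| ≤ C₁ min( t·|x|^{-(n+2α)}, t^{-n/(2α)} ). -/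
open Real MeasureTheory
open scoped Classical

/-- The free heat kernel `K₀(t,x) = (2π)^{-n} ∫_{ℝⁿ} e^{i x·ξ} e^{-t|ξ|^{2α}} dξ`
of the semigroup `e^{-t(-Δ)^α}`. -/
noncomputable def K0 (n : ℕ) (α : ℝ) (t : ℝ) (x : EuclideanSpace ℝ (Fin n)) : ℂ :=
  ((2 * Real.pi) ^ (-(n : ℝ)) : ℝ) •
    ∫ ξ : EuclideanSpace ℝ (Fin n),
      Complex.exp (Complex.I * ((inner ℝ x ξ : ℝ) : ℂ)) *
        Complex.exp (-(t : ℂ) * ((‖ξ‖ ^ (2 * α) : ℝ) : ℂ))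

/-- `I(t,x) = min(t·|x|^{-(n+2α)}, t^{-n/(2α)})`  (with the convention that at `x = 0` only the
second, finite, term is kept, since `|0|^{-(n+2α)} = +∞`). -/
noncomputable def Ifun (n : ℕ) (α : ℝ) (t : ℝ) (x : EuclideanSpace ℝ (Fin n)) : ℝ :=
  if x = 0 then t ^ (-(n : ℝ) / (2 * α))
  else min (t * ‖x‖ ^ (-((n : ℝ) + 2 * α))) (t ^ (-(n : ℝ) / (2 * α)))


/-- One complex step: finite differences of bounded holomorphic functions. -/
lemma fk_diff_bound (δ : ℝ) (hδ : 1 < δ) (N : ℕ) : ∀ (G : ℂ → ℂ) (M : ℝ), 0 ≤ M →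
    DifferentiableOn ℂ G (Metric.ball 0 ((N + 1) * δ)) →
    (∀ z ∈ Metric.ball (0 : ℂ) ((N + 1) * δ), ‖G z‖ ≤ M) →
    ∀ z ∈ Metric.ball (0 : ℂ) δ, ‖(fwdDiff (1 : ℂ))^[N] G z‖ ≤ M * (2 / δ) ^ N := by
  induction N with
  | zero =>
    intro G M hM hd hb z hz
    simpa using hb z (by simpa using hz)
  | succ N ih =>
    intro G M hM hd hb z hz
    rw [Function.iterate_succ_apply]
    have key : ∀ z ∈ Metric.ball (0 : ℂ) ((N + 1) * δ),
        Metric.ball z δ ⊆ Metric.ball (0 : ℂ) (((N + 1 : ℕ) + 1) * δ) := by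
      intro z hz
      apply Metric.ball_subset_ball'
      rw [Metric.mem_ball] at hz
      push_cast
      linarith
    have h1 : ∀ z : ℂ, z + 1 ∈ Metric.ball z δ := by intro z; simpa using hδ
    have h0 : ∀ z : ℂ, z ∈ Metric.ball z δ := by intro z; simp; linarith
    have := ih (fwdDiff (1 : ℂ) G) (2 * M / δ) (by positivity) ?_ ?_ z hz
    · refine this.trans (le_of_eq ?_)
      rw [pow_succ]; ring
    · unfold fwdDiff
      apply DifferentiableOn.sub
      · apply hd.comp (by fun_prop)
        intro z hz
        exact key z hz (h1 z)
      · apply hd.mono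
        intro z hz
        exact key z hz (h0 z)
    · intro z hz
      have := Complex.dist_le_div_mul_dist_of_mapsTo_ball (f := G) (c := z) (z := z + 1)
        (R₁ := δ) (R₂ := 2 * M) (hd.mono (key z hz)) ?_ (h1 z)
      · simpa [fwdDiff, dist_eq_norm] using this
      · intro w hw
        rw [mem_closedBall_iff_norm]
        have a := hb w (key z hz hw)
        have b := hb z (key z hz (h0 z))
        linarith [norm_sub_le (G w) (G z)]

lemma fk_eps (α : ℝ) : ∃ ε : ℝ, 0 < ε ∧ ε < 1 ∧ ∀ v : ℂ, ‖v‖ < 3 * ε →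
    1 + v ∈ Complex.slitPlane ∧ 0 ≤ ((1 + v) ^ (α : ℂ)).re ∧ ‖(1 + v) ^ (α : ℂ)‖ ≤ 2 := by
  have hc : ContinuousAt (fun v : ℂ => (1 + v) ^ (α : ℂ)) 0 := by
    apply ContinuousAt.cpow
    · fun_prop
    · fun_prop
    · simp
  obtain ⟨d, hd, h⟩ := Metric.continuousAt_iff.1 hc 1 one_pos
  refine ⟨min d 1 / 4, by positivity, ?_, ?_⟩
  · have := min_le_right d 1; linarith
  · intro v hv
    have h1 := min_le_right d 1
    have h2 := min_le_left d 1
    have hm : 0 < min d 1 := by positivity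
    have hv' := h (x := v) (by simp; linarith)
    simp only [add_zero, Complex.one_cpow, dist_eq_norm] at hv'
    refine ⟨Complex.mem_slitPlane_of_norm_lt_one (by linarith), ?_, ?_⟩
    · have := Complex.abs_re_le_norm ((1 + v) ^ (α : ℂ) - 1)
      rw [Complex.sub_re, Complex.one_re] at this
      have := (abs_le.1 (this.trans hv'.le)).1
      linarith
    · have := norm_le_norm_sub_add ((1 + v) ^ (α : ℂ)) 1
      simp only [norm_one] at this
      linarith

lemma fk_exp (ζ : ℂ) (h : 0 ≤ ζ.re) : ‖1 - Complex.exp (-ζ)‖ ≤ 2 * ‖ζ‖ := by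
  rw [norm_sub_rev]
  by_cases h1 : ‖ζ‖ ≤ 1
  · simpa using Complex.norm_exp_sub_one_le (x := -ζ) (by simpa using h1)
  · have : ‖Complex.exp (-ζ)‖ ≤ 1 := by
      rw [Complex.norm_exp]; simpa using h
    have := norm_sub_le (Complex.exp (-ζ)) 1
    simp only [norm_one] at this
    linarith

/-- crude bound -/
lemma fk_crude {E : Type*} [AddCommGroup E] (g : E → ℂ) (h ξ : E) (N : ℕ) (M : ℝ)
    (hM : ∀ k ≤ N, ‖g (ξ + k • h)‖ ≤ M) : ‖(fwdDiff h)^[N] g ξ‖ ≤ 2 ^ N * M := by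
  rw [fwdDiff_iter_eq_sum_shift]
  refine (norm_sum_le _ _).trans ?_
  have : ∀ k ∈ Finset.range (N + 1),
      ‖((-1 : ℤ) ^ (N - k) * N.choose k) • g (ξ + k • h)‖ ≤ (N.choose k : ℝ) * M := by
    intro k hk
    have hk' : k ≤ N := by simpa [Nat.lt_succ_iff] using hk
    rw [zsmul_eq_mul, norm_mul]
    have : ‖(((-1 : ℤ) ^ (N - k) * N.choose k : ℤ) : ℂ)‖ = N.choose k := by
      push_cast
      simp
    rw [this]
    exact mul_le_mul_of_nonneg_left (hM k hk') (by positivity)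
  refine (Finset.sum_le_sum this).trans (le_of_eq ?_)
  rw [← Finset.sum_mul]
  congr 1
  exact_mod_cast Nat.sum_range_choose N

noncomputable def fkf {E : Type*} [NormedAddCommGroup E] (α t : ℝ) (ξ : E) : ℂ :=
  Complex.exp (-(t : ℂ) * ((‖ξ‖ ^ (2 * α) : ℝ) : ℂ))

noncomputable def fkOneSub {E : Type*} [NormedAddCommGroup E] (α t : ℝ) (ξ : E) : ℂ :=
  1 - fkf α t ξ

lemma fk_g_le {E : Type*} [NormedAddCommGroup E] (α t : ℝ) (ht : 0 < t) (ξ : E) :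
    ‖fkOneSub α t ξ‖ ≤ 2 * (t * ‖ξ‖ ^ (2 * α)) := by
  have h := fk_exp ((t * ‖ξ‖ ^ (2 * α) : ℝ) : ℂ) (by rw [Complex.ofReal_re]; positivity)
  rw [Complex.norm_real, Real.norm_of_nonneg (by positivity)] at h
  unfold fkOneSub fkf
  convert h using 4
  push_cast
  ring

lemma fk_diff_fg {E : Type*} [NormedAddCommGroup E] (α t : ℝ) (h : E) (N : ℕ) (hN : N ≠ 0)
    (ξ : E) : ‖(fwdDiff h)^[N] (fkf α t) ξ‖ = ‖(fwdDiff h)^[N] (fkOneSub α t) ξ‖ := by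
  obtain ⟨m, rfl⟩ := Nat.exists_eq_succ_of_ne_zero hN
  rw [Nat.succ_eq_add_one, Function.iterate_succ_apply, Function.iterate_succ_apply]
  have : fwdDiff h (fkOneSub (E := E) α t) = (-1 : ℤ) • fwdDiff h (fkf (E := E) α t) := by
    ext ξ
    simp [fwdDiff, fkOneSub]
  rw [this, fwdDiff_iter_const_smul]
  simp

lemma fk_far {E : Type*} [NormedAddCommGroup E] [InnerProductSpace ℝ E] (α : ℝ)
    (N : ℕ) (ε : ℝ) (hε0 : 0 < ε) (hε1 : ε < 1)
    (hε : ∀ v : ℂ, ‖v‖ < 3 * ε →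
    1 + v ∈ Complex.slitPlane ∧ 0 ≤ ((1 + v) ^ (α : ℂ)).re ∧ ‖(1 + v) ^ (α : ℂ)‖ ≤ 2)
    (t : ℝ) (ht : 0 < t) (h ξ : E) (hh : h ≠ 0) (δ : ℝ) (hδ : 1 < δ)
    (hR : (N + 1) * δ = ε * ‖ξ‖ / ‖h‖) :
    ‖(fwdDiff h)^[N] (fkOneSub α t) ξ‖ ≤ 4 * (t * ‖ξ‖ ^ (2 * α)) * (2 / δ) ^ N := by
  have hh0 : 0 < ‖h‖ := norm_pos_iff.2 hh
  have hξ0 : 0 < ‖ξ‖ := by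
    rcases (norm_nonneg ξ).eq_or_lt with h0 | h0
    · rw [← h0] at hR
      have : 0 < (N + 1) * δ := by positivity
      rw [mul_zero, zero_div] at hR
      linarith
    · exact h0
  let v : ℂ → ℂ := fun z => (2 * z * (inner ℝ ξ h : ℝ) + z ^ 2 * (‖h‖ ^ 2 : ℝ)) / (‖ξ‖ ^ 2 : ℝ)
  let G : ℂ → ℂ := fun z => 1 - Complex.exp (-((t * ‖ξ‖ ^ (2 * α) : ℝ) * (1 + v z) ^ (α : ℂ)))
  have hv : ∀ z ∈ Metric.ball (0 : ℂ) ((N + 1) * δ), ‖v z‖ < 3 * ε := by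
    intro z hz
    rw [hR, mem_ball_zero_iff, lt_div_iff₀ hh0] at hz
    simp only [v]
    rw [norm_div, Complex.norm_real, Real.norm_of_nonneg (by positivity), div_lt_iff₀ (by positivity)]
    refine (norm_add_le _ _).trans_lt ?_
    simp only [norm_mul, norm_pow, Complex.norm_real, Complex.norm_ofNat, norm_norm]
    have hin : ‖(inner ℝ ξ h : ℝ)‖ ≤ ‖ξ‖ * ‖h‖ := norm_inner_le_norm ξ h
    have e1 : 2 * ‖z‖ * ‖(inner ℝ ξ h : ℝ)‖ ≤ 2 * (‖z‖ * ‖h‖) * ‖ξ‖ := by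
      have := mul_le_mul_of_nonneg_left hin (norm_nonneg z)
      nlinarith
    have hzh : 0 ≤ ‖z‖ * ‖h‖ := by positivity
    have e2 : ‖z‖ ^ 2 * ‖h‖ ^ 2 ≤ ε * ‖ξ‖ ^ 2 := by
      have : (‖z‖ * ‖h‖) ^ 2 ≤ (ε * ‖ξ‖) ^ 2 := by gcongr
      nlinarith [mul_pos hξ0 hξ0, mul_pos hε0 (mul_pos hξ0 hξ0)]
    have e3 : (‖z‖ * ‖h‖) * ‖ξ‖ < ε * ‖ξ‖ * ‖ξ‖ := by gcongr
    nlinarith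
  have hGd : DifferentiableOn ℂ G (Metric.ball 0 ((N + 1) * δ)) := by
    intro z hz
    apply DifferentiableAt.differentiableWithinAt
    have hs := (hε _ (hv z hz)).1
    have : DifferentiableAt ℂ v z := by simp only [v]; fun_prop
    have h2 : DifferentiableAt ℂ (fun z => (1 + v z) ^ (α : ℂ)) z :=
      (this.const_add 1).cpow_const hs
    simp only [G]
    fun_prop
  have hGb : ∀ z ∈ Metric.ball (0 : ℂ) ((N + 1) * δ), ‖G z‖ ≤ 4 * (t * ‖ξ‖ ^ (2 * α)) := by
    intro z hz
    obtain ⟨-, h1, h2⟩ := hε _ (hv z hz)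
    have hp : 0 < t * ‖ξ‖ ^ (2 * α) := by positivity
    refine (fk_exp _ ?_).trans ?_
    · rw [Complex.re_ofReal_mul]; positivity
    · rw [norm_mul, Complex.norm_real, Real.norm_of_nonneg hp.le]
      nlinarith
  have hfin := fk_diff_bound δ hδ N G _ (by positivity) hGd hGb 0 (by simp; linarith)
  refine le_trans (le_of_eq ?_) hfin
  congr 1
  rw [fwdDiff_iter_eq_sum_shift, fwdDiff_iter_eq_sum_shift]
  refine Finset.sum_congr rfl fun k hk => ?_
  congr 1
  have hk' : k ≤ N := by simpa [Nat.lt_succ_iff] using hk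
  have hkm : (k : ℂ) ∈ Metric.ball (0 : ℂ) ((N + 1) * δ) := by
    have : (k : ℝ) ≤ N := by exact_mod_cast hk'
    rw [mem_ball_zero_iff, Complex.norm_natCast]
    nlinarith [Nat.cast_nonneg (α := ℝ) N]
  obtain ⟨hs, -, -⟩ := hε _ (hv _ hkm)
  have hnorm : ‖ξ + k • h‖ ^ 2 = ‖ξ‖ ^ 2 + 2 * k * inner ℝ ξ h + k ^ 2 * ‖h‖ ^ 2 := by
    rw [← Nat.cast_smul_eq_nsmul ℝ, norm_add_sq_real, real_inner_smul_right, norm_smul]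
    simp
    ring
  have hv1 : 1 + v k = ((‖ξ + k • h‖ ^ 2 / ‖ξ‖ ^ 2 : ℝ) : ℂ) := by
    simp only [v]
    rw [hnorm]
    have : (‖ξ‖ : ℂ) ≠ 0 := by exact_mod_cast hξ0.ne'
    push_cast
    field_simp
    ring
  have : (0 : ℂ) + k • (1 : ℂ) = k := by simp
  simp only [fkOneSub, fkf, G]
  rw [this, hv1, ← Complex.ofReal_cpow (by positivity), Real.div_rpow (by positivity) (by positivity),
    ← Real.rpow_natCast, ← Real.rpow_natCast, ← Real.rpow_mul (by positivity),
    ← Real.rpow_mul (by positivity)]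
  congr 2
  rw [← Complex.ofReal_mul, neg_mul, ← Complex.ofReal_mul]
  congr 2
  push_cast
  have : 0 < ‖ξ‖ ^ (2 * α) := by positivity
  field_simp

lemma fk_pointwise (n : ℕ) (α : ℝ) (hα : 0 < α) (N : ℕ) (hN0 : N ≠ 0) (hN : 2 * α < N) :
    ∃ C : ℝ, 0 < C ∧ ∀ t : ℝ, 0 < t → ∀ h ξ : EuclideanSpace ℝ (Fin n), h ≠ 0 →
      ‖(fwdDiff h)^[N] (fkf α t) ξ‖ ≤
        C * (t * ‖h‖ ^ (2 * α)) * (1 + ‖‖h‖⁻¹ • ξ‖) ^ (-((N : ℝ) - 2 * α)) := by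
  obtain ⟨ε, hε0, hε1, hε⟩ := fk_eps α
  set A : ℝ := (N + 1) / ε with hA
  have hA1 : 1 < A := by
    rw [hA, lt_div_iff₀ hε0]
    have : (0:ℝ) ≤ N := by positivity
    linarith
  set C1 : ℝ := 2 ^ N * (2 * (A + N) ^ (2 * α)) * (1 + A) ^ ((N : ℝ) - 2 * α) with hC1
  set C2 : ℝ := 4 * (2 * A) ^ N * 2 ^ ((N : ℝ) - 2 * α) with hC2
  have hC1p : 0 < C1 := by positivity
  have hC2p : 0 < C2 := by positivity
  refine ⟨C1 + C2, by positivity, ?_⟩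
  intro t ht h ξ hh
  have hh0 : 0 < ‖h‖ := norm_pos_iff.2 hh
  rw [fk_diff_fg α t h N hN0]
  set u : ℝ := ‖‖h‖⁻¹ • ξ‖ with hu
  have hu' : ‖ξ‖ = u * ‖h‖ := by
    rw [hu, norm_smul, norm_inv, norm_norm]; field_simp
  have hu0 : 0 ≤ u := norm_nonneg _
  have hβ : 0 < (N : ℝ) - 2 * α := by linarith
  by_cases hcase : u ≤ A
  · have h1 : ‖(fwdDiff h)^[N] (fkOneSub α t) ξ‖ ≤ 2 ^ N * (2 * (t * ((A + N) * ‖h‖) ^ (2 * α))) := by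
      apply fk_crude
      intro k hk
      refine (fk_g_le α t ht _).trans ?_
      gcongr
      refine (norm_add_le _ _).trans ?_
      rw [← Nat.cast_smul_eq_nsmul ℝ, norm_smul, hu']
      have : (k : ℝ) ≤ N := by exact_mod_cast hk
      simp only [RCLike.norm_natCast]
      rw [add_mul]
      gcongr
    have h2 : 1 ≤ (1 + A) ^ ((N : ℝ) - 2 * α) * (1 + u) ^ (-((N : ℝ) - 2 * α)) := by
      rw [Real.rpow_neg (by positivity), ← div_eq_mul_inv, one_le_div (by positivity)]
      gcongr
    refine h1.trans ?_
    rw [Real.mul_rpow (by positivity) (by positivity)]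
    calc 2 ^ N * (2 * (t * ((A + N) ^ (2 * α) * ‖h‖ ^ (2 * α))))
        ≤ 2 ^ N * (2 * (t * ((A + N) ^ (2 * α) * ‖h‖ ^ (2 * α)))) *
          ((1 + A) ^ ((N : ℝ) - 2 * α) * (1 + u) ^ (-((N : ℝ) - 2 * α))) :=
          le_mul_of_one_le_right (by positivity) h2
      _ = C1 * (t * ‖h‖ ^ (2 * α)) * (1 + u) ^ (-((N : ℝ) - 2 * α)) := by rw [hC1]; ring
      _ ≤ _ := by gcongr; linarith
  · push Not at hcase
    have hup : 0 < u := by linarith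
    have h1 := fk_far α N ε hε0 hε1 hε t ht h ξ hh (u / A) (by rwa [one_lt_div (by linarith)])
      (by rw [hA, hu']; field_simp)
    have h2 : u ^ (-((N : ℝ) - 2 * α)) ≤ 2 ^ ((N : ℝ) - 2 * α) * (1 + u) ^ (-((N : ℝ) - 2 * α)) := by
      rw [Real.rpow_neg (by positivity), Real.rpow_neg (by positivity), ← div_eq_mul_inv,
        ← Real.div_rpow (by positivity) (by positivity), ← Real.inv_rpow (by positivity)]
      gcongr
      rw [inv_le_comm₀ (by positivity) (by positivity), inv_div]
      linarith
    refine h1.trans ?_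
    have h3 : ‖ξ‖ ^ (2 * α) * (2 / (u / A)) ^ N =
        ‖h‖ ^ (2 * α) * (2 * A) ^ N * u ^ (-((N : ℝ) - 2 * α)) := by
      rw [hu', Real.mul_rpow (by positivity) (by positivity), neg_sub, Real.rpow_sub hup,
        Real.rpow_natCast, div_div_eq_mul_div, div_pow]
      ring
    calc 4 * (t * ‖ξ‖ ^ (2 * α)) * (2 / (u / A)) ^ N
        = 4 * t * (‖ξ‖ ^ (2 * α) * (2 / (u / A)) ^ N) := by ring
      _ = 4 * t * (‖h‖ ^ (2 * α) * (2 * A) ^ N) * u ^ (-((N : ℝ) - 2 * α)) := by rw [h3]; ring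
      _ ≤ 4 * t * (‖h‖ ^ (2 * α) * (2 * A) ^ N) *
          (2 ^ ((N : ℝ) - 2 * α) * (1 + u) ^ (-((N : ℝ) - 2 * α))) := by gcongr
      _ = C2 * (t * ‖h‖ ^ (2 * α)) * (1 + u) ^ (-((N : ℝ) - 2 * α)) := by rw [hC2]; ring
      _ ≤ _ := by gcongr; linarith

lemma fk_norm_f {E : Type*} [NormedAddCommGroup E] (α t : ℝ) (ξ : E) :
    ‖fkf α t ξ‖ = Real.exp (-t * ‖ξ‖ ^ (2 * α)) := by
  unfold fkf
  rw [Complex.norm_exp]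
  congr 1
  rw [← Complex.ofReal_neg, ← Complex.ofReal_mul, Complex.ofReal_re]

lemma fk_int_one (n : ℕ) (α : ℝ) (hα : 0 < α) :
    Integrable (fun ξ : EuclideanSpace ℝ (Fin n) => Real.exp (-‖ξ‖ ^ (2 * α))) := by
  obtain ⟨k, hk⟩ := exists_nat_ge (((n : ℝ) + 1) / (2 * α))
  rw [div_le_iff₀ (by positivity)] at hk
  have hI : Integrable (fun ξ : EuclideanSpace ℝ (Fin n) => (1 + ‖ξ‖) ^ (-((n : ℝ) + 1))) :=
    integrable_one_add_norm (by simp)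
  refine (hI.const_mul ((k.factorial : ℝ) * 2 ^ ((n : ℝ) + 1))).mono' ?_ ?_
  · apply Continuous.aestronglyMeasurable
    have : Continuous fun ξ : EuclideanSpace ℝ (Fin n) => ‖ξ‖ ^ (2 * α) :=
      continuous_norm.rpow_const (fun _ => Or.inr (by positivity))
    fun_prop
  · refine Filter.Eventually.of_forall fun ξ => ?_
    rw [Real.norm_of_nonneg (Real.exp_pos _).le]
    set u := ‖ξ‖ with hu
    have hu0 : 0 ≤ u := norm_nonneg _
    have hkf : (1 : ℝ) ≤ k.factorial := by exact_mod_cast Nat.one_le_iff_ne_zero.2 k.factorial_ne_zero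
    rw [Real.rpow_neg (by positivity), mul_assoc, ← div_eq_mul_inv,
      ← Real.div_rpow (by positivity) (by positivity)]
    by_cases h1 : u ≤ 1
    · have : 1 ≤ (2 / (1 + u)) ^ ((n : ℝ) + 1) := by
        apply Real.one_le_rpow _ (by positivity)
        rw [one_le_div (by positivity)]; linarith
      have h2 : Real.exp (-u ^ (2 * α)) ≤ 1 := by
        rw [Real.exp_le_one_iff]
        have : 0 ≤ u ^ (2 * α) := by positivity
        linarith
      nlinarith
    · push Not at h1
      have hup : 0 < u := by linarith
      have h2 := Real.pow_div_factorial_le_exp (u ^ (2 * α)) (by positivity) k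
      have h3 : u ^ ((n : ℝ) + 1) ≤ (u ^ (2 * α)) ^ k := by
        rw [← Real.rpow_natCast, ← Real.rpow_mul hu0]
        apply Real.rpow_le_rpow_of_exponent_le h1.le
        linarith
      have h4 : (u⁻¹) ^ ((n : ℝ) + 1) ≤ (2 / (1 + u)) ^ ((n : ℝ) + 1) := by
        gcongr
        rw [inv_le_comm₀ (by positivity) (by positivity), inv_div]
        linarith
      calc Real.exp (-u ^ (2 * α)) = (Real.exp (u ^ (2 * α)))⁻¹ := Real.exp_neg _
        _ ≤ ((u ^ (2 * α)) ^ k / k.factorial)⁻¹ := by gcongr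
        _ = k.factorial * ((u ^ (2 * α)) ^ k)⁻¹ := by rw [inv_div, div_eq_mul_inv]
        _ ≤ k.factorial * (u ^ ((n : ℝ) + 1))⁻¹ := by gcongr
        _ = k.factorial * (u⁻¹) ^ ((n : ℝ) + 1) := by rw [Real.inv_rpow hu0]
        _ ≤ _ := by gcongr

lemma fk_scale (n : ℕ) (α : ℝ) (hα : 0 < α) (t : ℝ) (ht : 0 < t) (ξ : EuclideanSpace ℝ (Fin n)) :
    ‖fkf α t ξ‖ = Real.exp (-‖(t ^ (1 / (2 * α))) • ξ‖ ^ (2 * α)) := by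
  rw [fk_norm_f, norm_smul, Real.norm_of_nonneg (by positivity),
    Real.mul_rpow (by positivity) (by positivity), ← Real.rpow_mul ht.le,
    one_div_mul_cancel (by positivity), Real.rpow_one, neg_mul]

lemma fk_integrable (n : ℕ) (α : ℝ) (hα : 0 < α) (t : ℝ) (ht : 0 < t) :
    Integrable (fkf (E := EuclideanSpace ℝ (Fin n)) α t) := by
  have h := (fk_int_one n α hα).comp_smul (R := t ^ (1 / (2 * α))) (by positivity)
  refine h.mono' ?_ ?_
  · apply Continuous.aestronglyMeasurable
    have : Continuous fun ξ : EuclideanSpace ℝ (Fin n) => ‖ξ‖ ^ (2 * α) :=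
      continuous_norm.rpow_const (fun _ => Or.inr (by positivity))
    unfold fkf
    fun_prop
  · exact Filter.Eventually.of_forall fun ξ => (fk_scale n α hα t ht ξ).le

lemma fk_integral_norm (n : ℕ) (α : ℝ) (hα : 0 < α) (t : ℝ) (ht : 0 < t) :
    ∫ ξ : EuclideanSpace ℝ (Fin n), ‖fkf α t ξ‖ =
      t ^ (-(n : ℝ) / (2 * α)) * ∫ ξ : EuclideanSpace ℝ (Fin n), Real.exp (-‖ξ‖ ^ (2 * α)) := by
  simp_rw [fk_scale n α hα t ht]
  rw [Measure.integral_comp_smul_of_nonneg volume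
    (fun ξ : EuclideanSpace ℝ (Fin n) => Real.exp (-‖ξ‖ ^ (2 * α))) _ (hR := by positivity)]
  rw [smul_eq_mul]
  congr 1
  rw [finrank_euclideanSpace_fin, ← Real.rpow_natCast, ← Real.rpow_mul ht.le, ← Real.rpow_neg ht.le]
  congr 1
  ring

noncomputable def fke {E : Type*} [NormedAddCommGroup E] [InnerProductSpace ℝ E] (x ξ : E) : ℂ :=
  Complex.exp (Complex.I * ((inner ℝ x ξ : ℝ) : ℂ))

lemma fke_norm {E : Type*} [NormedAddCommGroup E] [InnerProductSpace ℝ E] (x ξ : E) :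
    ‖fke x ξ‖ = 1 := by
  unfold fke
  rw [mul_comm, Complex.norm_exp_ofReal_mul_I]

lemma fke_integrable (n : ℕ) (x : EuclideanSpace ℝ (Fin n)) (g : EuclideanSpace ℝ (Fin n) → ℂ)
    (hg : Integrable g) : Integrable (fun ξ => fke x ξ * g ξ) := by
  apply hg.bdd_mul (c := 1)
  · apply Continuous.aestronglyMeasurable
    unfold fke
    fun_prop
  · exact Filter.Eventually.of_forall fun ξ => (fke_norm x ξ).le

lemma fk_iter (n : ℕ) (x h : EuclideanSpace ℝ (Fin n)) (hx : inner ℝ x h = Real.pi) (N : ℕ) :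
    ∀ g : EuclideanSpace ℝ (Fin n) → ℂ, Integrable g →
    ∫ ξ, fke x ξ * (fwdDiff h)^[N] g ξ = (-2) ^ N * ∫ ξ, fke x ξ * g ξ := by
  induction N with
  | zero => intro g hg; simp
  | succ N ih =>
    intro g hg
    have hs : Integrable (fun ξ => g (ξ + h)) := hg.comp_add_right h
    have hD : Integrable (fwdDiff h g) := hs.sub hg
    rw [Function.iterate_succ_apply, ih _ hD]
    have h1 : ∫ ξ, fke x ξ * g (ξ + h) = - ∫ ξ, fke x ξ * g ξ := by
      rw [← integral_add_right_eq_self (fun ξ => fke x ξ * g ξ) h, ← integral_neg]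
      congr 1
      ext ξ
      have : fke x (ξ + h) = - fke x ξ := by
        unfold fke
        rw [inner_add_right, hx, Complex.ofReal_add, mul_add, Complex.exp_add,
          mul_comm Complex.I (Real.pi : ℂ), Complex.exp_pi_mul_I]
        ring
      rw [this]
      ring
    have h2 : ∫ ξ, fke x ξ * fwdDiff h g ξ = -2 * ∫ ξ, fke x ξ * g ξ := by
      have : (fun ξ => fke x ξ * fwdDiff h g ξ) =
          fun ξ => fke x ξ * g (ξ + h) - fke x ξ * g ξ := by
        ext ξ; simp only [fwdDiff]; ring
      rw [this, integral_sub (fke_integrable n x _ hs) (fke_integrable n x _ hg), h1]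
      ring
    rw [h2, pow_succ]
    ring

lemma fk_decay (n : ℕ) (α : ℝ) (hα : 0 < α) :
    ∃ C : ℝ, 0 < C ∧ ∀ t : ℝ, 0 < t → ∀ x : EuclideanSpace ℝ (Fin n), x ≠ 0 →
      ‖∫ ξ, fke x ξ * fkf α t ξ‖ ≤ C * (t * ‖x‖ ^ (-((n : ℝ) + 2 * α))) := by
  obtain ⟨N, hN⟩ := exists_nat_gt ((n : ℝ) + 2 * α)
  have hn0 : (0 : ℝ) ≤ n := by positivity
  have hN0 : N ≠ 0 := by
    rintro rfl
    simp only [Nat.cast_zero] at hN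
    linarith
  obtain ⟨C, hC, hb⟩ := fk_pointwise n α hα N hN0 (by linarith)
  set φ : EuclideanSpace ℝ (Fin n) → ℝ := fun ξ => (1 + ‖ξ‖) ^ (-((N : ℝ) - 2 * α)) with hφ
  have hI : Integrable φ := integrable_one_add_norm (by
    rw [finrank_euclideanSpace_fin]; linarith)
  have hJ0 : 0 ≤ ∫ ξ, φ ξ := integral_nonneg fun ξ => by simp only [hφ]; positivity
  refine ⟨C * Real.pi ^ ((n : ℝ) + 2 * α) * (∫ ξ, φ ξ) + 1, by positivity, ?_⟩
  intro t ht x hx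
  have hx0 : 0 < ‖x‖ := norm_pos_iff.2 hx
  set h : EuclideanSpace ℝ (Fin n) := (Real.pi / ‖x‖ ^ 2) • x with hh
  have hin : inner ℝ x h = Real.pi := by
    rw [hh, real_inner_smul_right, real_inner_self_eq_norm_sq]; field_simp
  have hhn : ‖h‖ = Real.pi / ‖x‖ := by
    rw [hh, norm_smul, Real.norm_of_nonneg (by positivity)]; field_simp
  have hh0 : 0 < ‖h‖ := by rw [hhn]; positivity
  have hit := fk_iter n x h hin N _ (fk_integrable n α hα t ht)
  have h1 : ‖∫ ξ, fke x ξ * fkf α t ξ‖ ≤ ‖∫ ξ, fke x ξ * (fwdDiff h)^[N] (fkf α t) ξ‖ := by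
    rw [hit, norm_mul, norm_pow, norm_neg, Complex.norm_ofNat]
    exact le_mul_of_one_le_left (norm_nonneg _) (one_le_pow₀ (by norm_num))
  have h2 : ‖∫ ξ, fke x ξ * (fwdDiff h)^[N] (fkf α t) ξ‖ ≤
      ∫ ξ, C * (t * ‖h‖ ^ (2 * α)) * φ (‖h‖⁻¹ • ξ) := by
    apply norm_integral_le_of_norm_le
    · exact (hI.comp_smul (by positivity)).const_mul _
    · refine Filter.Eventually.of_forall fun ξ => ?_
      rw [norm_mul, fke_norm, one_mul]
      exact hb t ht h ξ (norm_pos_iff.1 hh0)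
  have h3 : ∫ ξ, C * (t * ‖h‖ ^ (2 * α)) * φ (‖h‖⁻¹ • ξ) =
      C * Real.pi ^ ((n : ℝ) + 2 * α) * (∫ ξ, φ ξ) * (t * ‖x‖ ^ (-((n : ℝ) + 2 * α))) := by
    rw [integral_const_mul, Measure.integral_comp_inv_smul_of_nonneg volume φ hh0.le,
      finrank_euclideanSpace_fin, smul_eq_mul]
    have : ‖h‖ ^ (2 * α) * ‖h‖ ^ n = Real.pi ^ ((n : ℝ) + 2 * α) * ‖x‖ ^ (-((n : ℝ) + 2 * α)) := by
      rw [← Real.rpow_natCast, ← Real.rpow_add hh0, hhn, Real.div_rpow (by positivity) hx0.le,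
        Real.rpow_neg hx0.le, add_comm (2 * α), div_eq_mul_inv]
    calc _ = C * t * (‖h‖ ^ (2 * α) * ‖h‖ ^ n) * ∫ ξ, φ ξ := by ring
      _ = _ := by rw [this]; ring
  refine h1.trans (h2.trans (h3.le.trans ?_))
  gcongr
  linarith

/-- for non-integer `α > 0` there is `C₁ > 0` such that
`|K₀(t,x)| ≤ C₁ min( t·|x|^{-(n+2α)}, t^{-n/(2α)} )` for all `t > 0`, `x ≠ 0`. -/
theorem free_fractional_kernel_bound (n : ℕ) (hn : 1 ≤ n) (α : ℝ) (hα : 0 < α)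
    (hαnotint : ∀ k : ℕ, α ≠ k) :
    ∃ C₁ > (0 : ℝ), ∀ t : ℝ, 0 < t → ∀ x : EuclideanSpace ℝ (Fin n), x ≠ 0 →
      ‖K0 n α t x‖ ≤ C₁ * Ifun n α t x := by
  obtain ⟨C, hC, hb⟩ := fk_decay n α hα
  set J := ∫ ξ : EuclideanSpace ℝ (Fin n), Real.exp (-‖ξ‖ ^ (2 * α)) with hJ
  have hJ0 : 0 ≤ J := integral_nonneg fun ξ => (Real.exp_pos _).le
  have hp : (0 : ℝ) < (2 * Real.pi) ^ (-(n : ℝ)) := by positivity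
  refine ⟨(2 * Real.pi) ^ (-(n : ℝ)) * (C + J), by positivity, ?_⟩
  intro t ht x hx
  have hK : ‖K0 n α t x‖ = (2 * Real.pi) ^ (-(n : ℝ)) * ‖∫ ξ, fke x ξ * fkf α t ξ‖ := by
    unfold K0
    rw [norm_smul, Real.norm_of_nonneg hp.le]
    rfl
  rw [hK, Ifun, if_neg hx, mul_assoc]
  gcongr
  have h1 := hb t ht x hx
  have h2 : ‖∫ ξ, fke x ξ * fkf α t ξ‖ ≤ J * t ^ (-(n : ℝ) / (2 * α)) := by
    refine (norm_integral_le_integral_norm _).trans ?_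
    simp_rw [norm_mul, fke_norm, one_mul]
    rw [fk_integral_norm n α hα t ht, mul_comm]
  rw [mul_min_of_nonneg _ _ (by positivity), le_min_iff]
  constructor
  · refine h1.trans ?_
    gcongr
    linarith
  · refine h2.trans ?_
    gcongr
    linarith
end
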